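/- arXiv:2010.09972 — 2 statements merged into one kernel-verified Lean document; each statement's English description precedes it below -/
import Mathlib

section
/- Let s > 5/2. There is a constant C = C(s) > 0 such that for all ε ∈ (0,1) and all u ∈ H^s(𝕋): |(T̃_ε(u ∂_x u), T̃_ε u)_{H^s}| ≤ C ‖∂_x u‖_{L^∞} (‖u‖_{H^s} ‖T̃_ε u‖_{H^s} + ‖T̃_ε u‖²_{H^s}). -/
noncomputable section
open scoped BigOperators

/-- A (complex-valued) function on the torus `𝕋 = ℝ/2πℤ`, represented by its sequence of
Fourier coefficients `f̂ : ℤ → ℂ`. -/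
abbrev FC := ℤ → ℂ

namespace FC

/-- The Sobolev weight `(1+k²)^s`. -/
def wt (s : ℝ) (k : ℤ) : ℝ := (1 + (k : ℝ) ^ 2) ^ s

/-- `c` represents a function belonging to the Sobolev space `H^s(𝕋)`. -/
def memHs (s : ℝ) (c : FC) : Prop := Summable fun k : ℤ => wt s k * ‖c k‖ ^ 2

/-- The `H^s(𝕋)` norm: `‖f‖²_{H^s} = Σ_{k∈ℤ} (1+k²)^s |f̂(k)|²`. -/
def hsNorm (s : ℝ) (c : FC) : ℝ := Real.sqrt (∑' k : ℤ, wt s k * ‖c k‖ ^ 2)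

/-- The `H^s(𝕋)` inner product `(f,g)_{H^s} = Σ_{k∈ℤ} (1+k²)^s f̂(k) conj(ĝ(k))`
(its real part; the sum is real for real-valued functions). -/
def hsInner (s : ℝ) (c d : FC) : ℝ :=
  (∑' k : ℤ, ((wt s k : ℂ) * (c k * (starRingEnd ℂ) (d k)))).re

/-- `c` represents a real-valued function (conjugate-symmetric coefficients). -/
def isReal (c : FC) : Prop := ∀ k : ℤ, c (-k) = (starRingEnd ℂ) (c k)

/-- The derivative `∂ₓ`, i.e. the Fourier multiplier `ik`. -/
def D1 (c : FC) : FC := fun k => Complex.I * (k : ℂ) * c k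

/-- The pointwise product of functions, i.e. convolution of Fourier coefficients. -/
def mul (c d : FC) : FC := fun k => ∑' j : ℤ, c j * d (k - j)

/-- The represented function, evaluated at `x ∈ ℝ`. -/
def eval (c : FC) (x : ℝ) : ℂ := ∑' k : ℤ, c k * Complex.exp (Complex.I * (k : ℂ) * (x : ℂ))

/-- The `L^∞` norm (supremum of the represented periodic function over ℝ). -/
def linfty (c : FC) : ℝ := ⨆ x : ℝ, ‖eval c x‖

/-- The `W^{1,∞}` norm. -/
def w1infty (c : FC) : ℝ := linfty c + linfty (D1 c)

/-- A Fourier multiplier operator with real symbol `m`. -/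
def mult (m : ℤ → ℝ) (c : FC) : FC := fun k => (m k : ℂ) * c k

/-- The operator `(1-∂ₓ²)⁻¹`, i.e. the Fourier multiplier `(1+k²)⁻¹`. -/
def helmInv : FC → FC := mult fun k => (1 + (k : ℝ) ^ 2)⁻¹

/-- The operator `1-∂ₓ²`, i.e. the Fourier multiplier `1+k²`. -/
def helm : FC → FC := mult fun k => 1 + (k : ℝ) ^ 2

/-- The operator `T̃_ε = (1-ε²∂ₓ²)⁻¹`, i.e. the Fourier multiplier `(1+ε²k²)⁻¹`. -/
def T (ε : ℝ) : FC → FC := mult fun k => (1 + ε ^ 2 * (k : ℝ) ^ 2)⁻¹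

/-- The periodic Hilbert transform, i.e. the Fourier multiplier `-i·sgn(k)`. -/
def hilbert (c : FC) : FC := fun k => -Complex.I * (Int.sign k : ℂ) * c k

/-- The Friedrichs-type mollifier `J_ε`, the Fourier multiplier `ĵ(εk)`. -/
def Jmol (jhat : ℝ → ℝ) (ε : ℝ) : FC → FC := mult fun k => jhat (ε * (k : ℝ))

/-- The generalized Lie derivative `𝓛_ξ f = ξ ∂ₓ f + (∂ₓ ξ) f`. -/
def lie (ξ c : FC) : FC := mul ξ (D1 c) + mul (D1 ξ) c

/-- `𝓛²_ξ f = 𝓛_ξ (𝓛_ξ f)`. -/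
def lie2 (ξ c : FC) : FC := lie ξ (lie ξ c)

/-- The coefficientwise sum `Σ_{k∈ℕ} F k` of a sequence of functions. -/
def tsumFC (F : ℕ → FC) : FC := fun m => ∑' k : ℕ, F k m

/-- The norm on the product space `H^{s₁}×H^{s₂}`. -/
def pairNorm (s₁ s₂ : ℝ) (c d : FC) : ℝ := Real.sqrt (hsNorm s₁ c ^ 2 + hsNorm s₂ d ^ 2)

/-- The inner product on the product space `H^{s₁}×H^{s₂}`:
`((c₁,d₁),(c₂,d₂)) ↦ (c₁,c₂)_{H^{s₁}} + (d₁,d₂)_{H^{s₂}}`. -/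
def pairInner (s₁ s₂ : ℝ) (c₁ d₁ c₂ d₂ : FC) : ℝ := hsInner s₁ c₁ c₂ + hsInner s₂ d₁ d₂

end FC

namespace S14

def Mf (s ε x : ℝ) : ℝ := (1 + x ^ 2) ^ s * ((1 + ε ^ 2 * x ^ 2) ^ 2)⁻¹

def rf (s ε x : ℝ) : ℝ := 2 * s * (x / (1 + x ^ 2)) - 4 * (ε ^ 2 * x / (1 + ε ^ 2 * x ^ 2))

def hf (s ε x : ℝ) : ℝ := 1 + x * rf s ε x

def hf' (s ε x : ℝ) : ℝ :=
  4 * s * (x / (1 + x ^ 2) ^ 2) - 8 * (ε ^ 2 * x / (1 + ε ^ 2 * x ^ 2) ^ 2)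

def phi (s ε x : ℝ) : ℝ := x * Mf s ε x

def dphi (s ε x : ℝ) : ℝ := Mf s ε x * hf s ε x

lemma Mf_nonneg (s ε x : ℝ) : 0 ≤ Mf s ε x := by
  unfold Mf; positivity

lemma Mf_neg (s ε x : ℝ) : Mf s ε (-x) = Mf s ε x := by
  simp [Mf]

lemma Mf_pos (s ε x : ℝ) : 0 < Mf s ε x := by
  unfold Mf; positivity

lemma phi_neg (s ε x : ℝ) : phi s ε (-x) = - phi s ε x := by
  simp [phi, Mf_neg]

def gf (s ε x : ℝ) : ℝ := (1 + x ^ 2) ^ (s - 5/2) * ((1 + x ^ 2) / (1 + ε ^ 2 * x ^ 2)) ^ 2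

lemma Mf_eq_gf (s ε x : ℝ) : Mf s ε x = gf s ε x * Real.sqrt (1 + x ^ 2) := by
  have h : (0:ℝ) < 1 + x ^ 2 := by positivity
  have h2 : (0:ℝ) < 1 + ε ^ 2 * x ^ 2 := by positivity
  have : (1 + x ^ 2) ^ s = (1 + x ^ 2) ^ (s - 5/2) * (1 + x ^ 2) ^ 2 * Real.sqrt (1 + x ^ 2) := by
    rw [Real.sqrt_eq_rpow, ← Real.rpow_natCast (1 + x ^ 2) 2, ← Real.rpow_add h, ← Real.rpow_add h]
    congr 1; push_cast; ring
  unfold Mf gf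
  rw [this]
  field_simp

lemma gf_nonneg (s ε x : ℝ) : 0 ≤ gf s ε x := by unfold gf; positivity

lemma gf_mono {s ε x R : ℝ} (hs : 5/2 < s) (h0 : 0 < ε) (h1 : ε < 1) (hx : |x| ≤ R) :
    gf s ε x ≤ gf s ε R := by
  have hxR : x ^ 2 ≤ R ^ 2 := by
    rw [← sq_abs x]; gcongr
  have he : ε ^ 2 ≤ 1 := by nlinarith
  unfold gf
  have hq : (1 + x ^ 2) / (1 + ε ^ 2 * x ^ 2) ≤ (1 + R ^ 2) / (1 + ε ^ 2 * R ^ 2) := by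
    rw [div_le_div_iff₀ (by positivity) (by positivity)]
    nlinarith [mul_nonneg (sub_nonneg.2 he) (sub_nonneg.2 hxR)]
  have := sub_pos.2 hs
  gcongr

lemma Mf_mono {s ε x R : ℝ} (hs : 5/2 < s) (h0 : 0 < ε) (h1 : ε < 1) (hx : |x| ≤ R) :
    Mf s ε x ≤ Mf s ε R := by
  have hxR : x ^ 2 ≤ R ^ 2 := by
    rw [← sq_abs x]; gcongr
  rw [Mf_eq_gf, Mf_eq_gf]
  have := gf_mono hs h0 h1 hx
  have := gf_nonneg s ε R
  gcongr

lemma Mf_frac {s ε x R : ℝ} (hs : 5/2 < s) (h0 : 0 < ε) (h1 : ε < 1) (hR : 0 < R)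
    (hx : |x| ≤ R) : Mf s ε x * (|x| / (1 + x ^ 2)) ≤ Mf s ε R / R := by
  have h : (0:ℝ) < 1 + x ^ 2 := by positivity
  have e1 : |x| ≤ Real.sqrt (1 + x ^ 2) := Real.abs_le_sqrt (by linarith)
  have e2 : Real.sqrt (1 + x ^ 2) ^ 2 = 1 + x ^ 2 := Real.sq_sqrt h.le
  have e3 : R ≤ Real.sqrt (1 + R ^ 2) := Real.le_sqrt_of_sq_le (by linarith)
  have hg := gf_mono hs h0 h1 hx
  have hg0 := gf_nonneg s ε x
  calc Mf s ε x * (|x| / (1 + x ^ 2)) = gf s ε x * ((Real.sqrt (1 + x ^ 2) * |x|) / (1 + x^2)) := by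
        rw [Mf_eq_gf]; ring
    _ ≤ gf s ε x * 1 := by
        gcongr
        rw [div_le_one h]
        nlinarith [Real.sqrt_nonneg (1 + x ^ 2)]
    _ ≤ gf s ε R := by linarith
    _ ≤ Mf s ε R / R := by
        rw [le_div_iff₀ hR, Mf_eq_gf]
        have := gf_nonneg s ε R
        gcongr

lemma Mf_doubling {s ε y R : ℝ} (hs : 5/2 < s) (h0 : 0 < ε) (h1 : ε < 1) (hR : 0 ≤ R)
    (hy : R ≤ 32 * |y|) : Mf s ε R ≤ (1024:ℝ) ^ s * Mf s ε y := by
  have h32 : Mf s ε R ≤ Mf s ε (32 * |y|) := Mf_mono hs h0 h1 (by rwa [abs_of_nonneg hR])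
  refine h32.trans ?_
  unfold Mf
  rw [mul_pow, sq_abs, ← mul_assoc (1024 ^ s), ← Real.mul_rpow (by positivity) (by positivity)]
  have := sq_nonneg y
  have h3 : (1 + ε ^ 2 * y ^ 2) ≤ (1 + ε ^ 2 * (32 ^ 2 * y ^ 2)) := by nlinarith [mul_nonneg (sq_nonneg ε) this]
  gcongr
  linarith

lemma Mf_hasDeriv (s ε x : ℝ) : HasDerivAt (Mf s ε) (Mf s ε x * rf s ε x) x := by
  have h : (0:ℝ) < 1 + x ^ 2 := by positivity
  have h2 : (0:ℝ) < 1 + ε ^ 2 * x ^ 2 := by positivity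
  have a1 : HasDerivAt (fun x : ℝ => 1 + x ^ 2) (2 * x) x := by
    simpa using (hasDerivAt_pow 2 x).const_add 1
  have a2 := a1.rpow_const (p := s) (Or.inl h.ne')
  have b1 : HasDerivAt (fun x : ℝ => (1 + ε ^ 2 * x ^ 2)) (ε ^ 2 * (2 * x)) x := by
    simpa using ((hasDerivAt_pow 2 x).const_mul (ε^2)).const_add 1
  have b2 := (b1.fun_pow 2).fun_inv (by positivity)
  have := a2.fun_mul b2
  refine this.congr_deriv ?_
  unfold Mf rf
  rw [Real.rpow_sub_one h.ne']
  field_simp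
  ring

lemma rf_hasDeriv_aux (s ε x : ℝ) : HasDerivAt (hf s ε) (hf' s ε x) x := by
  have h : (0:ℝ) < 1 + x ^ 2 := by positivity
  have h2 : (0:ℝ) < 1 + ε ^ 2 * x ^ 2 := by positivity
  have e : hf s ε = fun x => (1 + 2 * s - 4) - 2 * s * (1 + x ^ 2)⁻¹ + 4 * (1 + ε ^ 2 * x ^ 2)⁻¹ := by
    funext x
    have h : (0:ℝ) < 1 + x ^ 2 := by positivity
    have h2 : (0:ℝ) < 1 + ε ^ 2 * x ^ 2 := by positivity
    unfold hf rf
    field_simp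
    ring
  rw [e]
  have a1 : HasDerivAt (fun x : ℝ => 1 + x ^ 2) (2 * x) x := by
    simpa using (hasDerivAt_pow 2 x).const_add 1
  have b1 : HasDerivAt (fun x : ℝ => (1 + ε ^ 2 * x ^ 2)) (ε ^ 2 * (2 * x)) x := by
    simpa using ((hasDerivAt_pow 2 x).const_mul (ε^2)).const_add 1
  have := (((a1.fun_inv h.ne').const_mul (2*s)).const_sub (1 + 2 * s - 4)).fun_add ((b1.fun_inv h2.ne').const_mul 4)
  refine this.congr_deriv ?_
  unfold hf'
  field_simp
  ring

lemma phi_hasDeriv (s ε x : ℝ) : HasDerivAt (phi s ε) (dphi s ε x) x := by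
  have := (hasDerivAt_id x).fun_mul (Mf_hasDeriv s ε x)
  refine this.congr_deriv ?_
  unfold dphi hf
  simp
  ring

lemma dphi_hasDeriv (s ε x : ℝ) :
    HasDerivAt (dphi s ε) (Mf s ε x * rf s ε x * hf s ε x + Mf s ε x * hf' s ε x) x :=
  (Mf_hasDeriv s ε x).fun_mul (rf_hasDeriv_aux s ε x)

lemma eps_frac {ε x : ℝ} (h0 : 0 < ε) (h1 : ε < 1) :
    |ε ^ 2 * x / (1 + ε ^ 2 * x ^ 2)| ≤ |x| / (1 + x ^ 2) := by
  have he : ε ^ 2 ≤ 1 := by nlinarith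
  rw [abs_div, abs_mul, abs_of_pos (show (0:ℝ) < 1 + ε ^ 2 * x ^ 2 by positivity),
    abs_of_pos (show (0:ℝ) < ε ^ 2 by positivity), div_le_div_iff₀ (by positivity) (by positivity)]
  nlinarith [mul_nonneg (sub_nonneg.2 he) (abs_nonneg x)]

lemma rf_bound {s ε x : ℝ} (hs : 5/2 < s) (h0 : 0 < ε) (h1 : ε < 1) :
    |rf s ε x| ≤ (2 * s + 4) * (|x| / (1 + x ^ 2)) := by
  have e := eps_frac (x := x) h0 h1
  unfold rf
  refine (abs_sub _ _).trans ?_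
  rw [abs_mul, abs_mul 4, abs_div x, abs_of_pos (show (0:ℝ) < 1 + x ^ 2 by positivity),
    abs_of_pos (show (0:ℝ) < 2 * s by linarith), abs_of_pos (show (0:ℝ) < 4 by norm_num)]
  linarith

lemma hf_bound {s ε x : ℝ} (hs : 5/2 < s) (h0 : 0 < ε) (h1 : ε < 1) :
    |hf s ε x| ≤ 2 * s + 5 := by
  have e := rf_bound (x := x) hs h0 h1
  unfold hf
  refine (abs_add_le _ _).trans ?_
  rw [abs_mul, abs_one]
  have : |x| * (|x| / (1 + x ^ 2)) ≤ 1 := by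
    rw [← mul_div_assoc, div_le_one (by positivity), abs_mul_abs_self]; nlinarith
  have := mul_le_mul_of_nonneg_left e (abs_nonneg x)
  nlinarith

lemma hf'_bound {s ε x : ℝ} (hs : 5/2 < s) (h0 : 0 < ε) (h1 : ε < 1) :
    |hf' s ε x| ≤ (4 * s + 8) * (|x| / (1 + x ^ 2)) := by
  have e := eps_frac (x := x) h0 h1
  have e2 : |ε ^ 2 * x / (1 + ε ^ 2 * x ^ 2) ^ 2| ≤ |ε ^ 2 * x / (1 + ε ^ 2 * x ^ 2)| := by
    rw [abs_div, abs_div]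
    have h : (1:ℝ) ≤ 1 + ε ^ 2 * x ^ 2 := by nlinarith [mul_nonneg (sq_nonneg ε) (sq_nonneg x)]
    rw [abs_of_pos (show (0:ℝ) < 1 + ε ^ 2 * x ^ 2 by positivity), abs_of_pos (show (0:ℝ) < (1 + ε ^ 2 * x ^ 2)^2 by positivity)]
    gcongr
    nlinarith
  have e3 : |x| / (1 + x ^ 2) ^ 2 ≤ |x| / (1 + x ^ 2) := by
    have h : (1:ℝ) ≤ 1 + x ^ 2 := by nlinarith [sq_nonneg x]
    gcongr
    nlinarith
  unfold hf'
  refine (abs_sub _ _).trans ?_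
  rw [abs_mul, abs_mul 8, abs_div x, abs_of_pos (show (0:ℝ) < (1 + x ^ 2)^2 by positivity),
    abs_of_pos (show (0:ℝ) < 4 * s by linarith), abs_of_pos (show (0:ℝ) < 8 by norm_num)]
  have := mul_le_mul_of_nonneg_left e3 (show (0:ℝ) ≤ 4 * s by linarith)
  linarith

def K1 (s : ℝ) : ℝ := (2 * s + 4) * (2 * s + 5) + (4 * s + 8)

lemma K1_ge {s : ℝ} (hs : 5/2 < s) : 2 * s + 4 ≤ K1 s ∧ 2 * s + 5 ≤ K1 s := by
  unfold K1; constructor <;> nlinarith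

lemma dM_bound {s ε x R : ℝ} (hs : 5/2 < s) (h0 : 0 < ε) (h1 : ε < 1) (hR : 0 < R)
    (hx : |x| ≤ R) : |Mf s ε x * rf s ε x| ≤ K1 s * (Mf s ε R / R) := by
  have a := Mf_frac hs h0 h1 hR hx
  have b := rf_bound (x := x) hs h0 h1
  have c := K1_ge hs
  rw [abs_mul, abs_of_nonneg (Mf_nonneg _ _ _)]
  calc Mf s ε x * |rf s ε x| ≤ Mf s ε x * ((2 * s + 4) * (|x| / (1 + x ^ 2))) := by
        have := Mf_nonneg s ε x
        gcongr
    _ = (2 * s + 4) * (Mf s ε x * (|x| / (1 + x ^ 2))) := by ring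
    _ ≤ K1 s * (Mf s ε R / R) := by
        have := Mf_nonneg s ε x
        exact mul_le_mul c.1 a (by positivity) (by linarith)

lemma ddphi_bound {s ε x R : ℝ} (hs : 5/2 < s) (h0 : 0 < ε) (h1 : ε < 1) (hR : 0 < R)
    (hx : |x| ≤ R) : |Mf s ε x * rf s ε x * hf s ε x + Mf s ε x * hf' s ε x|
      ≤ K1 s * (Mf s ε R / R) := by
  have a := Mf_frac hs h0 h1 hR hx
  have b := rf_bound (x := x) hs h0 h1
  have d := hf_bound (x := x) hs h0 h1
  have e := hf'_bound (x := x) hs h0 h1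
  have hM := Mf_nonneg s ε x
  have : |rf s ε x * hf s ε x + hf' s ε x| ≤ K1 s * (|x| / (1 + x ^ 2)) := by
    refine (abs_add_le _ _).trans ?_
    rw [abs_mul]
    have := mul_le_mul b d (abs_nonneg _) (by positivity)
    unfold K1
    linarith
  rw [show Mf s ε x * rf s ε x * hf s ε x + Mf s ε x * hf' s ε x
    = Mf s ε x * (rf s ε x * hf s ε x + hf' s ε x) by ring, abs_mul, abs_of_nonneg hM]
  have hK : 0 ≤ K1 s := by have := K1_ge hs; linarith
  calc _ ≤ Mf s ε x * (K1 s * (|x| / (1 + x ^ 2))) := by gcongr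
    _ = K1 s * (Mf s ε x * (|x| / (1 + x ^ 2))) := by ring
    _ ≤ _ := by gcongr

lemma lip_aux {f f' : ℝ → ℝ} {R K : ℝ} (hf : ∀ x, HasDerivAt f (f' x) x)
    (hb : ∀ x, |x| ≤ R → |f' x| ≤ K) {x y : ℝ} (hx : |x| ≤ R) (hy : |y| ≤ R) :
    |f y - f x| ≤ K * |y - x| := by
  have := (convex_Icc (-R) R).norm_image_sub_le_of_norm_hasDerivWithin_le (f := f) (f' := f')
    (C := K) (x := x) (y := y) (fun z _ => (hf z).hasDerivWithinAt)
    (fun z hz => by rw [Real.norm_eq_abs]; exact hb z (abs_le.2 hz)) (abs_le.1 hx) (abs_le.1 hy)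
  simpa using this

def X (s ε b c : ℝ) : ℝ := Mf s ε (c - b) - ∫ t in (0:ℝ)..1, dphi s ε (b + t * (c - b))

lemma dphi_cont (s ε : ℝ) : Continuous (dphi s ε) :=
  continuous_iff_continuousAt.2 fun x => (dphi_hasDeriv s ε x).continuousAt

lemma X_mul (s ε b c : ℝ) : (c - b) * X s ε b c = phi s ε (c - b) + phi s ε b - phi s ε c := by
  have : (c - b) * ∫ t in (0:ℝ)..1, dphi s ε (b + t * (c - b)) = phi s ε c - phi s ε b := by
    rw [← intervalIntegral.integral_const_mul]
    have hd : ∀ t ∈ Set.uIcc (0:ℝ) 1, HasDerivAt (fun t => phi s ε (b + t * (c - b)))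
        ((c - b) * dphi s ε (b + t * (c - b))) t := by
      intro t _
      have h1 : HasDerivAt (fun t : ℝ => b + t * (c - b)) (c - b) t := by
        simpa using ((hasDerivAt_id t).mul_const (c - b)).const_add b
      have := (phi_hasDeriv s ε (b + t * (c - b))).comp t h1
      rw [mul_comm] at this
      exact this
    rw [intervalIntegral.integral_eq_sub_of_hasDerivAt hd]
    · simp
    · apply Continuous.intervalIntegrable
      have := dphi_cont s ε
      fun_prop
  unfold X
  rw [mul_sub, this]
  unfold phi
  ring

lemma seg_abs {b c t R : ℝ} (hb : 0 ≤ b) (hbR : b ≤ R) (hc : 0 ≤ c) (hcR : c ≤ R)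
    (ht : t ∈ Set.uIoc (0:ℝ) 1) : |b + t * (c - b)| ≤ R := by
  rw [Set.uIoc_of_le zero_le_one] at ht
  obtain ⟨t0, t1⟩ := ht
  rw [abs_le]; constructor <;> nlinarith

lemma X_bound {s ε b c R : ℝ} (hs : 5/2 < s) (h0 : 0 < ε) (h1 : ε < 1)
    (hb : 0 ≤ b) (hbR : b ≤ R) (hc : 0 ≤ c) (hcR : c ≤ R) :
    |X s ε b c| ≤ 2 * K1 s * Mf s ε R := by
  have hK := K1_ge hs
  have hM := Mf_nonneg s ε R
  have i : |∫ t in (0:ℝ)..1, dphi s ε (b + t * (c - b))| ≤ K1 s * Mf s ε R := by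
    have := intervalIntegral.norm_integral_le_of_norm_le_const (a := (0:ℝ)) (b := 1)
      (f := fun t => dphi s ε (b + t * (c - b))) (C := K1 s * Mf s ε R) (by
        intro t ht
        have := seg_abs hb hbR hc hcR ht
        rw [Real.norm_eq_abs, dphi, abs_mul, mul_comm, abs_of_nonneg (Mf_nonneg _ _ _)]
        have a := hf_bound (x := b + t * (c - b)) hs h0 h1
        exact mul_le_mul (a.trans hK.2) (Mf_mono hs h0 h1 this) (Mf_nonneg _ _ _) (by linarith))
    simpa using this
  have j : |Mf s ε (c - b)| ≤ Mf s ε R := by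
    rw [abs_of_nonneg (Mf_nonneg _ _ _)]
    exact Mf_mono hs h0 h1 (by rw [abs_le]; constructor <;> linarith)
  unfold X
  refine (abs_sub _ _).trans ?_
  nlinarith

lemma X_lip {s ε b b' c R : ℝ} (hs : 5/2 < s) (h0 : 0 < ε) (h1 : ε < 1) (hR : 0 < R)
    (hb : 0 ≤ b) (hbR : b ≤ R) (hb' : 0 ≤ b') (hbR' : b' ≤ R) (hc : 0 ≤ c) (hcR : c ≤ R) :
    |X s ε b' c - X s ε b c| ≤ 2 * K1 s * (Mf s ε R / R) * |b' - b| := by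
  have hK := K1_ge hs
  have hM := Mf_nonneg s ε R
  have hKM : 0 ≤ K1 s * (Mf s ε R / R) := mul_nonneg (by linarith) (by positivity)
  have hcont := dphi_cont s ε
  have i : |(∫ t in (0:ℝ)..1, dphi s ε (b' + t * (c - b'))) -
      (∫ t in (0:ℝ)..1, dphi s ε (b + t * (c - b)))| ≤ K1 s * (Mf s ε R / R) * |b' - b| := by
    rw [← intervalIntegral.integral_sub (Continuous.intervalIntegrable (by fun_prop) _ _)
      (Continuous.intervalIntegrable (by fun_prop) _ _)]
    have := intervalIntegral.norm_integral_le_of_norm_le_const (a := (0:ℝ)) (b := 1)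
      (f := fun t => dphi s ε (b' + t * (c - b')) - dphi s ε (b + t * (c - b)))
      (C := K1 s * (Mf s ε R / R) * |b' - b|) (by
        intro t ht
        have a1 := seg_abs hb hbR hc hcR ht
        have a2 := seg_abs hb' hbR' hc hcR ht
        rw [Real.norm_eq_abs]
        refine (lip_aux (dphi_hasDeriv s ε) (fun x hx => ddphi_bound hs h0 h1 hR hx) a1 a2).trans ?_
        apply mul_le_mul_of_nonneg_left _ hKM
        rw [show b' + t * (c - b') - (b + t * (c - b)) = (1 - t) * (b' - b) by ring, abs_mul]
        rw [Set.uIoc_of_le zero_le_one] at ht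
        rw [abs_of_nonneg (by linarith [ht.2])]
        nlinarith [abs_nonneg (b' - b), ht.1])
    simpa using this
  have j : |Mf s ε (c - b') - Mf s ε (c - b)| ≤ K1 s * (Mf s ε R / R) * |b' - b| := by
    have := lip_aux (Mf_hasDeriv s ε) (fun x hx => dM_bound hs h0 h1 hR hx)
      (x := c - b) (y := c - b') (by rw [abs_le]; constructor <;> linarith)
      (by rw [abs_le]; constructor <;> linarith)
    rwa [show c - b' - (c - b) = -(b' - b) by ring, abs_neg] at this
  unfold X
  rw [show ∀ p q r t : ℝ, (p - q) - (r - t) = (p - r) - (q - t) by intros; ring]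
  refine (abs_sub _ _).trans ?_
  linarith

def clip (x : ℝ) : ℝ := max 0 (min 1 x)

lemma clip_nonneg (x : ℝ) : 0 ≤ clip x := le_max_left _ _
lemma clip_le (x : ℝ) : clip x ≤ 1 := max_le zero_le_one (min_le_left _ _)
lemma clip_lip (x y : ℝ) : |clip x - clip y| ≤ |x - y| := by
  unfold clip
  calc _ ≤ |min 1 x - min 1 y| := by
        simpa using abs_max_sub_max_le_max (0:ℝ) (min 1 x) 0 (min 1 y)
    _ ≤ _ := by simpa using abs_min_sub_min_le_max (1:ℝ) x 1 y
lemma clip_zero {x : ℝ} (h : x ≤ 0) : clip x = 0 := max_eq_left ((min_le_right _ _).trans h)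

def Tht (b c : ℝ) : ℝ := clip (2 * (min b c / max b c) - 1 / 2)

lemma ratio_lip {b b' c n : ℝ} (hn : 0 < n) (hb : n ≤ b) (hbb : b ≤ b') (hc : 0 < c) :
    |min b' c / max b' c - min b c / max b c| ≤ (b' - b) / n := by
  have hb0 : 0 < b := by linarith
  have hb0' : 0 < b' := by linarith
  have key : ∀ x y : ℝ, n ≤ x → x ≤ y → y ≤ c → |y / c - x / c| ≤ (y - x) / n := by
    intro x y h1 h2 h3
    rw [← sub_div, abs_of_nonneg (div_nonneg (by linarith) hc.le)]
    have : 0 ≤ y - x := by linarith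
    gcongr; linarith
  have key2 : ∀ x y : ℝ, n ≤ x → x ≤ y → c ≤ x → |c / y - c / x| ≤ (y - x) / n := by
    intro x y h1 h2 h3
    have hx : 0 < x := by linarith
    have hy : 0 < y := by linarith
    rw [abs_sub_comm, abs_of_nonneg (sub_nonneg.2 (by gcongr))]
    rw [div_sub_div _ _ hx.ne' hy.ne', div_le_div_iff₀ (by positivity) hn]
    have h3 : c * n ≤ x * y := by
      exact mul_le_mul h3 (by linarith) hn.le hx.le
    have : 0 ≤ y - x := by linarith
    nlinarith
  rcases le_total b' c with h | h
  · rw [min_eq_left h, max_eq_right h, min_eq_left (hbb.trans h), max_eq_right (hbb.trans h)]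
    exact key b b' hb hbb h
  rcases le_total b c with h2 | h2
  · rw [min_eq_right h, max_eq_left h, min_eq_left h2, max_eq_right h2]
    have k1 := key b c hb h2 le_rfl
    have k2 := key2 c b' (hb.trans h2) h le_rfl
    rw [div_self hc.ne'] at k1 k2
    rw [abs_le] at *
    have : (b' - b)/n = (b' - c)/n + (c - b)/n := by ring
    constructor <;> linarith [k1.1, k1.2, k2.1, k2.2]
  · rw [min_eq_right h, max_eq_left h, min_eq_right h2, max_eq_left h2]
    exact key2 b b' hb hbb h2

lemma Tht_ne {b c : ℝ} (hb : 0 < b) (hc : 0 < c) (h : Tht b c ≠ 0) : b < 4 * c ∧ c < 4 * b := by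
  have : ¬ (2 * (min b c / max b c) - 1 / 2 ≤ 0) := fun h' => h (clip_zero h')
  have h3 : 1 / 4 < min b c / max b c := by linarith
  rw [lt_div_iff₀ (by positivity)] at h3
  constructor
  · have := le_max_left b c; have := min_le_right b c; linarith
  · have := le_max_right b c; have := min_le_left b c; linarith

/-- the kernel -/
def Y (s ε b c : ℝ) : ℝ := if 0 < c then Tht b c * X s ε b c else 0

def K2 (s : ℝ) : ℝ := 8 * K1 s

lemma Y_bound {s ε b c n : ℝ} (hs : 5/2 < s) (h0 : 0 < ε) (h1 : ε < 1) (hn : 0 < n)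
    (hb : n ≤ b) (hb2 : b ≤ 2 * n) :
    |Y s ε b c| ≤ if n / 4 ≤ c ∧ c ≤ 8 * n then K2 s * Mf s ε (8 * n) else 0 := by
  have hK := K1_ge hs
  have hM := Mf_nonneg s ε (8 * n)
  have hKM : 0 ≤ K1 s * Mf s ε (8 * n) := mul_nonneg (by linarith) hM
  unfold Y
  by_cases hc : 0 < c
  swap
  · rw [if_neg hc, abs_zero]; split_ifs
    · unfold K2; linarith
    · rfl
  rw [if_pos hc]
  by_cases hT : Tht b c = 0
  · rw [hT, zero_mul, abs_zero]; split_ifs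
    · unfold K2; linarith
    · rfl
  obtain ⟨q1, q2⟩ := Tht_ne (by linarith) hc hT
  rw [if_pos ⟨by linarith, by linarith⟩, abs_mul]
  have a := X_bound (R := 8 * n) hs h0 h1 (b := b) (c := c) (by linarith) (by linarith) hc.le (by linarith)
  have b1 : |Tht b c| ≤ 1 := by unfold Tht; rw [abs_of_nonneg (clip_nonneg _)]; exact clip_le _
  calc _ ≤ 1 * |X s ε b c| := by gcongr
    _ ≤ _ := by unfold K2; linarith

lemma Y_lip {s ε b b' c n : ℝ} (hs : 5/2 < s) (h0 : 0 < ε) (h1 : ε < 1) (hn : 0 < n)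
    (hb : n ≤ b) (hbb : b' = b + 1) (hb2 : b' ≤ 2 * n) :
    |Y s ε b' c - Y s ε b c| ≤
      if n / 4 ≤ c ∧ c ≤ 8 * n then K2 s * Mf s ε (8 * n) / n else 0 := by
  have hK := K1_ge hs
  have hM := Mf_nonneg s ε (8 * n)
  have hKM : 0 ≤ K1 s * Mf s ε (8 * n) / n := div_nonneg (mul_nonneg (by linarith) hM) hn.le
  have hnn : 0 ≤ if n / 4 ≤ c ∧ c ≤ 8 * n then K2 s * Mf s ε (8 * n) / n else 0 := by
    split_ifs
    · unfold K2; calc (0:ℝ) ≤ 8 * (K1 s * Mf s ε (8 * n) / n) := by linarith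
        _ = _ := by ring
    · rfl
  unfold Y
  by_cases hc : 0 < c
  swap
  · rw [if_neg hc, if_neg hc, sub_zero, abs_zero]; exact hnn
  rw [if_pos hc, if_pos hc]
  by_cases hT : Tht b c = 0 ∧ Tht b' c = 0
  · rw [hT.1, hT.2, zero_mul, zero_mul, sub_zero, abs_zero]; exact hnn
  have hcc : n / 4 ≤ c ∧ c ≤ 8 * n := by
    rw [not_and_or] at hT
    rcases hT with hT | hT
    · obtain ⟨q1, q2⟩ := Tht_ne (by linarith) hc hT
      exact ⟨by linarith, by linarith⟩
    · obtain ⟨q1, q2⟩ := Tht_ne (by linarith) hc hT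
      exact ⟨by linarith, by linarith⟩
  rw [if_pos hcc]
  have a := X_bound (R := 8 * n) hs h0 h1 (b := b') (c := c) (by linarith) (by linarith) hc.le (by linarith)
  have a2 := X_lip (R := 8 * n) hs h0 h1 (by linarith) (b := b) (b' := b') (c := c) (by linarith)
    (by linarith) (by linarith) (by linarith) hc.le (by linarith)
  have b1 : |Tht b c| ≤ 1 := by unfold Tht; rw [abs_of_nonneg (clip_nonneg _)]; exact clip_le _
  have b2 : |Tht b' c - Tht b c| ≤ 2 * (1 / n) := by
    refine (clip_lip _ _).trans ?_
    have := ratio_lip hn hb (show b ≤ b' by linarith) hc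
    rw [show b' - b = 1 by linarith] at this
    rw [show 2 * (min b' c / max b' c) - 1 / 2 - (2 * (min b c / max b c) - 1 / 2) =
      2 * (min b' c / max b' c - min b c / max b c) by ring, abs_mul, abs_two]
    linarith
  rw [show b' - b = 1 by linarith, abs_one, mul_one] at a2
  rw [show Tht b' c * X s ε b' c - Tht b c * X s ε b c =
    (Tht b' c - Tht b c) * X s ε b' c + Tht b c * (X s ε b' c - X s ε b c) by ring]
  refine (abs_add_le _ _).trans ?_
  rw [abs_mul, abs_mul]
  have e1 := mul_le_mul b2 a (abs_nonneg _) (by positivity)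
  have e2 := mul_le_mul b1 a2 (abs_nonneg _) zero_le_one
  refine (add_le_add e1 e2).trans ?_
  unfold K2
  have : 2 * K1 s * (Mf s ε (8 * n) / (8 * n)) = (1/4) * (K1 s * Mf s ε (8 * n) / n) := by
    field_simp; ring
  rw [this]
  have : 2 * (1 / n) * (2 * K1 s * Mf s ε (8 * n)) = 4 * (K1 s * Mf s ε (8 * n) / n) := by
    field_simp; ring
  rw [this]
  have : 8 * K1 s * Mf s ε (8 * n) / n = 8 * (K1 s * Mf s ε (8 * n) / n) := by ring
  rw [this]
  linarith

end S14
namespace S14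

def Trip (I : Finset ℤ) (F : ℤ → ℤ → ℤ → ℂ) : ℂ :=
  ∑ x ∈ I, ∑ y ∈ I, ∑ z ∈ I, if x + y + z = 0 then F x y z else 0

lemma Trip_congr {I : Finset ℤ} {F G : ℤ → ℤ → ℤ → ℂ}
    (h : ∀ x ∈ I, ∀ y ∈ I, ∀ z ∈ I, x + y + z = 0 → F x y z = G x y z) : Trip I F = Trip I G := by
  unfold Trip
  refine Finset.sum_congr rfl fun x hx => Finset.sum_congr rfl fun y hy =>
    Finset.sum_congr rfl fun z hz => ?_
  split_ifs with h0
  · exact h x hx y hy z hz h0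
  · rfl

lemma Trip_add (I : Finset ℤ) (F G : ℤ → ℤ → ℤ → ℂ) :
    Trip I (fun x y z => F x y z + G x y z) = Trip I F + Trip I G := by
  unfold Trip
  simp only [← Finset.sum_add_distrib]
  refine Finset.sum_congr rfl fun x hx => Finset.sum_congr rfl fun y hy =>
    Finset.sum_congr rfl fun z hz => ?_
  split_ifs <;> simp

lemma Trip_mul (I : Finset ℤ) (a : ℂ) (F : ℤ → ℤ → ℤ → ℂ) :
    Trip I (fun x y z => a * F x y z) = a * Trip I F := by
  unfold Trip
  simp only [Finset.mul_sum]
  refine Finset.sum_congr rfl fun x hx => Finset.sum_congr rfl fun y hy =>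
    Finset.sum_congr rfl fun z hz => ?_
  split_ifs <;> simp

lemma Trip_sum {ι : Type} (I : Finset ℤ) (S : Finset ι) (F : ι → ℤ → ℤ → ℤ → ℂ) :
    Trip I (fun x y z => ∑ i ∈ S, F i x y z) = ∑ i ∈ S, Trip I (F i) := by
  classical
  induction S using Finset.induction_on with
  | empty => simp [Trip]
  | insert a S ha ih =>
    simp only [Finset.sum_insert ha]
    rw [Trip_add, ih]

lemma Trip_swap12 (I : Finset ℤ) (F : ℤ → ℤ → ℤ → ℂ) :
    Trip I F = Trip I (fun x y z => F y x z) := by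
  unfold Trip
  rw [Finset.sum_comm]
  refine Finset.sum_congr rfl fun x hx => Finset.sum_congr rfl fun y hy =>
    Finset.sum_congr rfl fun z hz => ?_
  rw [add_comm y x]

lemma Trip_swap23 (I : Finset ℤ) (F : ℤ → ℤ → ℤ → ℂ) :
    Trip I F = Trip I (fun x y z => F x z y) := by
  unfold Trip
  refine Finset.sum_congr rfl fun x hx => ?_
  rw [Finset.sum_comm]
  refine Finset.sum_congr rfl fun y hy =>
    Finset.sum_congr rfl fun z hz => ?_
  rw [add_right_comm]

lemma Trip_rot (I : Finset ℤ) (F : ℤ → ℤ → ℤ → ℂ) :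
    Trip I F = Trip I (fun x y z => F y z x) := by
  rw [Trip_swap23, Trip_swap12]

def ee (k : ℤ) (t : ℝ) : ℂ := Complex.exp (Complex.I * (k : ℂ) * (t : ℂ))

lemma ee_add (k l : ℤ) (t : ℝ) : ee (k + l) t = ee k t * ee l t := by
  unfold ee; rw [← Complex.exp_add]; congr 1; push_cast; ring

lemma ee_conj (k : ℤ) (t : ℝ) : (starRingEnd ℂ) (ee k t) = ee (-k) t := by
  unfold ee; rw [← Complex.exp_conj]; congr 1; simp

lemma ee_cont (k : ℤ) : Continuous (ee k) := by unfold ee; fun_prop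

lemma ee_int (k : ℤ) : ∫ t in (0:ℝ)..(2 * Real.pi), ee k t = if k = 0 then (2 * Real.pi : ℂ) else 0 := by
  split_ifs with h
  · subst h; simp [ee]
  · unfold ee
    have hk : Complex.I * (k : ℂ) ≠ 0 := mul_ne_zero Complex.I_ne_zero (by exact_mod_cast h)
    rw [integral_exp_mul_complex hk]
    have : Complex.exp (Complex.I * (k:ℂ) * ((2 * Real.pi : ℝ) : ℂ)) = 1 := by
      rw [Complex.exp_eq_one_iff]
      exact ⟨k, by push_cast; ring⟩
    rw [this]; simp

def poly (I : Finset ℤ) (f : ℤ → ℂ) (t : ℝ) : ℂ := ∑ k ∈ I, f k * ee k t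

lemma poly_cont (I : Finset ℤ) (f : ℤ → ℂ) : Continuous (poly I f) := by
  unfold poly
  exact continuous_finsetSum _ fun k _ => continuous_const.mul (ee_cont k)

lemma int_sum (I : Finset ℤ) (F : ℤ → ℝ → ℂ) (h : ∀ k, Continuous (F k)) (a b : ℝ) :
    ∫ t in a..b, ∑ k ∈ I, F k t = ∑ k ∈ I, ∫ t in a..b, F k t :=
  intervalIntegral.integral_finsetSum fun k _ => (h k).intervalIntegrable _ _

lemma poly_sq (I : Finset ℤ) (f : ℤ → ℂ) :
    ∫ t in (0:ℝ)..(2 * Real.pi), ‖poly I f t‖ ^ 2 = 2 * Real.pi * ∑ k ∈ I, ‖f k‖ ^ 2 := by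
  have h : ∫ t in (0:ℝ)..(2 * Real.pi), ((‖poly I f t‖ ^ 2 : ℝ) : ℂ)
      = ((2 * Real.pi * ∑ k ∈ I, ‖f k‖ ^ 2 : ℝ) : ℂ) := by
    have e : ∀ t : ℝ, ((‖poly I f t‖ ^ 2 : ℝ) : ℂ)
        = ∑ k ∈ I, ∑ l ∈ I, (f k * (starRingEnd ℂ) (f l)) * ee (k + -l) t := by
      intro t
      rw [Complex.ofReal_pow, ← Complex.mul_conj', poly, map_sum, Finset.sum_mul_sum]
      refine Finset.sum_congr rfl fun k _ => Finset.sum_congr rfl fun l _ => ?_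
      rw [map_mul, ee_conj, ee_add]; ring
    simp only [e]
    have hc : ∀ k l : ℤ, Continuous fun t => (f k * (starRingEnd ℂ) (f l)) * ee (k + -l) t :=
      fun k l => continuous_const.mul (ee_cont _)
    rw [int_sum _ _ (fun k => continuous_finsetSum _ fun l _ => hc k l)]
    have : ∀ k ∈ I, ∫ t in (0:ℝ)..(2 * Real.pi), ∑ l ∈ I, (f k * (starRingEnd ℂ) (f l)) * ee (k + -l) t
        = 2 * Real.pi * (‖f k‖ : ℂ) ^ 2 := by
      intro k hk
      rw [int_sum _ _ (hc k)]
      simp only [intervalIntegral.integral_const_mul, ee_int]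
      rw [Finset.sum_eq_single k]
      · rw [if_pos (by ring), Complex.mul_conj']; ring
      · intro l _ hl
        rw [if_neg (by omega), mul_zero]
      · intro h; exact absurd hk h
    rw [Finset.sum_congr rfl this, ← Finset.mul_sum]
    push_cast; rfl
  rw [intervalIntegral.integral_ofReal] at h
  exact_mod_cast h

lemma Trip_int (I : Finset ℤ) (w f g : ℤ → ℂ) :
    ∫ t in (0:ℝ)..(2 * Real.pi), poly I w t * poly I f t * poly I g t
      = 2 * Real.pi * Trip I (fun x y z => w x * f y * g z) := by
  have e : ∀ t : ℝ, poly I w t * poly I f t * poly I g t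
      = ∑ x ∈ I, ∑ y ∈ I, ∑ z ∈ I, (w x * f y * g z) * ee (x + y + z) t := by
    intro t
    unfold poly
    rw [Finset.sum_mul_sum, Finset.sum_mul]
    refine Finset.sum_congr rfl fun x _ => ?_
    rw [Finset.sum_mul]
    refine Finset.sum_congr rfl fun y _ => ?_
    rw [Finset.mul_sum]
    refine Finset.sum_congr rfl fun z _ => ?_
    rw [ee_add, ee_add]; ring
  simp only [e]
  have hc : ∀ x y z : ℤ, Continuous fun t => (w x * f y * g z) * ee (x + y + z) t :=
    fun x y z => continuous_const.mul (ee_cont _)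
  have hc2 := fun x y => continuous_finsetSum I fun z (_ : z ∈ I) => hc x y z
  have hc3 := fun x => continuous_finsetSum I fun y (_ : y ∈ I) => hc2 x y
  rw [int_sum _ _ hc3, Trip, Finset.mul_sum]
  refine Finset.sum_congr rfl fun x _ => ?_
  rw [int_sum _ _ (hc2 x), Finset.mul_sum]
  refine Finset.sum_congr rfl fun y _ => ?_
  rw [int_sum _ _ (hc x y), Finset.mul_sum]
  refine Finset.sum_congr rfl fun z _ => ?_
  rw [intervalIntegral.integral_const_mul, ee_int]
  split_ifs <;> ring

lemma toeplitz (I : Finset ℤ) (w : ℤ → ℂ) (L : ℝ) (hL : ∀ t, ‖poly I w t‖ ≤ L) (f g : ℤ → ℂ) :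
    ‖Trip I (fun x y z => w x * f y * g z)‖ ≤ L * (∑ k ∈ I, ‖f k‖ ^ 2 + ∑ k ∈ I, ‖g k‖ ^ 2) := by
  have hL0 : 0 ≤ L := (norm_nonneg _).trans (hL 0)
  have hpi := Real.pi_pos
  have h1 : ‖∫ t in (0:ℝ)..(2 * Real.pi), poly I w t * poly I f t * poly I g t‖
      ≤ ∫ t in (0:ℝ)..(2 * Real.pi), (L * ‖poly I f t‖ ^ 2 + L * ‖poly I g t‖ ^ 2) := by
    apply intervalIntegral.norm_integral_le_of_norm_le (by positivity)
    · refine MeasureTheory.ae_of_all _ fun t _ => ?_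
      rw [norm_mul, norm_mul]
      have a := hL t
      have b := norm_nonneg (poly I f t)
      have c := norm_nonneg (poly I g t)
      calc _ ≤ L * ‖poly I f t‖ * ‖poly I g t‖ := by gcongr
        _ = L * (‖poly I f t‖ * ‖poly I g t‖) := by ring
        _ ≤ L * (‖poly I f t‖ ^ 2 + ‖poly I g t‖ ^ 2) := by
          gcongr
          nlinarith [sq_nonneg (‖poly I f t‖ - ‖poly I g t‖), sq_nonneg (‖poly I f t‖ + ‖poly I g t‖)]
        _ = _ := by ring
    · have := poly_cont I f
      have := poly_cont I g
      apply Continuous.intervalIntegrable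
      fun_prop
  have i1 : ∀ f, IntervalIntegrable (fun t => L * ‖poly I f t‖ ^ 2) MeasureTheory.volume 0 (2 * Real.pi) := by
    intro f
    have := poly_cont I f
    apply Continuous.intervalIntegrable
    fun_prop
  rw [Trip_int, intervalIntegral.integral_add (i1 f) (i1 g), intervalIntegral.integral_const_mul,
    intervalIntegral.integral_const_mul, poly_sq, poly_sq, norm_mul] at h1
  have e : ‖(2 * Real.pi : ℂ)‖ = 2 * Real.pi := by
    rw [norm_mul, Complex.norm_real, Real.norm_of_nonneg hpi.le]; simp
  rw [e] at h1
  have : 0 < 2 * Real.pi := by positivity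
  nlinarith

lemma toeplitz_scaled {I : Finset ℤ} {w : ℤ → ℂ} {L : ℝ} (hL : ∀ t, ‖poly I w t‖ ≤ L)
    {f g : ℤ → ℂ} {q : ℝ} (hq : 0 < q) {p r : ℤ → ℝ} (hf : ∀ k, ‖f k‖ ^ 2 ≤ p k)
    (hg : ∀ k, ‖g k‖ ^ 2 ≤ q ^ 2 * r k) :
    ‖Trip I (fun x y z => w x * f y * g z)‖ ≤ q * L * (∑ k ∈ I, p k + ∑ k ∈ I, r k) := by
  have hL0 : 0 ≤ L := (norm_nonneg _).trans (hL 0)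
  have hqc : (q : ℂ) ≠ 0 := by exact_mod_cast hq.ne'
  have e : Trip I (fun x y z => w x * f y * g z)
      = q * Trip I (fun x y z => w x * f y * ((q : ℂ)⁻¹ * g z)) := by
    rw [← Trip_mul]
    refine Trip_congr fun x _ y _ z _ _ => ?_
    field_simp
  rw [e, norm_mul, Complex.norm_real, Real.norm_of_nonneg hq.le, mul_assoc]
  gcongr
  refine (toeplitz I w L hL f _).trans ?_
  gcongr with k _ k _
  · exact hf k
  · rw [norm_mul, mul_pow, norm_inv, Complex.norm_real, Real.norm_of_nonneg hq.le]
    rw [inv_pow, inv_mul_le_iff₀ (by positivity)]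
    exact hg k

lemma block {I : Finset ℤ} {w : ℤ → ℂ} {L : ℝ} (hL : ∀ t, ‖poly I w t‖ ≤ L)
    (f g : ℤ → ℂ) (n : ℕ) (hn : 0 < n) (Yk : ℤ → ℤ → ℝ) (J : ℤ → Prop) [DecidablePred J]
    (Q : ℝ) (hQ : 0 < Q) (h0 : ∀ z, |Yk n z| ≤ if J z then Q else 0)
    (h1 : ∀ i : ℕ, i < n → ∀ z, |Yk ((n:ℤ) + i + 1) z - Yk ((n:ℤ) + i) z| ≤ if J z then Q / n else 0) :
    ‖Trip I (fun x y z => if (n:ℤ) ≤ y ∧ y < 2 * n then w x * (Yk y z : ℂ) * f y * g z else 0)‖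
      ≤ 2 * Q * L * (∑ k ∈ I, (if (n:ℤ) ≤ k ∧ k < 2 * n then ‖f k‖ ^ 2 else 0)
        + ∑ k ∈ I, (if J k then ‖g k‖ ^ 2 else 0)) := by
  set p : ℤ → ℝ := fun k => if (n:ℤ) ≤ k ∧ k < 2 * n then ‖f k‖ ^ 2 else 0 with hp
  set r : ℤ → ℝ := fun k => if J k then ‖g k‖ ^ 2 else 0 with hr
  have hn' : (0:ℝ) < n := by exact_mod_cast hn
  have hbd : ∀ (q : ℝ) (a : ℝ) (z : ℤ), 0 < q → (|a| ≤ if J z then q else 0) →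
      ‖(a : ℂ) * g z‖ ^ 2 ≤ q ^ 2 * r z := by
    intro q a z hq ha
    rw [norm_mul, Complex.norm_real, Real.norm_eq_abs, mul_pow, hr]
    dsimp only
    split_ifs at ha ⊢ with hJ
    · gcongr
    · have : |a| = 0 := le_antisymm ha (abs_nonneg _)
      rw [this]; simp
  have A := toeplitz_scaled (I := I) (w := w) (L := L) hL
    (f := fun y => if (n:ℤ) ≤ y ∧ y < 2 * n then f y else 0) (g := fun z => (Yk n z : ℂ) * g z)
    (q := Q) hQ (p := p) (r := r) (by intro k; simp only [hp]; split_ifs <;> simp)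
    (fun z => hbd Q _ z hQ (h0 z))
  have B : ∀ i ∈ Finset.range n, ‖Trip I (fun x y z => w x *
      (if (n:ℤ) + i < y ∧ y < 2 * n then f y else 0) *
      (((Yk ((n:ℤ) + i + 1) z - Yk ((n:ℤ) + i) z : ℝ) : ℂ) * g z))‖ ≤
      Q / n * L * (∑ k ∈ I, p k + ∑ k ∈ I, r k) := by
    intro i hi
    apply toeplitz_scaled (I := I) (w := w) (L := L) hL (by positivity)
    · intro k; simp only [hp]
      split_ifs with a b b
      · exact le_rfl
      · omega
      · simp
      · simp
    · exact fun z => hbd (Q / n) _ z (by positivity) (h1 i (Finset.mem_range.1 hi) z)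
  have E : Trip I (fun x y z => if (n:ℤ) ≤ y ∧ y < 2 * n then w x * (Yk y z : ℂ) * f y * g z else 0)
      = Trip I (fun x y z => w x * (if (n:ℤ) ≤ y ∧ y < 2 * n then f y else 0) * ((Yk n z : ℂ) * g z))
      + ∑ i ∈ Finset.range n, Trip I (fun x y z => w x *
      (if (n:ℤ) + i < y ∧ y < 2 * n then f y else 0) *
      (((Yk ((n:ℤ) + i + 1) z - Yk ((n:ℤ) + i) z : ℝ) : ℂ) * g z)) := by
    rw [← Trip_sum, ← Trip_add]
    refine Trip_congr fun x _ y _ z _ _ => ?_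
    split_ifs with hy
    · obtain ⟨m, hm⟩ : ∃ m : ℕ, y = n + m := ⟨(y - n).toNat, by omega⟩
      have hmn : m < n := by omega
      have t : ∑ i ∈ Finset.range n, (w x * (if (n:ℤ) + i < y ∧ y < 2 * n then f y else 0) *
          (((Yk ((n:ℤ) + i + 1) z - Yk ((n:ℤ) + i) z : ℝ) : ℂ) * g z))
          = ∑ i ∈ Finset.range m, (w x * f y * g z) *
            (((Yk ((n:ℤ) + ((i + 1 : ℕ) : ℤ)) z : ℝ) : ℂ) - ((Yk ((n:ℤ) + (i:ℕ)) z : ℝ) : ℂ)) := by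
        rw [← Finset.sum_subset (Finset.range_subset_range.2 hmn.le)]
        · refine Finset.sum_congr rfl fun i hi => ?_
          rw [Finset.mem_range] at hi
          rw [if_pos ⟨by omega, by omega⟩]
          push_cast
          rw [add_assoc]; ring
        · intro i _ hi
          rw [Finset.mem_range] at hi
          rw [if_neg (by omega)]; simp
      rw [t, ← Finset.mul_sum, Finset.sum_range_sub (fun i : ℕ => ((Yk ((n:ℤ) + (i:ℕ)) z : ℝ) : ℂ)), hm]
      simp; ring
    · rw [Finset.sum_eq_zero]
      · simp
      · intro i _
        rw [if_neg (by omega)]; simp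
  rw [E]
  refine (norm_add_le _ _).trans ?_
  have C := (norm_sum_le (Finset.range n) (fun i => Trip I (fun x y z => w x *
      (if (n:ℤ) + i < y ∧ y < 2 * n then f y else 0) *
      (((Yk ((n:ℤ) + i + 1) z - Yk ((n:ℤ) + i) z : ℝ) : ℂ) * g z)))).trans (Finset.sum_le_sum B)
  rw [Finset.sum_const, Finset.card_range, nsmul_eq_mul] at C
  refine (add_le_add A C).trans (le_of_eq ?_)
  field_simp
  ring

end S14
namespace S14

def Th (x y z : ℝ) : ℝ := clip (3 / 2 - 2 * (|x| / ((|x| + |y| + |z|) / 2)))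

lemma clip_pair {p q : ℝ} (h : p + q = 1) : clip (3 / 2 - 2 * p) + clip (3 / 2 - 2 * q) = 1 := by
  obtain rfl : q = 1 - p := by linarith
  unfold clip
  rcases le_total (3 / 2 - 2 * p) 1 with h1 | h1 <;>
  rcases le_total (3 / 2 - 2 * (1 - p)) 1 with h2 | h2 <;>
  simp only [min_eq_left, min_eq_right, h1, h2]
  · rw [max_eq_right (by linarith), max_eq_right (by linarith)]; ring
  · rw [max_eq_left (by linarith), max_eq_right (by linarith)]; ring
  · rw [max_eq_right (by linarith), max_eq_left (by linarith)]; ring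
  · linarith

lemma Th_max {x y z : ℝ} (h : |x| = |y| + |z|) (hx : x ≠ 0) : Th x y z = 0 := by
  unfold Th
  apply clip_zero
  rw [show (|x| + |y| + |z|) / 2 = |x| by linarith, div_self (abs_ne_zero.2 hx)]
  norm_num

lemma Th_aux {x y z : ℝ} (h : |x| = |y| + |z|) (hx : x ≠ 0) :
    Th x y z + Th y z x + Th z x y = 1 := by
  rw [Th_max h hx, zero_add]
  unfold Th
  apply clip_pair
  rw [show (|y| + |z| + |x|) / 2 = |x| by linarith, show (|z| + |x| + |y|) / 2 = |x| by linarith,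
    ← add_div, ← h, div_self (abs_ne_zero.2 hx)]

lemma abs_cases3 {x y z : ℝ} (h : x + y + z = 0) :
    |x| = |y| + |z| ∨ |y| = |z| + |x| ∨ |z| = |x| + |y| := by
  rcases abs_cases x with ⟨a, _⟩ | ⟨a, _⟩ <;> rcases abs_cases y with ⟨b, _⟩ | ⟨b, _⟩ <;>
    rcases abs_cases z with ⟨c, _⟩ | ⟨c, _⟩ <;> rw [a, b, c] <;>
    first
    | (left; linarith)
    | (right; left; linarith)
    | (right; right; linarith)

lemma Th_sum {x y z : ℝ} (h : x + y + z = 0) (h0 : ¬ (x = 0 ∧ y = 0 ∧ z = 0)) :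
    Th x y z + Th y z x + Th z x y = 1 := by
  rcases abs_cases3 h with h1 | h1 | h1
  · refine Th_aux h1 fun hx => h0 ?_
    rw [hx, abs_zero] at h1
    have := abs_nonneg y; have := abs_nonneg z
    exact ⟨hx, abs_eq_zero.1 (by linarith), abs_eq_zero.1 (by linarith)⟩
  · rw [← Th_aux h1 fun hx => h0 ?_]
    · ring
    rw [hx, abs_zero] at h1
    have := abs_nonneg x; have := abs_nonneg z
    exact ⟨abs_eq_zero.1 (by linarith), hx, abs_eq_zero.1 (by linarith)⟩
  · rw [← Th_aux h1 fun hx => h0 ?_]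
    · ring
    rw [hx, abs_zero] at h1
    have := abs_nonneg x; have := abs_nonneg y
    exact ⟨abs_eq_zero.1 (by linarith), abs_eq_zero.1 (by linarith), hx⟩

lemma phi_zero (s ε : ℝ) : phi s ε 0 = 0 := by simp [phi]

def Ph (s ε x y z : ℝ) : ℝ := phi s ε x + phi s ε y + phi s ε z

lemma ThPh_zero (s ε : ℝ) {x y z : ℝ} (h : x + y + z = 0) (hyz : 0 ≤ y * z) :
    Th x y z * Ph s ε x y z = 0 := by
  have hx : |x| = |y| + |z| := by
    rw [show x = -(y + z) by linarith, abs_neg]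
    exact abs_add_eq_add_abs_iff y z |>.2 (mul_nonneg_iff.1 hyz)
  by_cases h0 : x = 0
  · subst h0
    rw [abs_zero] at hx
    have := abs_nonneg y; have := abs_nonneg z
    rw [show y = 0 from abs_eq_zero.1 (by linarith), show z = 0 from abs_eq_zero.1 (by linarith)]
    simp [Ph, phi_zero]
  · rw [Th_max hx h0, zero_mul]

lemma ThPh_Y (s ε : ℝ) {x y z : ℝ} (h : x + y + z = 0) (hy : 0 < y) :
    Th x y z * Ph s ε x y z = x * Y s ε y (-z) := by
  unfold Y
  split_ifs with hz
  · have e : x = -z - y := by linarith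
    have hP : Ph s ε x y z = x * X s ε y (-z) := by
      rw [e, X_mul, Ph, phi_neg s ε z]; ring
    have hT : Th x y z = Tht y (-z) := by
      unfold Th Tht
      congr 1
      have hm : 0 < max y (-z) := lt_max_of_lt_left hy
      have h1 : |x| = max y (-z) - min y (-z) := by
        rw [max_sub_min_eq_abs, e]
      have h2 : |x| + |y| + |z| = 2 * max y (-z) := by
        rw [h1, abs_of_pos hy, ← abs_neg z, abs_of_pos hz]
        have := max_add_min y (-z)
        linarith
      rw [h2, h1]
      field_simp
      ring
    rw [hP, hT]; ring
  · rw [mul_zero]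
    exact ThPh_zero s ε h (mul_nonneg hy.le (by linarith))

def K3 (s : ℝ) : ℝ := K2 s * (1024:ℝ) ^ s

lemma K2_pos {s : ℝ} (hs : 5/2 < s) : 0 < K2 s := by
  have := K1_ge hs
  unfold K2; linarith

lemma K3_pos {s : ℝ} (hs : 5/2 < s) : 0 < K3 s := by
  have := K2_pos hs
  unfold K3; positivity

def Jp (j : ℕ) (z : ℤ) : Prop := (2:ℝ) ^ j / 4 ≤ -(z:ℝ) ∧ -(z:ℝ) ≤ 8 * 2 ^ j

instance (j : ℕ) : DecidablePred (Jp j) := fun _ => Classical.propDecidable _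

lemma countI (S : Finset ℕ) (k : ℤ) (a : ℝ) (ha : 0 ≤ a) :
    ∑ j ∈ S, (if ((2 ^ j : ℕ) : ℤ) ≤ k ∧ k < 2 * ((2 ^ j : ℕ) : ℤ) then a else 0) ≤ a := by
  rw [← Finset.sum_filter, Finset.sum_const, nsmul_eq_mul]
  have : (S.filter fun j => ((2 ^ j : ℕ) : ℤ) ≤ k ∧ k < 2 * ((2 ^ j : ℕ) : ℤ)).card ≤ 1 := by
    rw [Finset.card_le_one]
    have key : ∀ j, (((2 ^ j : ℕ) : ℤ) ≤ k ∧ k < 2 * ((2 ^ j : ℕ) : ℤ)) → j = Nat.log 2 k.toNat := by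
      intro j hj
      symm
      apply Nat.log_eq_of_pow_le_of_lt_pow
      · omega
      · rw [pow_succ]; omega
    intro i hi j hj
    rw [Finset.mem_filter] at hi hj
    rw [key i hi.2, key j hj.2]
  have h2 : ((S.filter fun j => ((2 ^ j : ℕ) : ℤ) ≤ k ∧ k < 2 * ((2 ^ j : ℕ) : ℤ)).card : ℝ) ≤ 1 := by
    exact_mod_cast this
  nlinarith

lemma countJ (S : Finset ℕ) (k : ℤ) (a : ℝ) (ha : 0 ≤ a) :
    ∑ j ∈ S, (if Jp j k then a else 0) ≤ 6 * a := by
  rw [← Finset.sum_filter, Finset.sum_const, nsmul_eq_mul]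
  have : (S.filter fun j => Jp j k).card ≤ 6 := by
    have hsub : (S.filter fun j => Jp j k) ⊆
        Finset.Ico (Nat.log 2 (-k).toNat - 3) (Nat.log 2 (-k).toNat + 3) := by
      intro j hj
      rw [Finset.mem_filter] at hj
      obtain ⟨_, h1, h2⟩ := hj
      have h1' : (2:ℤ) ^ j ≤ 4 * (-k) := by
        have : (2:ℝ) ^ j ≤ 4 * (-(k:ℝ)) := by linarith
        exact_mod_cast this
      have h2' : -k ≤ 8 * (2:ℤ) ^ j := by exact_mod_cast h2
      have hpos : (0:ℤ) < 2 ^ j := by positivity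
      set c := (-k).toNat with hc
      have hck : (c : ℤ) = -k := by omega
      have hc0 : c ≠ 0 := by omega
      rw [← hck] at h1' h2'
      have g1 : 2 ^ j ≤ 4 * c := by exact_mod_cast h1'
      have g2 : c ≤ 8 * 2 ^ j := by exact_mod_cast h2'
      have l1 : 2 ^ Nat.log 2 c ≤ c := Nat.pow_log_le_self 2 hc0
      have l2 : c < 2 ^ (Nat.log 2 c + 1) := Nat.lt_pow_succ_log_self (by norm_num) c
      rw [Finset.mem_Ico]
      constructor
      · have : 2 ^ Nat.log 2 c ≤ 2 ^ (j + 3) := by rw [pow_add]; omega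
        have := (Nat.pow_le_pow_iff_right (by norm_num : 1 < 2)).1 this
        omega
      · have : 2 ^ j < 2 ^ (Nat.log 2 c + 3) := by
          rw [pow_add] at l2 ⊢; omega
        exact (Nat.pow_lt_pow_iff_right (by norm_num : 1 < 2)).1 this
    refine (Finset.card_le_card hsub).trans ?_
    rw [Nat.card_Ico]; omega
  have h2 : ((S.filter fun j => Jp j k).card : ℝ) ≤ 6 := by
    exact_mod_cast this
  nlinarith

lemma block_j {s ε : ℝ} (hs : 5/2 < s) (h0 : 0 < ε) (h1 : ε < 1) {I : Finset ℤ} {w : ℤ → ℂ} {L : ℝ}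
    (hL : ∀ t, ‖poly I w t‖ ≤ L) (u : ℤ → ℂ) (j : ℕ) :
    ‖Trip I (fun x y z => if ((2 ^ j : ℕ):ℤ) ≤ y ∧ y < 2 * ((2 ^ j : ℕ):ℤ)
        then w x * (Y s ε y (-z) : ℂ) * u y * u z else 0)‖
      ≤ 2 * K3 s * L * (∑ k ∈ I, (if ((2 ^ j : ℕ):ℤ) ≤ k ∧ k < 2 * ((2 ^ j : ℕ):ℤ)
          then Mf s ε k * ‖u k‖ ^ 2 else 0)
        + ∑ k ∈ I, (if Jp j k then Mf s ε k * ‖u k‖ ^ 2 else 0)) := by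
  have hL0 : 0 ≤ L := (norm_nonneg _).trans (hL 0)
  have hn : (0:ℝ) < 2 ^ j := by positivity
  have hK := K2_pos hs
  have hM := Mf_pos s ε (8 * 2 ^ j)
  have B := block (I := I) (w := w) (L := L) hL u u (2 ^ j) (by positivity)
    (fun y z => Y s ε y (-z)) (Jp j) (K2 s * Mf s ε (8 * 2 ^ j)) (by positivity)
    (by
      intro z
      have := Y_bound (b := 2 ^ j) (c := -(z:ℝ)) hs h0 h1 hn le_rfl (by linarith)
      push_cast
      convert this
      exact Iff.rfl)
    (by
      intro i hi z
      have hi' : (i:ℝ) + 1 ≤ 2 ^ j := by exact_mod_cast hi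
      have := Y_lip (b := 2 ^ j + i) (b' := 2 ^ j + i + 1) (c := -(z:ℝ)) hs h0 h1 hn (by linarith [Nat.cast_nonneg (α := ℝ) i]) rfl (by linarith)
      push_cast
      convert this
      exact Iff.rfl)
  refine B.trans ?_
  have hq : ∀ k : ℤ, (2:ℝ) ^ j ≤ 4 * |(k:ℝ)| →
      K2 s * Mf s ε (8 * 2 ^ j) * ‖u k‖ ^ 2 ≤ K3 s * (Mf s ε k * ‖u k‖ ^ 2) := by
    intro k hk
    have := Mf_doubling (y := k) (R := 8 * 2 ^ j) hs h0 h1 (by positivity) (by linarith)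
    unfold K3
    calc _ ≤ K2 s * ((1024:ℝ) ^ s * Mf s ε k) * ‖u k‖ ^ 2 := by gcongr
      _ = _ := by ring
  rw [show ∀ P R Q : ℝ, 2 * Q * L * (P + R) = 2 * L * (Q * P + Q * R) by intros; ring,
    show ∀ P R Q : ℝ, 2 * Q * L * (P + R) = 2 * L * (Q * P + Q * R) by intros; ring]
  simp only [Finset.mul_sum]
  refine mul_le_mul_of_nonneg_left (add_le_add (Finset.sum_le_sum fun k _ => ?_)
    (Finset.sum_le_sum fun k _ => ?_)) (by positivity)
  · split_ifs with h
    · apply hq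
      have h' : ((2:ℝ) ^ j) ≤ k := by exact_mod_cast h.1
      have := le_abs_self (k:ℝ)
      linarith
    · simp
  · split_ifs with h
    · apply hq
      have h' := h.1
      have := neg_le_abs (k:ℝ)
      linarith
    · simp

lemma core {s ε : ℝ} (hs : 5/2 < s) (h0 : 0 < ε) (h1 : ε < 1) (N : ℕ) (u : ℤ → ℂ) {L : ℝ}
    (hL : ∀ t, ‖poly (Finset.Icc (-N:ℤ) N) (fun k => (k:ℂ) * u k) t‖ ≤ L) :
    ‖Trip (Finset.Icc (-N:ℤ) N) (fun x y z => (phi s ε z : ℂ) * (u x * u y * u z))‖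
      ≤ 28 * K3 s * L * ∑ k ∈ Finset.Icc (-N:ℤ) N, Mf s ε k * ‖u k‖ ^ 2 := by
  set I := Finset.Icc (-N:ℤ) N with hI
  set τ := Trip I (fun x y z => (phi s ε z : ℂ) * (u x * u y * u z)) with hτ
  have hL0 : 0 ≤ L := (norm_nonneg _).trans (hL 0)
  set F : ℤ → ℤ → ℤ → ℂ := fun x y z => ((Th x y z * Ph s ε x y z : ℝ) : ℂ) * (u x * u y * u z) with hF
  have s1 : Trip I (fun x y z => (phi s ε x : ℂ) * (u x * u y * u z)) = τ := by
    rw [hτ, Trip_rot I (fun x y z => (phi s ε z : ℂ) * (u x * u y * u z))]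
    exact Trip_congr fun x _ y _ z _ _ => by ring
  have s2 : Trip I (fun x y z => (phi s ε y : ℂ) * (u x * u y * u z)) = τ := by
    rw [← s1, Trip_rot I (fun x y z => (phi s ε x : ℂ) * (u x * u y * u z))]
    exact Trip_congr fun x _ y _ z _ _ => by ring
  have s3 : Trip I (fun x y z => ((Ph s ε x y z : ℝ) : ℂ) * (u x * u y * u z)) = 3 * τ := by
    have : Trip I (fun x y z => ((Ph s ε x y z : ℝ) : ℂ) * (u x * u y * u z)) =
        Trip I (fun x y z => ((phi s ε x : ℂ) * (u x * u y * u z) + (phi s ε y : ℂ) * (u x * u y * u z))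
          + (phi s ε z : ℂ) * (u x * u y * u z)) :=
      Trip_congr fun x _ y _ z _ _ => by unfold Ph; push_cast; ring
    rw [this, Trip_add, Trip_add, s1, s2]
    ring
  have s4 : Trip I (fun x y z => ((Ph s ε x y z : ℝ) : ℂ) * (u x * u y * u z)) = 3 * Trip I F := by
    have e1 : Trip I F = Trip I (fun x y z => F y z x) := Trip_rot I F
    have e2 : Trip I (fun x y z => F y z x) = Trip I (fun x y z => F z x y) :=
      Trip_rot I (fun x y z => F y z x)
    have : Trip I (fun x y z => ((Ph s ε x y z : ℝ) : ℂ) * (u x * u y * u z)) =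
        Trip I (fun x y z => (F x y z + F y z x) + F z x y) := by
      refine Trip_congr fun x _ y _ z _ hxyz => ?_
      have hr : (x:ℝ) + y + z = 0 := by exact_mod_cast hxyz
      by_cases hz : ((x:ℝ) = 0 ∧ (y:ℝ) = 0 ∧ (z:ℝ) = 0)
      · obtain ⟨a, b, c⟩ := hz
        simp [hF, a, b, c, Ph, phi_zero]
      · have t := Th_sum hr hz
        have p1 : Ph s ε y z x = Ph s ε x y z := by unfold Ph; ring
        have p2 : Ph s ε z x y = Ph s ε x y z := by unfold Ph; ring
        have t' : ((Th x y z + Th y z x + Th z x y : ℝ) : ℂ) = 1 := by rw [t]; simp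
        simp only [hF, p1, p2]
        rw [← one_mul ((Ph s ε x y z : ℝ) : ℂ), ← t']
        push_cast
        ring
    rw [this, Trip_add, Trip_add, ← e2, ← e1]
    ring
  have s5 : τ = Trip I F := by
    have : (3:ℂ) * τ = 3 * Trip I F := by rw [← s3, s4]
    exact mul_left_cancel₀ (by norm_num) this
  have s6 : Trip I F = 2 * Trip I (fun x y z => if 0 < y then F x y z else 0) := by
    have e : Trip I F = Trip I (fun x y z => (if 0 < y then F x y z else 0) + (if 0 < z then F x y z else 0)) := by
      refine Trip_congr fun x _ y _ z _ hxyz => ?_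
      have hr : (x:ℝ) + y + z = 0 := by exact_mod_cast hxyz
      have hz : 0 ≤ (y:ℝ) * z → F x y z = 0 := fun h => by
        simp only [hF]; rw [ThPh_zero s ε hr h]; simp
      split_ifs with a b b
      · rw [hz (by exact_mod_cast (mul_pos a b).le)]; simp
      · simp
      · simp
      · rw [hz (by exact_mod_cast mul_nonneg_of_nonpos_of_nonpos (not_lt.1 a) (not_lt.1 b))]; simp
    rw [e, Trip_add, two_mul]
    congr 1
    rw [Trip_swap23]
    refine Trip_congr fun x _ y _ z _ hxyz => ?_
    have : F x z y = F x y z := by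
      have p1 : Ph s ε x z y = Ph s ε x y z := by unfold Ph; ring
      have p2 : Th x z y = Th x y z := by unfold Th; rw [add_right_comm]
      simp only [hF, p1, p2]
      ring
    rw [this]
  have s7 : Trip I (fun x y z => if 0 < y then F x y z else 0) =
      ∑ j ∈ Finset.range (N + 1), Trip I (fun x y z => if ((2 ^ j : ℕ):ℤ) ≤ y ∧ y < 2 * ((2 ^ j : ℕ):ℤ)
        then ((x:ℂ) * u x) * (Y s ε y (-z) : ℂ) * u y * u z else 0) := by
    rw [← Trip_sum]
    refine Trip_congr fun x _ y hy z _ hxyz => ?_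
    have hr : (x:ℝ) + y + z = 0 := by exact_mod_cast hxyz
    split_ifs with hy0
    · rw [hI, Finset.mem_Icc] at hy
      have hyn : y.toNat ≠ 0 := by omega
      have l1 : 2 ^ Nat.log 2 y.toNat ≤ y.toNat := Nat.pow_log_le_self 2 hyn
      have l2 : y.toNat < 2 ^ (Nat.log 2 y.toNat + 1) := Nat.lt_pow_succ_log_self (by norm_num) _
      have l3 : Nat.log 2 y.toNat < y.toNat := Nat.log_lt_self 2 hyn
      rw [Finset.sum_eq_single (Nat.log 2 y.toNat)]
      · rw [if_pos ⟨by omega, by rw [pow_succ] at l2; omega⟩]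
        simp only [hF]
        rw [ThPh_Y s ε hr (by exact_mod_cast hy0)]
        push_cast; ring
      · intro j _ hj
        rw [if_neg]
        rintro ⟨a, b⟩
        apply hj
        symm
        apply Nat.log_eq_of_pow_le_of_lt_pow
        · omega
        · rw [pow_succ]; omega
      · intro h
        exact absurd (Finset.mem_range.2 (by omega)) h
    · rw [Finset.sum_eq_zero]
      intro j _
      rw [if_neg]
      have : 0 < 2 ^ j := by positivity
      omega
  rw [s5, s6, s7, norm_mul]
  have hA : ∀ k : ℤ, 0 ≤ Mf s ε k * ‖u k‖ ^ 2 := fun k => mul_nonneg (Mf_nonneg _ _ _) (by positivity)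
  have hK := K3_pos hs
  have b1 := (norm_sum_le (Finset.range (N + 1)) _).trans
    (Finset.sum_le_sum fun j (_ : j ∈ Finset.range (N + 1)) => block_j hs h0 h1 hL u j)
  rw [← Finset.mul_sum, Finset.sum_add_distrib, Finset.sum_comm,
    Finset.sum_comm (t := I) (s := Finset.range (N + 1)) (f := fun j k => if Jp j k then Mf s ε k * ‖u k‖ ^ 2 else 0)] at b1
  have c1 := Finset.sum_le_sum fun k (_ : k ∈ I) => countI (Finset.range (N + 1)) k _ (hA k)
  have c2 := Finset.sum_le_sum fun k (_ : k ∈ I) => countJ (Finset.range (N + 1)) k _ (hA k)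
  rw [← Finset.mul_sum] at c2
  have b2 := b1.trans (mul_le_mul_of_nonneg_left (add_le_add c1 c2) (by positivity))
  rw [Complex.norm_two]
  linarith

end S14
namespace S14

lemma q_ge (k : ℤ) : (1:ℝ) ≤ 1 + (k:ℝ) ^ 2 := by nlinarith [sq_nonneg (k:ℝ)]

lemma q_pos (k : ℤ) : (0:ℝ) < 1 + (k:ℝ) ^ 2 := by positivity

lemma summ_q : Summable (fun k : ℤ => (1 + (k:ℝ) ^ 2) ^ (-(3/2) : ℝ)) := by
  have h1 : Summable (fun k : ℤ => 2 * (1 / |(k:ℝ) + 1/2| ^ (2:ℝ))) :=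
    ((Real.summable_one_div_int_add_rpow (1/2) 2).2 (by norm_num)).mul_left 2
  refine Summable.of_nonneg_of_le (fun k => by positivity) (fun k => ?_) h1
  have hq := q_ge k
  have e1 : (1 + (k:ℝ) ^ 2) ^ (-(3/2) : ℝ) ≤ (1 + (k:ℝ) ^ 2) ^ (-1 : ℝ) :=
    Real.rpow_le_rpow_of_exponent_le hq (by norm_num)
  refine e1.trans ?_
  rw [Real.rpow_neg_one]
  have hne : (k:ℝ) + 1/2 ≠ 0 := by
    intro h
    have h2 : (2:ℝ) * k + 1 = 0 := by linarith
    have h3 : 2 * k + 1 = 0 := by exact_mod_cast h2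
    omega
  have e2 : |(k:ℝ) + 1/2| ^ (2:ℝ) = ((k:ℝ) + 1/2) ^ 2 := by
    rw [show (2:ℝ) = ((2:ℕ):ℝ) by norm_num, Real.rpow_natCast, sq_abs]
  rw [e2]
  have hp : 0 < ((k:ℝ) + 1/2) ^ 2 := by positivity
  rw [inv_eq_one_div, mul_one_div, div_le_div_iff₀ (q_pos k) hp]
  nlinarith [sq_nonneg ((k:ℝ) - 1/2)]

def alpha (s : ℝ) (u : ℤ → ℂ) (k : ℤ) : ℝ := (1 + (k:ℝ) ^ 2) ^ ((s - 3/2) / 2) * ‖u k‖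

lemma alpha_nonneg (s : ℝ) (u : ℤ → ℂ) (k : ℤ) : 0 ≤ alpha s u k := by
  unfold alpha; positivity

lemma alpha_summable {s : ℝ} {u : FC} (hu : FC.memHs s u) : Summable (alpha s u) := by
  have h1 : Summable (fun k : ℤ => 1/2 * (FC.wt s k * ‖u k‖ ^ 2 + (1 + (k:ℝ) ^ 2) ^ (-(3/2) : ℝ))) :=
    (Summable.add hu summ_q).mul_left _
  refine Summable.of_nonneg_of_le (alpha_nonneg s u) (fun k => ?_) h1
  unfold alpha FC.wt
  have hq := q_pos k
  have e1 : (1 + (k:ℝ) ^ 2) ^ ((s - 3/2) / 2) =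
      (1 + (k:ℝ) ^ 2) ^ (s/2) * (1 + (k:ℝ) ^ 2) ^ (-(3/4):ℝ) := by
    rw [← Real.rpow_add hq]; congr 1; ring
  have e2 : (1 + (k:ℝ) ^ 2) ^ s = ((1 + (k:ℝ) ^ 2) ^ (s/2)) ^ 2 := by
    rw [pow_two ((1 + (k:ℝ) ^ 2) ^ (s/2)), ← Real.rpow_add hq]; congr 1; ring
  have e3 : (1 + (k:ℝ) ^ 2) ^ (-(3/2):ℝ) = ((1 + (k:ℝ) ^ 2) ^ (-(3/4):ℝ)) ^ 2 := by
    rw [pow_two ((1 + (k:ℝ) ^ 2) ^ (-(3/4):ℝ)), ← Real.rpow_add hq]; congr 1; ring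
  rw [e1, e2, e3]
  nlinarith [sq_nonneg ((1 + (k:ℝ) ^ 2) ^ (s/2) * ‖u k‖ - (1 + (k:ℝ) ^ 2) ^ (-(3/4):ℝ))]

lemma abs_le_sqrt_q (k : ℤ) : |(k:ℝ)| ≤ (1 + (k:ℝ) ^ 2) ^ ((1:ℝ)/2) := by
  rw [← Real.sqrt_eq_rpow]
  apply Real.le_sqrt_of_sq_le
  rw [sq_abs]; linarith

lemma abs_le_alpha {s : ℝ} (hs : 5/2 < s) (u : ℤ → ℂ) (k : ℤ) : |(k:ℝ)| * ‖u k‖ ≤ alpha s u k := by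
  unfold alpha
  refine mul_le_mul_of_nonneg_right ?_ (norm_nonneg _)
  exact (abs_le_sqrt_q k).trans
    (Real.rpow_le_rpow_of_exponent_le (q_ge k) (by linarith))

/-- the summand -/
def Term (s ε : ℝ) (u : ℤ → ℂ) (c j : ℤ) : ℂ :=
  (Mf s ε c : ℂ) * (u j * (Complex.I * ((c - j : ℤ) : ℂ) * u (c - j)) * (starRingEnd ℂ) (u c))

lemma Mf_u_bound {s ε : ℝ} (hs : 5/2 < s) (h0 : 0 < ε) (h1 : ε < 1) {u : FC} (hu : FC.memHs s u) (c : ℤ) :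
    Mf s ε c * ‖u c‖ ≤ (ε ^ 4)⁻¹ * FC.hsNorm s u * (1 + (c:ℝ) ^ 2) ^ ((s - 5/2) / 2) := by
  have hq := q_pos c
  have hB : (1 + (c:ℝ) ^ 2) ^ (s/2) * ‖u c‖ ≤ FC.hsNorm s u := by
    unfold FC.hsNorm
    apply Real.le_sqrt_of_sq_le
    have e2 : (1 + (c:ℝ) ^ 2) ^ s = ((1 + (c:ℝ) ^ 2) ^ (s/2)) ^ 2 := by
      rw [pow_two ((1 + (c:ℝ) ^ 2) ^ (s/2)), ← Real.rpow_add hq]; congr 1; ring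
    have := hu.le_tsum c (fun k _ => by unfold FC.wt; positivity)
    refine le_trans (le_of_eq ?_) this
    unfold FC.wt; rw [e2]; ring
  have hM : Mf s ε c ≤ (ε ^ 4)⁻¹ * (1 + (c:ℝ) ^ 2) ^ (s - 2) := by
    have e1 : (1 + (c:ℝ) ^ 2) ^ s = (1 + (c:ℝ) ^ 2) ^ (s - 2) * (1 + (c:ℝ) ^ 2) ^ 2 := by
      rw [← Real.rpow_natCast (1 + (c:ℝ) ^ 2) 2, ← Real.rpow_add hq]; congr 1; push_cast; ring
    unfold Mf
    rw [e1]
    have h2 : ε ^ 2 * (1 + (c:ℝ) ^ 2) ≤ 1 + ε ^ 2 * (c:ℝ) ^ 2 := by nlinarith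
    have h3 : (ε ^ 2 * (1 + (c:ℝ) ^ 2)) ^ 2 ≤ (1 + ε ^ 2 * (c:ℝ) ^ 2) ^ 2 :=
      pow_le_pow_left₀ (by positivity) h2 2
    have h4 : ((1 + ε ^ 2 * (c:ℝ) ^ 2) ^ 2)⁻¹ ≤ ((ε ^ 2 * (1 + (c:ℝ) ^ 2)) ^ 2)⁻¹ :=
      inv_anti₀ (by positivity) h3
    calc _ ≤ (1 + (c:ℝ) ^ 2) ^ (s - 2) * (1 + (c:ℝ) ^ 2) ^ 2 * ((ε ^ 2 * (1 + (c:ℝ) ^ 2)) ^ 2)⁻¹ := by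
          gcongr
      _ = _ := by field_simp
  have e3 : (1 + (c:ℝ) ^ 2) ^ (s - 2) = (1 + (c:ℝ) ^ 2) ^ (s/2) * (1 + (c:ℝ) ^ 2) ^ (s/2 - 2) := by
    rw [← Real.rpow_add hq]; congr 1; ring
  have e4 : (1 + (c:ℝ) ^ 2) ^ (s/2 - 2) ≤ (1 + (c:ℝ) ^ 2) ^ ((s - 5/2)/2) :=
    Real.rpow_le_rpow_of_exponent_le (q_ge c) (by linarith)
  calc Mf s ε c * ‖u c‖ ≤ (ε ^ 4)⁻¹ * (1 + (c:ℝ) ^ 2) ^ (s - 2) * ‖u c‖ := by gcongr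
    _ = (ε ^ 4)⁻¹ * ((1 + (c:ℝ) ^ 2) ^ (s/2) * ‖u c‖) * (1 + (c:ℝ) ^ 2) ^ (s/2 - 2) := by
        rw [e3]; ring
    _ ≤ _ := by
        have : 0 ≤ FC.hsNorm s u := Real.sqrt_nonneg _
        gcongr

lemma Term_bound {s ε : ℝ} (hs : 5/2 < s) (h0 : 0 < ε) (h1 : ε < 1) {u : FC} (hu : FC.memHs s u) (c j : ℤ) :
    ‖Term s ε u c j‖ ≤ (ε ^ 4)⁻¹ * FC.hsNorm s u * 2 ^ ((s - 5/2)/2) *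
      (alpha s u j * alpha s u (c - j)) := by
  have hN : 0 ≤ FC.hsNorm s u := Real.sqrt_nonneg _
  have hp : 0 ≤ (s - 5/2)/2 := by linarith
  have e1 : ‖Term s ε u c j‖ = (Mf s ε c * ‖u c‖) * (‖u j‖ * (|((c - j : ℤ):ℝ)| * ‖u (c - j)‖)) := by
    unfold Term
    simp only [norm_mul, RCLike.norm_conj, Complex.norm_I, Complex.norm_real, Real.norm_eq_abs,
      abs_of_nonneg (Mf_nonneg s ε c)]
    rw [Complex.norm_intCast]
    ring
  rw [e1]
  have e2 : (1 + (c:ℝ) ^ 2) ^ ((s - 5/2)/2) ≤ 2 ^ ((s - 5/2)/2) *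
      ((1 + (j:ℝ) ^ 2) ^ ((s - 5/2)/2) * (1 + ((c - j : ℤ):ℝ) ^ 2) ^ ((s - 5/2)/2)) := by
    rw [← Real.mul_rpow (by positivity) (by positivity), ← Real.mul_rpow (by positivity) (by positivity)]
    apply Real.rpow_le_rpow (by positivity) _ hp
    push_cast
    nlinarith [sq_nonneg ((j:ℝ) - (c - j)), sq_nonneg ((j:ℝ) * (c - j))]
  have e3 : (1 + (j:ℝ) ^ 2) ^ ((s - 5/2)/2) * ‖u j‖ ≤ alpha s u j := by
    unfold alpha
    refine mul_le_mul_of_nonneg_right ?_ (norm_nonneg _)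
    exact Real.rpow_le_rpow_of_exponent_le (q_ge j) (by linarith)
  have e4 : (1 + ((c - j : ℤ):ℝ) ^ 2) ^ ((s - 5/2)/2) * (|((c - j : ℤ):ℝ)| * ‖u (c - j)‖) ≤ alpha s u (c - j) := by
    unfold alpha
    rw [← mul_assoc]
    refine mul_le_mul_of_nonneg_right ?_ (norm_nonneg _)
    have : (1 + ((c - j : ℤ):ℝ) ^ 2) ^ ((s - 3/2)/2) = (1 + ((c - j : ℤ):ℝ) ^ 2) ^ ((s - 5/2)/2) *
        (1 + ((c - j : ℤ):ℝ) ^ 2) ^ ((1:ℝ)/2) := by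
      rw [← Real.rpow_add (q_pos _)]; congr 1; ring
    rw [this]
    exact mul_le_mul_of_nonneg_left (abs_le_sqrt_q _) (by positivity)
  have hA := alpha_nonneg s u j
  calc _ ≤ ((ε ^ 4)⁻¹ * FC.hsNorm s u * (2 ^ ((s - 5/2)/2) *
      ((1 + (j:ℝ) ^ 2) ^ ((s - 5/2)/2) * (1 + ((c - j : ℤ):ℝ) ^ 2) ^ ((s - 5/2)/2)))) *
        (‖u j‖ * (|((c - j : ℤ):ℝ)| * ‖u (c - j)‖)) := by
        refine mul_le_mul_of_nonneg_right ((Mf_u_bound hs h0 h1 hu c).trans ?_) (by positivity)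
        exact mul_le_mul_of_nonneg_left e2 (by positivity)
    _ = (ε ^ 4)⁻¹ * FC.hsNorm s u * 2 ^ ((s - 5/2)/2) *
      (((1 + (j:ℝ) ^ 2) ^ ((s - 5/2)/2) * ‖u j‖) * ((1 + ((c - j : ℤ):ℝ) ^ 2) ^ ((s - 5/2)/2) * (|((c - j : ℤ):ℝ)| * ‖u (c - j)‖))) := by ring
    _ ≤ _ := by
        refine mul_le_mul_of_nonneg_left ?_ (by positivity)
        exact mul_le_mul e3 e4 (by positivity) hA

def bnd (s ε : ℝ) (u : ℤ → ℂ) (p : ℤ × ℤ) : ℝ :=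
  (ε ^ 4)⁻¹ * FC.hsNorm s u * 2 ^ ((s - 5/2)/2) * (alpha s u p.2 * alpha s u (p.1 - p.2))

lemma bnd_summable {s : ℝ} (ε : ℝ) {u : FC} (hu : FC.memHs s u) : Summable (bnd s ε u) := by
  have ha := alpha_summable hu
  have h1 : Summable (fun p : ℤ × ℤ => alpha s u p.1 * alpha s u p.2) :=
    ha.mul_of_nonneg ha (alpha_nonneg s u) (alpha_nonneg s u)
  have hinj : Function.Injective (fun p : ℤ × ℤ => ((p.2, p.1 - p.2) : ℤ × ℤ)) := by
    rintro ⟨a, b⟩ ⟨c, d⟩ h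
    simp only [Prod.mk.injEq] at h ⊢
    omega
  exact (h1.comp_injective hinj).mul_left _

lemma Term_summable {s ε : ℝ} (hs : 5/2 < s) (h0 : 0 < ε) (h1 : ε < 1) {u : FC} (hu : FC.memHs s u) :
    Summable (fun p : ℤ × ℤ => Term s ε u p.1 p.2) :=
  Summable.of_norm_bounded (bnd_summable ε hu) (fun p => Term_bound hs h0 h1 hu p.1 p.2)

lemma hsInner_eq {s ε : ℝ} (hs : 5/2 < s) (h0 : 0 < ε) (h1 : ε < 1) {u : FC} (hu : FC.memHs s u) :
    FC.hsInner s (FC.T ε (FC.mul u (FC.D1 u))) (FC.T ε u)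
      = (∑' p : ℤ × ℤ, Term s ε u p.1 p.2).re := by
  rw [(Term_summable hs h0 h1 hu).tsum_prod]
  unfold FC.hsInner
  congr 1
  refine tsum_congr fun c => ?_
  unfold Term
  dsimp only
  rw [tsum_mul_left, tsum_mul_right]
  simp only [FC.T, FC.mult, FC.mul, FC.D1, Mf, FC.wt, map_mul, Complex.conj_ofReal]
  generalize (∑' j : ℤ, u j * (Complex.I * ((c - j : ℤ) : ℂ) * u (c - j))) = Q
  push_cast
  rw [← inv_pow]
  ring

end S14
namespace S14

lemma trip_half (s ε : ℝ) (I : Finset ℤ) (u : ℤ → ℂ) :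
    Trip I (fun x y z => (Mf s ε z : ℂ) * (Complex.I * (y : ℂ)) * (u x * u y * u z))
      = -(Complex.I / 2) * Trip I (fun x y z => (phi s ε z : ℂ) * (u x * u y * u z)) := by
  set T := Trip I (fun x y z => (Mf s ε z : ℂ) * (Complex.I * (y : ℂ)) * (u x * u y * u z)) with hT
  have h1 : T = Trip I (fun x y z => (Mf s ε z : ℂ) * (Complex.I * (x : ℂ)) * (u y * u x * u z)) := by
    rw [hT, Trip_swap12]
  have h2 : T + T = -Complex.I * Trip I (fun x y z => (phi s ε z : ℂ) * (u x * u y * u z)) := by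
    nth_rewrite 2 [h1]
    rw [hT, ← Trip_add, ← Trip_mul]
    refine Trip_congr fun x _ y _ z _ h => ?_
    have hz : (z : ℂ) = -(x + y) := by
      have : z = -(x + y) := by omega
      rw [this]; push_cast; ring
    unfold phi
    push_cast
    rw [hz]
    ring
  linear_combination h2 / 2

lemma trip_eq (s ε : ℝ) (N : ℕ) {u : FC} (hr : FC.isReal u) :
    (∑' p : ℤ × ℤ, if p.1 ∈ Finset.Icc (-N:ℤ) N ∧ p.2 ∈ Finset.Icc (-N:ℤ) N ∧
        p.1 - p.2 ∈ Finset.Icc (-N:ℤ) N then Term s ε u p.1 p.2 else 0)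
      = Trip (Finset.Icc (-N:ℤ) N)
        (fun x y z => (Mf s ε z : ℂ) * (Complex.I * (y : ℂ)) * (u x * u y * u z)) := by
  rw [tsum_eq_sum (s := Finset.Icc (-N:ℤ) N ×ˢ Finset.Icc (-N:ℤ) N), Finset.sum_product, Trip_rot]
  · unfold Trip
    refine Finset.sum_equiv (Equiv.neg ℤ) ?_ ?_
    · intro i; simp only [Finset.mem_Icc, Equiv.neg_apply]; omega
    · intro c hc
      refine Finset.sum_congr rfl fun j hj => ?_
      have : ∀ z ∈ Finset.Icc (-N:ℤ) N,
        (if (Equiv.neg ℤ) c + j + z = 0 then (Mf s ε (((Equiv.neg ℤ) c : ℤ):ℝ) : ℂ) * (Complex.I * (z : ℂ)) * (u j * u z * u ((Equiv.neg ℤ) c)) else 0)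
        = if c - j = z then Term s ε u c j else 0 := by
        intro z hz
        simp only [Equiv.neg_apply]
        by_cases h : c - j = z
        · subst h
          rw [if_pos (by ring), if_pos rfl, hr c]
          unfold Term
          push_cast
          rw [Mf_neg]
          ring
        · rw [if_neg (by omega), if_neg h]
      rw [Finset.sum_congr rfl this, Finset.sum_ite_eq]
      simp only [hc, hj, true_and]
  · rintro ⟨c, j⟩ h
    rw [if_neg]
    rintro ⟨h1, h2, _⟩
    exact h (Finset.mem_product.2 ⟨h1, h2⟩)

lemma Icc_tendsto : Filter.Tendsto (fun N : ℕ => Finset.Icc (-N:ℤ) N) Filter.atTop Filter.atTop := by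
  apply Filter.tendsto_atTop_finset_of_monotone
  · intro a b h
    apply Finset.Icc_subset_Icc <;> omega
  · intro x
    refine ⟨x.natAbs, ?_⟩
    rw [Finset.mem_Icc]; omega

lemma SN_tendsto {s ε : ℝ} (hs : 5/2 < s) (h0 : 0 < ε) (h1 : ε < 1) {u : FC} (hu : FC.memHs s u) :
    Filter.Tendsto (fun N : ℕ => ∑' p : ℤ × ℤ, if p.1 ∈ Finset.Icc (-N:ℤ) N ∧ p.2 ∈ Finset.Icc (-N:ℤ) N ∧
        p.1 - p.2 ∈ Finset.Icc (-N:ℤ) N then Term s ε u p.1 p.2 else 0) Filter.atTop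
      (nhds (∑' p : ℤ × ℤ, Term s ε u p.1 p.2)) := by
  refine tendsto_tsum_of_dominated_convergence (bnd_summable ε hu) ?_ ?_
  · rintro ⟨c, j⟩
    refine tendsto_const_nhds.congr' ?_
    filter_upwards [Filter.eventually_ge_atTop (c.natAbs + j.natAbs)] with N hN
    rw [if_pos]
    simp only [Finset.mem_Icc]
    omega
  · refine Filter.Eventually.of_forall fun N p => ?_
    have hb := Term_bound hs h0 h1 hu p.1 p.2
    split_ifs
    · exact hb
    · rw [norm_zero]
      exact (norm_nonneg _).trans hb

lemma norm_ee (k : ℤ) (t : ℝ) : ‖Complex.exp (Complex.I * (k : ℂ) * (t : ℂ))‖ = 1 := by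
  rw [Complex.norm_exp]
  simp

lemma poly_bound {s : ℝ} (hs : 5/2 < s) {u : FC} (hu : FC.memHs s u) (N : ℕ) (t : ℝ) :
    ‖poly (Finset.Icc (-N:ℤ) N) (fun k => (k:ℂ) * u k) t‖ ≤
      FC.linfty (FC.D1 u) + (∑' k : ℤ, |(k:ℝ)| * ‖u k‖ - ∑ k ∈ Finset.Icc (-N:ℤ) N, |(k:ℝ)| * ‖u k‖) := by
  have hsum : Summable (fun k : ℤ => |(k:ℝ)| * ‖u k‖) :=
    Summable.of_nonneg_of_le (fun k => by positivity) (abs_le_alpha hs u) (alpha_summable hu)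
  have hterm : ∀ (x : ℝ) (k : ℤ), ‖FC.D1 u k * Complex.exp (Complex.I * (k : ℂ) * (x : ℂ))‖ = |(k:ℝ)| * ‖u k‖ := by
    intro x k
    rw [norm_mul, norm_ee, mul_one]
    unfold FC.D1
    rw [norm_mul, norm_mul, Complex.norm_I, one_mul, Complex.norm_intCast]
  have hsC : ∀ x : ℝ, Summable (fun k : ℤ => FC.D1 u k * Complex.exp (Complex.I * (k : ℂ) * (x : ℂ))) := by
    intro x
    refine Summable.of_norm ?_
    simp only [hterm]
    exact hsum
  have hle : ‖FC.eval (FC.D1 u) t‖ ≤ FC.linfty (FC.D1 u) := by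
    unfold FC.linfty
    refine le_ciSup (f := fun x : ℝ => ‖FC.eval (FC.D1 u) x‖) ⟨∑' k : ℤ, |(k:ℝ)| * ‖u k‖, ?_⟩ t
    rintro _ ⟨x, rfl⟩
    unfold FC.eval
    refine (norm_tsum_le_tsum_norm ?_).trans ?_
    · simp only [hterm]; exact hsum
    · simp only [hterm]; exact le_rfl
  have hsplit := (hsC t).sum_add_tsum_compl (s := Finset.Icc (-N:ℤ) N)
  have hsplit2 := hsum.sum_add_tsum_compl (s := Finset.Icc (-N:ℤ) N)
  have hfin : ∑ k ∈ Finset.Icc (-N:ℤ) N, FC.D1 u k * Complex.exp (Complex.I * (k : ℂ) * (t : ℂ))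
      = Complex.I * poly (Finset.Icc (-N:ℤ) N) (fun k => (k:ℂ) * u k) t := by
    unfold poly ee FC.D1
    rw [Finset.mul_sum]
    refine Finset.sum_congr rfl fun k _ => ?_
    ring
  have htail : ‖∑' k : ↑((↑(Finset.Icc (-N:ℤ) N) : Set ℤ)ᶜ), FC.D1 u k * Complex.exp (Complex.I * ((k:ℤ) : ℂ) * (t : ℂ))‖
      ≤ ∑' k : ↑((↑(Finset.Icc (-N:ℤ) N) : Set ℤ)ᶜ), |((k:ℤ):ℝ)| * ‖u k‖ := by
    refine (norm_tsum_le_tsum_norm ?_).trans ?_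
    · simp only [hterm]; exact hsum.subtype _
    · simp only [hterm]; exact le_rfl
  have e1 : ‖poly (Finset.Icc (-N:ℤ) N) (fun k => (k:ℂ) * u k) t‖
      = ‖FC.eval (FC.D1 u) t - ∑' k : ↑((↑(Finset.Icc (-N:ℤ) N) : Set ℤ)ᶜ), FC.D1 u k * Complex.exp (Complex.I * ((k:ℤ) : ℂ) * (t : ℂ))‖ := by
    unfold FC.eval
    rw [← hsplit, add_sub_cancel_right, hfin, norm_mul, Complex.norm_I, one_mul]
  rw [e1]
  refine (norm_sub_le _ _).trans ?_
  linarith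

lemma main_bound {s ε : ℝ} (hs : 5/2 < s) (h0 : 0 < ε) (h1 : ε < 1) {u : FC} (hu : FC.memHs s u)
    (hr : FC.isReal u) :
    |FC.hsInner s (FC.T ε (FC.mul u (FC.D1 u))) (FC.T ε u)| ≤
      14 * K3 s * FC.linfty (FC.D1 u) * FC.hsNorm s (FC.T ε u) ^ 2 := by
  have hK := K3_pos hs
  have hsum : Summable (fun k : ℤ => |(k:ℝ)| * ‖u k‖) :=
    Summable.of_nonneg_of_le (fun k => by positivity) (abs_le_alpha hs u) (alpha_summable hu)
  have hMs : Summable (fun k : ℤ => Mf s ε k * ‖u k‖ ^ 2) := by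
    refine Summable.of_nonneg_of_le (fun k => mul_nonneg (Mf_nonneg _ _ _) (by positivity)) (fun k => ?_) hu
    refine mul_le_mul_of_nonneg_right ?_ (by positivity)
    unfold Mf FC.wt
    refine mul_le_of_le_one_right (by positivity) ?_
    apply inv_le_one_of_one_le₀
    apply one_le_pow₀
    have : 0 ≤ ε ^ 2 * (k:ℝ) ^ 2 := by positivity
    linarith
  have hA : ∑' k : ℤ, Mf s ε k * ‖u k‖ ^ 2 = FC.hsNorm s (FC.T ε u) ^ 2 := by
    unfold FC.hsNorm
    rw [Real.sq_sqrt (tsum_nonneg fun k => by unfold FC.wt; positivity)]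
    refine tsum_congr fun k => ?_
    simp only [FC.T, FC.mult, FC.wt, Mf, norm_mul, Complex.norm_real, Real.norm_eq_abs, mul_pow, sq_abs]
    rw [inv_pow]; ring
  rw [hsInner_eq hs h0 h1 hu, ← hA]
  refine (Complex.abs_re_le_norm _).trans ?_
  have hL := (SN_tendsto hs h0 h1 hu).norm
  have htl : Filter.Tendsto (fun N : ℕ => ∑ k ∈ Finset.Icc (-N:ℤ) N, |(k:ℝ)| * ‖u k‖) Filter.atTop
      (nhds (∑' k : ℤ, |(k:ℝ)| * ‖u k‖)) := hsum.hasSum.comp Icc_tendsto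
  have htR : Filter.Tendsto (fun N : ℕ => 14 * K3 s * (FC.linfty (FC.D1 u) + (∑' k : ℤ, |(k:ℝ)| * ‖u k‖ - ∑ k ∈ Finset.Icc (-N:ℤ) N, |(k:ℝ)| * ‖u k‖)) * ∑' k : ℤ, Mf s ε k * ‖u k‖ ^ 2) Filter.atTop
      (nhds (14 * K3 s * (FC.linfty (FC.D1 u) + (∑' k : ℤ, |(k:ℝ)| * ‖u k‖ - ∑' k : ℤ, |(k:ℝ)| * ‖u k‖)) * ∑' k : ℤ, Mf s ε k * ‖u k‖ ^ 2)) :=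
    ((((htl.const_sub _).const_add _).const_mul _).mul_const _)
  rw [sub_self, add_zero] at htR
  refine le_of_tendsto_of_tendsto' hL htR fun N => ?_
  have hp := poly_bound hs hu N
  have hc := core hs h0 h1 N u hp
  rw [trip_eq s ε N hr, trip_half, norm_mul]
  have hI : ‖-(Complex.I / 2)‖ = 1/2 := by simp
  rw [hI]
  have hL0 := (norm_nonneg _).trans (hp 0)
  have hAN : ∑ k ∈ Finset.Icc (-N:ℤ) N, Mf s ε k * ‖u k‖ ^ 2 ≤ ∑' k : ℤ, Mf s ε k * ‖u k‖ ^ 2 :=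
    hMs.sum_le_tsum _ (fun k _ => mul_nonneg (Mf_nonneg _ _ _) (by positivity))
  have := mul_le_mul_of_nonneg_left hAN (mul_nonneg (mul_nonneg (by norm_num : (0:ℝ) ≤ 28) hK.le) hL0)
  linarith

end S14

/-- Let `s > 5/2`.  There is `C = C(s) > 0` such that for all `ε ∈ (0,1)`
and `u ∈ H^s(𝕋)`:
`|(T̃_ε(u ∂ₓu), T̃_ε u)_{H^s}| ≤ C ‖∂ₓu‖_{L^∞} (‖u‖_{H^s} ‖T̃_ε u‖_{H^s} + ‖T̃_ε u‖²_{H^s})`. -/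
theorem statement14 (s : ℝ) (hs : 5 / 2 < s) :
    ∃ C > (0 : ℝ), ∀ ε : ℝ, ε ∈ Set.Ioo (0 : ℝ) 1 → ∀ u : FC,
      FC.memHs s u → FC.isReal u →
      |FC.hsInner s (FC.T ε (FC.mul u (FC.D1 u))) (FC.T ε u)|
        ≤ C * FC.linfty (FC.D1 u)
            * (FC.hsNorm s u * FC.hsNorm s (FC.T ε u) + FC.hsNorm s (FC.T ε u) ^ 2) := by
  refine ⟨14 * S14.K3 s, mul_pos (by norm_num) (S14.K3_pos hs), ?_⟩
  rintro ε ⟨h0, h1⟩ u hu hr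
  refine (S14.main_bound hs h0 h1 hu hr).trans ?_
  have hK := S14.K3_pos hs
  have hl : 0 ≤ FC.linfty (FC.D1 u) := Real.iSup_nonneg fun x => norm_nonneg _
  have hB : 0 ≤ FC.hsNorm s u * FC.hsNorm s (FC.T ε u) :=
    mul_nonneg (Real.sqrt_nonneg _) (Real.sqrt_nonneg _)
  refine mul_le_mul_of_nonneg_left (by linarith) (by positivity)
end
end

section
/- Let s > 7/2. There is a constant C = C(s) > 0 such that for all ε ∈ (0,1) and all θ ∈ H^s(𝕋): |(T̃_ε((𝓗θ) ∂_x θ), T̃_ε θ)_{H^s}| ≤ C (‖∂_x θ‖_{L^∞} + ‖𝓗∂_x θ‖_{L^∞}) ‖θ‖²_{H^s}. -/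
noncomputable section
open scoped BigOperators

namespace Sch
open MeasureTheory

/-- The bilinear form with matrix `B` is bounded by `M`. -/
def Bd (B : ℤ → ℤ → ℂ) (M : ℝ) : Prop := ∀ (S : Finset ℤ) (f h : ℤ → ℂ),
  ‖∑ n ∈ S, ∑ a ∈ S, B n a * f a * h n‖ ≤ M * ∑ n ∈ S, (‖f n‖ ^ 2 + ‖h n‖ ^ 2)

/-- `K` is a Schur multiplier with constant `C` on matrices supported in `0 < a < n`. -/
def Good (K : ℤ → ℤ → ℝ) (C : ℝ) : Prop := ∀ (B : ℤ → ℤ → ℂ) (M : ℝ), 0 ≤ M →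
  (∀ n a, ¬ (0 < a ∧ a < n) → B n a = 0) → Bd B M → Bd (fun n a => (K n a : ℂ) * B n a) (C * M)

/-- Uniform Schur multipliers. -/
def UG (K : ℝ → ℤ → ℤ → ℝ) : Prop :=
  ∃ C : ℝ, 0 ≤ C ∧ ∀ ε ∈ Set.Ioo (0 : ℝ) 1, Good (K ε) C

theorem UG.congr {K K' : ℝ → ℤ → ℤ → ℝ} (h : UG K)
    (e : ∀ ε ∈ Set.Ioo (0 : ℝ) 1, ∀ n a : ℤ, 0 < a → a < n → K' ε n a = K ε n a) : UG K' := by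
  obtain ⟨C, hC, h⟩ := h
  refine ⟨C, hC, fun ε hε B M hM hB hb => ?_⟩
  have : (fun n a => (K' ε n a : ℂ) * B n a) = (fun n a => (K ε n a : ℂ) * B n a) := by
    funext n a
    by_cases hh : 0 < a ∧ a < n
    · rw [e ε hε n a hh.1 hh.2]
    · simp [hB n a hh]
  rw [this]
  exact h ε hε B M hM hB hb

theorem UG.add {K K' : ℝ → ℤ → ℤ → ℝ} (h : UG K) (h' : UG K') :
    UG (fun ε n a => K ε n a + K' ε n a) := by
  obtain ⟨C, hC, h⟩ := h
  obtain ⟨C', hC', h'⟩ := h'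
  refine ⟨C + C', by positivity, fun ε hε B M hM hB hb S f g => ?_⟩
  have h1 := h ε hε B M hM hB hb S f g
  have h2 := h' ε hε B M hM hB hb S f g
  have : ∑ n ∈ S, ∑ a ∈ S, ((K ε n a + K' ε n a : ℝ) : ℂ) * B n a * f a * g n
      = ∑ n ∈ S, ∑ a ∈ S, (K ε n a : ℂ) * B n a * f a * g n
        + ∑ n ∈ S, ∑ a ∈ S, (K' ε n a : ℂ) * B n a * f a * g n := by
    simp only [← Finset.sum_add_distrib]
    refine Finset.sum_congr rfl fun n _ => Finset.sum_congr rfl fun a _ => ?_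
    push_cast; ring
  rw [this]
  refine (norm_add_le _ _).trans ((add_le_add h1 h2).trans (le_of_eq (by ring)))

theorem UG.mul {K K' : ℝ → ℤ → ℤ → ℝ} (h : UG K) (h' : UG K') :
    UG (fun ε n a => K ε n a * K' ε n a) := by
  obtain ⟨C, hC, h⟩ := h
  obtain ⟨C', hC', h'⟩ := h'
  refine ⟨C * C', by positivity, fun ε hε B M hM hB hb => ?_⟩
  have h2 := h' ε hε B M hM hB hb
  have h1 := h ε hε _ (C' * M) (by positivity) (fun n a hh => by simp [hB n a hh]) h2
  convert h1 using 1
  · funext n a; push_cast; ring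
  · ring

theorem UG.diagl (φ : ℝ → ℤ → ℝ) (D : ℝ)
    (h : ∀ ε ∈ Set.Ioo (0 : ℝ) 1, ∀ n : ℤ, 0 < n → |φ ε n| ≤ D) : UG (fun ε n _ => φ ε n) := by
  refine ⟨1 + D ^ 2, by positivity, fun ε hε B M hM hB hb S f g => ?_⟩
  have h1 := hb S f (fun n => (if 0 < n then φ ε n else 0 : ℝ) * g n)
  have : ∑ n ∈ S, ∑ a ∈ S, (φ ε n : ℂ) * B n a * f a * g n =
      ∑ n ∈ S, ∑ a ∈ S, B n a * f a * ((if 0 < n then φ ε n else 0 : ℝ) * g n) := by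
    refine Finset.sum_congr rfl fun n _ => Finset.sum_congr rfl fun a _ => ?_
    by_cases hn : 0 < n
    · rw [if_pos hn]; ring
    · rw [hB n a (by omega)]; simp
  rw [this]
  refine h1.trans ?_
  rw [mul_comm (1 + D ^ 2) M, mul_assoc]
  refine mul_le_mul_of_nonneg_left ?_ hM
  rw [Finset.mul_sum]
  refine Finset.sum_le_sum fun n _ => ?_
  have hd : (if 0 < n then φ ε n else 0 : ℝ) ^ 2 ≤ D ^ 2 := by
    split_ifs with hn
    · exact sq_le_sq' (by linarith [neg_abs_le (φ ε n), h ε hε n hn])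
        ((le_abs_self _).trans (h ε hε n hn))
    · simpa using sq_nonneg D
  rw [norm_mul, mul_pow, Complex.norm_real, Real.norm_eq_abs, sq_abs]
  nlinarith [sq_nonneg ‖f n‖, sq_nonneg ‖g n‖, sq_nonneg D,
    mul_le_mul_of_nonneg_right hd (sq_nonneg ‖g n‖), mul_nonneg (sq_nonneg D) (sq_nonneg ‖f n‖)]

theorem UG.diagr (φ : ℝ → ℤ → ℝ) (D : ℝ)
    (h : ∀ ε ∈ Set.Ioo (0 : ℝ) 1, ∀ n : ℤ, 0 < n → |φ ε n| ≤ D) : UG (fun ε _ a => φ ε a) := by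
  refine ⟨1 + D ^ 2, by positivity, fun ε hε B M hM hB hb S f g => ?_⟩
  have h1 := hb S (fun n => (if 0 < n then φ ε n else 0 : ℝ) * f n) g
  have : ∑ n ∈ S, ∑ a ∈ S, (φ ε a : ℂ) * B n a * f a * g n =
      ∑ n ∈ S, ∑ a ∈ S, B n a * ((if 0 < a then φ ε a else 0 : ℝ) * f a) * g n := by
    refine Finset.sum_congr rfl fun n _ => Finset.sum_congr rfl fun a _ => ?_
    by_cases hn : 0 < a
    · rw [if_pos hn]; ring
    · rw [hB n a (by omega)]; simp
  rw [this]
  refine h1.trans ?_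
  rw [mul_comm (1 + D ^ 2) M, mul_assoc]
  refine mul_le_mul_of_nonneg_left ?_ hM
  rw [Finset.mul_sum]
  refine Finset.sum_le_sum fun n _ => ?_
  have hd : (if 0 < n then φ ε n else 0 : ℝ) ^ 2 ≤ D ^ 2 := by
    split_ifs with hn
    · exact sq_le_sq' (by linarith [neg_abs_le (φ ε n), h ε hε n hn])
        ((le_abs_self _).trans (h ε hε n hn))
    · simpa using sq_nonneg D
  rw [norm_mul, mul_pow, Complex.norm_real, Real.norm_eq_abs, sq_abs]
  nlinarith [sq_nonneg ‖f n‖, sq_nonneg ‖g n‖, sq_nonneg D,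
    mul_le_mul_of_nonneg_right hd (sq_nonneg ‖f n‖), mul_nonneg (sq_nonneg D) (sq_nonneg ‖g n‖)]

theorem UG.const (c : ℝ) : UG (fun _ _ _ => c) :=
  UG.diagl (fun _ _ => c) |c| (fun _ _ _ _ => le_rfl)

theorem UG.smul {K : ℝ → ℤ → ℤ → ℝ} (c : ℝ) (h : UG K) : UG (fun ε n a => c * K ε n a) :=
  (UG.const c).mul h

theorem UG.sum {K : ℕ → ℝ → ℤ → ℤ → ℝ} (m : ℕ) (h : ∀ i < m, UG (K i)) :
    UG (fun ε n a => ∑ i ∈ Finset.range m, K i ε n a) := by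
  induction m with
  | zero => simpa using UG.const 0
  | succ m ih =>
    simp only [Finset.sum_range_succ]
    exact (ih fun i hi => h i (by omega)).add (h m (by omega))

theorem UG.pow {K : ℝ → ℤ → ℤ → ℝ} (h : UG K) (m : ℕ) : UG (fun ε n a => K ε n a ^ m) := by
  induction m with
  | zero => simpa using UG.const 1
  | succ m ih => simpa only [pow_succ] using ih.mul h

theorem UG.poly {K : ℝ → ℤ → ℤ → ℝ} (h : UG K) (p : Polynomial ℝ) :
    UG (fun ε n a => p.eval (K ε n a)) := by
  simp only [Polynomial.eval_eq_sum_range]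
  exact UG.sum (K := fun i ε n a => p.coeff i * K ε n a ^ i) _ (fun i _ => (h.pow i).smul _)

/-- Kernels given by Gram matrices. -/
theorem good_of_gram (μ : Measure ℝ) (x : ℤ → ℝ → ℝ) (K : ℤ → ℤ → ℝ) (C : ℝ)
    (hi : ∀ n m, Integrable (fun t => x n t * x m t) μ)
    (hC : ∀ n, ∫ t, x n t * x n t ∂μ ≤ C)
    (hK : ∀ n a, 0 < a → a < n → K n a = ∫ t, x n t * x a t ∂μ) : Good K C := by
  intro B M hM hB hb S f h
  have e1 : ∑ n ∈ S, ∑ a ∈ S, (K n a : ℂ) * B n a * f a * h n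
      = ∫ t, ∑ n ∈ S, ∑ a ∈ S, B n a * ((x a t : ℂ) * f a) * ((x n t : ℂ) * h n) ∂μ := by
    have hIntg : ∀ n a, Integrable
        (fun t => B n a * ((x a t : ℂ) * f a) * ((x n t : ℂ) * h n)) μ := by
      intro n a
      have := ((hi n a).ofReal (𝕜 := ℂ)).mul_const (B n a * f a * h n)
      refine this.congr (Filter.Eventually.of_forall fun t => ?_)
      simp only [RCLike.ofReal_mul, Complex.coe_algebraMap, RCLike.ofReal]
      ring
    rw [integral_finsetSum _ (fun n _ => integrable_finsetSum _ fun a _ => hIntg n a)]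
    refine Finset.sum_congr rfl fun n _ => ?_
    rw [integral_finsetSum _ (fun a _ => hIntg n a)]
    refine Finset.sum_congr rfl fun a _ => ?_
    by_cases hh : 0 < a ∧ a < n
    · rw [hK n a hh.1 hh.2, ← integral_complex_ofReal]
      rw [mul_assoc, mul_assoc, ← integral_mul_const]
      refine integral_congr_ae (Filter.Eventually.of_forall fun t => ?_)
      simp only; push_cast; ring
    · simp [hB n a hh]
  rw [e1]
  have hI : ∀ n, Integrable (fun t => x n t * x n t * (‖f n‖ ^ 2 + ‖h n‖ ^ 2)) μ :=
    fun n => (hi n n).mul_const _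
  have e2 : ‖∫ t, ∑ n ∈ S, ∑ a ∈ S, B n a * ((x a t : ℂ) * f a) * ((x n t : ℂ) * h n) ∂μ‖
      ≤ ∫ t, M * ∑ n ∈ S, x n t * x n t * (‖f n‖ ^ 2 + ‖h n‖ ^ 2) ∂μ := by
    refine norm_integral_le_of_norm_le ((integrable_finsetSum _ fun n _ => hI n).const_mul M)
      (Filter.Eventually.of_forall fun t => ?_)
    refine (hb S _ _).trans (le_of_eq ?_)
    congr 1
    refine Finset.sum_congr rfl fun n _ => ?_
    simp only [norm_mul, mul_pow, Complex.norm_real, Real.norm_eq_abs, sq_abs]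
    ring
  refine e2.trans ?_
  rw [integral_const_mul, integral_finsetSum _ fun n _ => hI n, mul_comm C M, mul_assoc]
  refine mul_le_mul_of_nonneg_left ?_ hM
  rw [Finset.mul_sum]
  refine Finset.sum_le_sum fun n _ => ?_
  rw [integral_mul_const]
  exact mul_le_mul_of_nonneg_right (hC n) (by positivity)

theorem UG.mono (r : ℝ → ℤ → ℝ) (hr : ∀ ε ∈ Set.Ioo (0 : ℝ) 1, ∀ n : ℤ, 0 < n → 0 < r ε n)
    (hm : ∀ ε ∈ Set.Ioo (0 : ℝ) 1, ∀ a n : ℤ, 0 < a → a < n → r ε a ≤ r ε n) :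
    UG (fun ε n a => r ε a / r ε n) := by
  refine ⟨1, zero_le_one, fun ε hε => ?_⟩
  have key : ∀ n m, (fun t => (Set.Ioc 0 (r ε n ^ 2)).indicator (fun _ => (r ε n)⁻¹) t
      * (Set.Ioc 0 (r ε m ^ 2)).indicator (fun _ => (r ε m)⁻¹) t)
      = (Set.Ioc 0 (min (r ε n ^ 2) (r ε m ^ 2))).indicator
        (fun _ => (r ε n)⁻¹ * (r ε m)⁻¹) := by
    intro n m
    funext t
    simp only [Set.indicator, Set.mem_Ioc, le_min_iff]
    by_cases h1 : 0 < t <;> by_cases h2 : t ≤ r ε n ^ 2 <;> by_cases h3 : t ≤ r ε m ^ 2 <;>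
      simp [h1, h2, h3]
  have key2 : ∀ n m, ∫ t, (Set.Ioc 0 (r ε n ^ 2)).indicator (fun _ => (r ε n)⁻¹) t
      * (Set.Ioc 0 (r ε m ^ 2)).indicator (fun _ => (r ε m)⁻¹) t
      = min (r ε n ^ 2) (r ε m ^ 2) * ((r ε n)⁻¹ * (r ε m)⁻¹) := by
    intro n m
    rw [key, integral_indicator_const _ measurableSet_Ioc]
    rw [Measure.real, Real.volume_Ioc, sub_zero, ENNReal.toReal_ofReal (by positivity), smul_eq_mul]
  refine good_of_gram volume
    (fun n t => (Set.Ioc 0 (r ε n ^ 2)).indicator (fun _ => (r ε n)⁻¹) t) _ 1 ?_ ?_ ?_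
  · intro n m
    rw [key]
    exact (integrable_indicator_iff measurableSet_Ioc).2 (integrableOn_const (by simp))
  · intro n
    rw [key2]
    by_cases h0 : r ε n = 0
    · simp [h0]
    · rw [min_self]; field_simp; rfl
  · intro n a ha hn
    rw [key2]
    have h1 := hr ε hε a ha
    have h2 := hr ε hε n (by omega)
    have h3 := hm ε hε a n ha hn
    rw [min_eq_right (by gcongr)]
    field_simp

/-- The symbol `1 + n²`. -/
def N (n : ℤ) : ℝ := 1 + (n : ℝ) ^ 2

theorem N_pos (n : ℤ) : 0 < N n := by unfold N; positivity

theorem N_lt {a n : ℤ} (ha : 0 < a) (h : a < n) : N a < N n := by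
  unfold N
  have h1 : (0 : ℝ) < a := by exact_mod_cast ha
  have h2 : (a : ℝ) < n := by exact_mod_cast h
  nlinarith

theorem UG.loewner (σ : ℝ) (h0 : 0 < σ) (h1 : σ < 1) :
    UG (fun _ n a => (N n ^ σ - N a ^ σ) / (N n - N a) *
      (N n ^ ((1 - σ) / 2) * N a ^ ((1 - σ) / 2))) := by
  have hσ : σ ∈ Set.Ioo (0 : ℝ) 1 := ⟨h0, h1⟩
  set c : ℝ := ∫ t in Set.Ioi (0 : ℝ), Real.rpowIntegrand₀₁ σ t 1 with hc
  have hI : ∀ y : ℝ, 0 ≤ y → ∫ t in Set.Ioi (0 : ℝ), Real.rpowIntegrand₀₁ σ t y = y ^ σ * c :=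
    fun y hy => Real.integral_rpowIntegrand₀₁_eq_rpow_mul_const hσ hy
  have hIntg : ∀ y : ℝ, 0 ≤ y → IntegrableOn (fun t => Real.rpowIntegrand₀₁ σ t y) (Set.Ioi 0) :=
    fun y hy => Real.integrableOn_rpowIntegrand₀₁_Ioi hσ hy
  have hcpos : 0 < c := Real.integral_rpowIntegrand₀₁_one_pos hσ
  set x : ℤ → ℝ → ℝ := fun n t => N n ^ ((1 - σ) / 2) * (t ^ (σ / 2) / (t + N n)) with hx
  have hxx : ∀ n m, ∀ t ∈ Set.Ioi (0 : ℝ), x n t * x m t =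
      (N n ^ ((1 - σ) / 2) * N m ^ ((1 - σ) / 2)) * (t ^ σ / ((t + N n) * (t + N m))) := by
    intro n m t ht
    have : t ^ σ = t ^ (σ / 2) * t ^ (σ / 2) := by
      rw [← Real.rpow_add ht]; congr 1; ring
    simp only [hx]
    rw [this]
    field_simp
  have hle : ∀ n m, ∀ t ∈ Set.Ioi (0 : ℝ), t ^ σ / ((t + N n) * (t + N m)) ≤
      Real.rpowIntegrand₀₁ σ t (N n) * (N n)⁻¹ := by
    intro n m t ht
    have ht' : 0 < t := ht
    have := N_pos n
    have := N_pos m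
    unfold Real.rpowIntegrand₀₁
    have e : t ^ σ * (t⁻¹ - (t + N n)⁻¹) * (N n)⁻¹ = t ^ σ / ((t + N n) * t) := by
      field_simp; ring
    rw [e]
    gcongr
    linarith
  have hmeas : ∀ n m, AEStronglyMeasurable (fun t : ℝ => t ^ σ / ((t + N n) * (t + N m)))
      (volume.restrict (Set.Ioi (0 : ℝ))) := by
    intro n m
    exact (Measurable.aestronglyMeasurable (by fun_prop))
  have hIntg2 : ∀ n m, IntegrableOn (fun t : ℝ => t ^ σ / ((t + N n) * (t + N m))) (Set.Ioi 0) := by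
    intro n m
    refine Integrable.mono' ((hIntg (N n) (N_pos n).le).mul_const (N n)⁻¹) (hmeas n m) ?_
    refine (ae_restrict_mem measurableSet_Ioi).mono fun t ht => ?_
    have ht' : 0 < t := ht
    have := N_pos n
    have := N_pos m
    rw [Real.norm_of_nonneg (by positivity)]
    exact hle n m t ht
  have hval : ∀ n m, ∫ t in Set.Ioi (0 : ℝ), x n t * x m t =
      (N n ^ ((1 - σ) / 2) * N m ^ ((1 - σ) / 2)) *
        ∫ t in Set.Ioi (0 : ℝ), t ^ σ / ((t + N n) * (t + N m)) := by
    intro n m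
    rw [← integral_const_mul]
    exact setIntegral_congr_fun measurableSet_Ioi (hxx n m)
  have hbase : UG (fun _ n a => ∫ t in Set.Ioi (0 : ℝ), x n t * x a t) := by
    refine ⟨c, hcpos.le, fun ε hε => ?_⟩
    refine good_of_gram (volume.restrict (Set.Ioi 0)) x _ c ?_ ?_ (fun _ _ _ _ => rfl)
    · intro n m
      have := (hIntg2 n m).const_mul (N n ^ ((1 - σ) / 2) * N m ^ ((1 - σ) / 2))
      exact this.congr ((ae_restrict_mem measurableSet_Ioi).mono fun t ht => (hxx n m t ht).symm)
    · intro n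
      rw [hval]
      have hN := N_pos n
      have h2 : ∫ t in Set.Ioi (0 : ℝ), t ^ σ / ((t + N n) * (t + N n)) ≤
          N n ^ σ * c * (N n)⁻¹ := by
        rw [← hI (N n) hN.le, ← integral_mul_const]
        exact setIntegral_mono_on (hIntg2 n n) ((hIntg (N n) hN.le).mul_const _) measurableSet_Ioi
          (hle n n)
      refine (mul_le_mul_of_nonneg_left h2 (by positivity)).trans (le_of_eq ?_)
      rw [← Real.rpow_add hN]
      have : N n ^ ((1 - σ) / 2 + (1 - σ) / 2) * (N n ^ σ * c * (N n)⁻¹)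
        = (N n ^ ((1 - σ) / 2 + (1 - σ) / 2) * N n ^ σ * N n ^ (-1 : ℝ)) * c := by
        rw [Real.rpow_neg_one]; ring
      rw [this, ← Real.rpow_add hN, ← Real.rpow_add hN]
      have : (1 - σ) / 2 + (1 - σ) / 2 + σ + -1 = 0 := by ring
      rw [this]; simp
  refine (hbase.smul c⁻¹).congr fun ε hε n a ha hn => ?_
  rw [hval]
  have hlt := N_lt ha hn
  have h3 : (N n - N a) * ∫ t in Set.Ioi (0 : ℝ), t ^ σ / ((t + N n) * (t + N a))
      = N n ^ σ * c - N a ^ σ * c := by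
    rw [← hI _ (N_pos n).le, ← hI _ (N_pos a).le, ← integral_const_mul,
      ← integral_sub (hIntg _ (N_pos n).le) (hIntg _ (N_pos a).le)]
    refine setIntegral_congr_fun measurableSet_Ioi fun t ht => ?_
    have ht' : 0 < t := ht
    have := N_pos n
    have := N_pos a
    simp only [Real.rpowIntegrand₀₁]
    field_simp
    ring
  have h4 : ∫ t in Set.Ioi (0 : ℝ), t ^ σ / ((t + N n) * (t + N a))
      = (N n ^ σ - N a ^ σ) / (N n - N a) * c := by
    have : N n - N a ≠ 0 := by linarith
    field_simp
    linarith
  rw [h4]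
  field_simp

end Sch

namespace Sch

theorem exists_poly (R : ℕ) (hR : 1 ≤ R) : ∃ q p : Polynomial ℝ,
    (∀ x : ℝ, x ^ R * q.eval x + (1 - x) * p.eval x = 1) ∧
    (∀ x : ℝ, x ^ R * q.eval x + (1 - x) ^ R * q.eval (1 - x) = 1) := by
  have hc : IsCoprime ((Polynomial.X : Polynomial ℝ) ^ R) ((1 - Polynomial.X) ^ R) := by
    apply IsCoprime.pow
    exact ⟨1, 1, by ring⟩
  obtain ⟨u, v, huv⟩ := hc
  have huv' : ∀ x : ℝ, u.eval x * x ^ R + v.eval x * (1 - x) ^ R = 1 := by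
    intro x
    have := congrArg (Polynomial.eval x) huv
    simpa using this
  set q : Polynomial ℝ := Polynomial.C (1 / 2) * (u + v.comp (1 - Polynomial.X)) with hq
  have hqe : ∀ x, q.eval x = 1 / 2 * (u.eval x + v.eval (1 - x)) := by
    intro x; simp [hq]
  have h2 : ∀ x : ℝ, x ^ R * q.eval x + (1 - x) ^ R * q.eval (1 - x) = 1 := by
    intro x
    have h1 := huv' x
    have h2 := huv' (1 - x)
    rw [hqe, hqe]
    rw [show 1 - (1 - x) = x by ring] at *
    linear_combination h1 / 2 + h2 / 2
  refine ⟨q, (1 - Polynomial.X) ^ (R - 1) * q.comp (1 - Polynomial.X), fun x => ?_, h2⟩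
  have h3 := h2 x
  obtain ⟨k, rfl⟩ : ∃ k, R = k + 1 := ⟨R - 1, by omega⟩
  simp only [add_tsub_cancel_right, Polynomial.eval_mul, Polynomial.eval_pow, Polynomial.eval_sub,
    Polynomial.eval_one, Polynomial.eval_X, Polynomial.eval_comp]
  linear_combination h3

/-- The symbol `1 + ε² n²`. -/
def E (ε : ℝ) (n : ℤ) : ℝ := 1 + ε ^ 2 * (n : ℝ) ^ 2

theorem E_pos (ε : ℝ) (n : ℤ) : 0 < E ε n := by unfold E; positivity

/-- Square root of the mollified weight. -/
def V (s ε : ℝ) (n : ℤ) : ℝ := N n ^ (s / 2) / E ε n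

theorem V_pos (s ε : ℝ) (n : ℤ) : 0 < V s ε n :=
  div_pos (Real.rpow_pos_of_pos (N_pos n) _) (E_pos ε n)

theorem ug_x : UG (fun _ n a => (a : ℝ) / n) := by
  refine UG.mono (fun _ n => (n : ℝ)) (fun ε _ n hn => by exact_mod_cast hn)
    (fun ε _ a n _ h => by exact_mod_cast h.le)

theorem ug_e : UG (fun ε n a => E ε a / E ε n) := by
  refine UG.mono E (fun ε _ n _ => E_pos ε n) (fun ε _ a n h0 h => ?_)
  have h1 : (0 : ℝ) < a := by exact_mod_cast h0
  have h2 : (a : ℝ) < n := by exact_mod_cast h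
  unfold E
  gcongr

theorem ug_Ninv (e : ℝ) (he : 0 ≤ e) : UG (fun _ n a => N a ^ e / N n ^ e) := by
  refine UG.mono (fun _ n => N n ^ e) (fun ε _ n _ => Real.rpow_pos_of_pos (N_pos n) _)
    (fun ε _ a n h0 h => ?_)
  exact Real.rpow_le_rpow (N_pos a).le (N_lt h0 h).le he

theorem ug_xY : UG (fun _ n a => ((a : ℝ) / n) ^ 2 * (N n / N a)) := by
  have h1 : UG (fun _ n _ => N n / (n : ℝ) ^ 2) := by
    refine UG.diagl (fun _ n => N n / (n : ℝ) ^ 2) 2 fun ε _ n hn => ?_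
    have h1 : (1 : ℝ) ≤ n := by exact_mod_cast hn
    rw [abs_of_nonneg (by have := N_pos n; positivity), div_le_iff₀ (by positivity)]
    unfold N; nlinarith
  have h2 : UG (fun _ _ a => (a : ℝ) ^ 2 / N a) := by
    refine UG.diagr (fun _ n => (n : ℝ) ^ 2 / N n) 1 fun ε _ n hn => ?_
    have := N_pos n
    rw [abs_of_nonneg (by positivity), div_le_iff₀ (by positivity)]
    unfold N; linarith
  refine (h1.mul h2).congr fun ε _ n a ha hn => ?_
  have := N_pos n
  have := N_pos a
  have h1 : (0 : ℝ) < a := by exact_mod_cast ha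
  have h2 : (a : ℝ) < n := by exact_mod_cast hn
  have h3 : (0 : ℝ) < n := by linarith
  field_simp

theorem ug_XY (J : ℕ) (e : ℝ) (he : e ≤ J) :
    UG (fun _ n a => ((a : ℝ) / n) ^ (2 * J) * (N n / N a) ^ e) := by
  refine ((ug_xY.pow J).mul (ug_Ninv (J - e) (by linarith))).congr fun ε _ n a ha hn => ?_
  have hn := N_pos n
  have ha := N_pos a
  rw [← Real.div_rpow ha.le hn.le, ← inv_div (N n) (N a), Real.inv_rpow (by positivity),
    ← Real.rpow_neg (by positivity), mul_pow, ← pow_mul, mul_assoc, ← Real.rpow_natCast (N n / N a),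
    ← Real.rpow_add (by positivity)]
  congr 2; ring

theorem ug_ρ (s : ℝ) (hs : 7 / 2 < s) : UG (fun ε n a => V s ε a / V s ε n) := by
  have h1 : UG (fun ε n a => (N a / E ε a) / (N n / E ε n)) := by
    refine UG.mono (fun ε n => N n / E ε n) (fun ε _ n _ => div_pos (N_pos n) (E_pos ε n))
      (fun ε hε a n h0 h => ?_)
    rw [div_le_div_iff₀ (E_pos _ _) (E_pos _ _)]
    have h1 : (0 : ℝ) < a := by exact_mod_cast h0
    have h2 : (a : ℝ) < n := by exact_mod_cast h
    have h3 : ε ^ 2 ≤ 1 := by nlinarith [hε.1, hε.2]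
    have h4 : (a : ℝ) ^ 2 ≤ (n : ℝ) ^ 2 := by gcongr
    unfold N E
    nlinarith
  refine (h1.mul (ug_Ninv (s / 2 - 1) (by linarith))).congr fun ε _ n a ha hn => ?_
  have hn := N_pos n
  have ha := N_pos a
  have := E_pos ε n
  have := E_pos ε a
  unfold V
  rw [Real.rpow_sub_one hn.ne', Real.rpow_sub_one ha.ne']
  have := Real.rpow_pos_of_pos hn (s / 2)
  have := Real.rpow_pos_of_pos ha (s / 2)
  field_simp

theorem ug_main (s : ℝ) (hs : 7 / 2 < s) (J : ℕ) (hJ : (s + 1) / 2 ≤ J) :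
    UG (fun ε n a => ((a : ℝ) / n) ^ (2 * J) * (V s ε n / V s ε a - V s ε a / V s ε n) /
      (1 - (a : ℝ) / n)) := by
  obtain ⟨m, hm⟩ := exists_nat_gt s
  have hm0 : (0 : ℝ) < m := by linarith
  set σ : ℝ := s / m with hσ
  have hσ0 : 0 < σ := by positivity
  have hσ1 : σ < 1 := by rw [hσ, div_lt_one hm0]; exact hm
  have hmσ : (m : ℝ) * σ = s := by rw [hσ]; field_simp
  have hJ1 : 1 ≤ J := by
    by_contra h
    have : J = 0 := by omega
    subst this
    norm_num at hJ
    linarith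
  have hdn : UG (fun _ n _ => (n : ℝ) ^ 2 / N n) := by
    refine UG.diagl (fun _ n => (n : ℝ) ^ 2 / N n) 1 fun ε _ n hn => ?_
    have := N_pos n
    rw [abs_of_nonneg (by positivity), div_le_iff₀ (by positivity)]
    unfold N; linarith
  have hda : UG (fun ε _ a => ε ^ 2 * (a : ℝ) ^ 2 / E ε a) := by
    refine UG.diagr (fun ε a => ε ^ 2 * (a : ℝ) ^ 2 / E ε a) 1 fun ε _ n hn => ?_
    have := E_pos ε n
    rw [abs_of_nonneg (by positivity), div_le_iff₀ (by positivity)]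
    unfold E; linarith
  have h1x : UG (fun _ n a => 1 + (a : ℝ) / n) := (UG.const 1).add ug_x
  have hS : UG (fun _ n a => ∑ k ∈ Finset.range m, ((a : ℝ) / n) ^ (2 * J) *
      (N n / N a) ^ (-s / 2 + k * σ + (1 + σ) / 2)) := by
    refine UG.sum (K := fun k _ n a => ((a : ℝ) / n) ^ (2 * J) *
      (N n / N a) ^ (-s / 2 + k * σ + (1 + σ) / 2)) m fun k hk => ug_XY J _ ?_
    have : (k : ℝ) + 1 ≤ m := by exact_mod_cast hk
    nlinarith
  have hfirst := (((ug_e.mul (UG.loewner σ hσ0 hσ1)).mul hdn).mul h1x).mul hS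
  have hsecond := (((((ug_Ninv (s / 2) (by linarith)).mul ((UG.const 1).add ug_e)).mul h1x).mul
    hda).mul (ug_x.pow (2 * J - 2))).smul (-1)
  refine (hfirst.add hsecond).congr fun ε hε n a ha hn => ?_
  have hNn := N_pos n
  have hNa := N_pos a
  have hlt := N_lt ha hn
  have hEn := E_pos ε n
  have hEa := E_pos ε a
  have h1 : (0 : ℝ) < a := by exact_mod_cast ha
  have h2 : (a : ℝ) < n := by exact_mod_cast hn
  have h3 : (0 : ℝ) < n := by linarith
  have hx1 : (1 : ℝ) - a / n ≠ 0 := by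
    have : (a : ℝ) / n < 1 := by rw [div_lt_one h3]; exact h2
    linarith
  set Y : ℝ := N n / N a with hY
  have hYp : 0 < Y := by positivity
  set x : ℝ := (a : ℝ) / n with hx
  -- the geometric sum
  have hgeom : (Y ^ σ - 1) * ∑ k ∈ Finset.range m, Y ^ (k * σ) = Y ^ s - 1 := by
    have := mul_geom_sum (Y ^ σ) m
    rw [← Real.rpow_natCast (Y ^ σ), ← Real.rpow_mul hYp.le, mul_comm σ, hmσ] at this
    rw [← this]
    congr 1
    refine Finset.sum_congr rfl fun k _ => ?_
    rw [← Real.rpow_natCast (Y ^ σ), ← Real.rpow_mul hYp.le, mul_comm σ]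
  have hnx : N n - N a = (n : ℝ) ^ 2 * (1 - x) * (1 + x) := by
    rw [hx]; unfold N; field_simp; ring
  have hL : (N n ^ σ - N a ^ σ) / (N n - N a) * (N n ^ ((1 - σ) / 2) * N a ^ ((1 - σ) / 2)) *
      ((n : ℝ) ^ 2 / N n) * (1 + x) * Y ^ ((1 + σ) / 2) = (Y ^ σ - 1) / (1 - x) := by
    have hx2 : (1 : ℝ) + x ≠ 0 := by positivity
    have e1 : N n ^ σ - N a ^ σ = N a ^ σ * (Y ^ σ - 1) := by
      rw [hY, Real.div_rpow hNn.le hNa.le]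
      have := Real.rpow_pos_of_pos hNa σ
      field_simp
    have e2 : N n ^ ((1 - σ) / 2) * (N n)⁻¹ * N n ^ ((1 + σ) / 2) = 1 := by
      rw [← Real.rpow_neg_one, ← Real.rpow_add hNn, ← Real.rpow_add hNn]
      rw [show (1 - σ) / 2 + -1 + (1 + σ) / 2 = 0 by ring, Real.rpow_zero]
    have e3 : N a ^ σ * N a ^ ((1 - σ) / 2) * (N a ^ ((1 + σ) / 2))⁻¹ = 1 := by
      rw [← Real.rpow_neg hNa.le, ← Real.rpow_add hNa, ← Real.rpow_add hNa]
      rw [show σ + (1 - σ) / 2 + -((1 + σ) / 2) = 0 by ring, Real.rpow_zero]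
    have e4 : Y ^ ((1 + σ) / 2) = N n ^ ((1 + σ) / 2) * (N a ^ ((1 + σ) / 2))⁻¹ := by
      rw [hY, Real.div_rpow hNn.le hNa.le, div_eq_mul_inv]
    rw [e1, hnx, e4]
    calc _ = (N n ^ ((1 - σ) / 2) * (N n)⁻¹ * N n ^ ((1 + σ) / 2)) *
          (N a ^ σ * N a ^ ((1 - σ) / 2) * (N a ^ ((1 + σ) / 2))⁻¹) *
          ((Y ^ σ - 1) / (1 - x)) := by
          field_simp
      _ = _ := by rw [e2, e3]; ring
  have hsum : ∑ k ∈ Finset.range m, x ^ (2 * J) * Y ^ (-s / 2 + k * σ + (1 + σ) / 2)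
      = x ^ (2 * J) * Y ^ (-s / 2) * Y ^ ((1 + σ) / 2) * ∑ k ∈ Finset.range m, Y ^ (k * σ) := by
    rw [Finset.mul_sum]
    refine Finset.sum_congr rfl fun k _ => ?_
    rw [Real.rpow_add hYp, Real.rpow_add hYp]; ring
  have hF : E ε a / E ε n * ((N n ^ σ - N a ^ σ) / (N n - N a) *
      (N n ^ ((1 - σ) / 2) * N a ^ ((1 - σ) / 2))) * ((n : ℝ) ^ 2 / N n) * (1 + x) *
      ∑ k ∈ Finset.range m, x ^ (2 * J) * Y ^ (-s / 2 + k * σ + (1 + σ) / 2)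
      = E ε a / E ε n * x ^ (2 * J) * Y ^ (-s / 2) * (Y ^ s - 1) / (1 - x) := by
    rw [hsum, ← hgeom]
    calc _ = E ε a / E ε n * x ^ (2 * J) * Y ^ (-s / 2) * (∑ k ∈ Finset.range m, Y ^ (k * σ)) *
        ((N n ^ σ - N a ^ σ) / (N n - N a) * (N n ^ ((1 - σ) / 2) * N a ^ ((1 - σ) / 2)) *
      ((n : ℝ) ^ 2 / N n) * (1 + x) * Y ^ ((1 + σ) / 2)) := by ring
      _ = _ := by rw [hL]; ring
  rw [hF]
  have hρ : V s ε n / V s ε a = Y ^ (-s / 2) * Y ^ s * (E ε a / E ε n) := by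
    rw [← Real.rpow_add hYp, show -s / 2 + s = s / 2 by ring, hY, Real.div_rpow hNn.le hNa.le]
    unfold V
    have := Real.rpow_pos_of_pos hNa (s / 2)
    field_simp
  have hYs : N a ^ (s / 2) / N n ^ (s / 2) = Y ^ (-s / 2) := by
    rw [show -s / 2 = -(s / 2) by ring, Real.rpow_neg hYp.le, hY, Real.div_rpow hNn.le hNa.le,
      inv_div]
  have hρ' : V s ε a / V s ε n = Y ^ (-s / 2) * (E ε n / E ε a) := by
    rw [← hYs]
    unfold V
    have := Real.rpow_pos_of_pos hNn (s / 2)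
    field_simp
  rw [hρ, hρ', hYs]
  have hEE : E ε n - E ε a = ε ^ 2 * (n : ℝ) ^ 2 * (1 - x) * (1 + x) := by
    rw [hx]; unfold E; field_simp; ring
  have hxa : (a : ℝ) = x * n := by rw [hx]; field_simp
  have hpow : x ^ (2 * J) = x ^ (2 * J - 2) * x ^ 2 := by
    rw [← pow_add]; congr 1; omega
  have hsec : x ^ 2 * (E ε a / E ε n - E ε n / E ε a) / (1 - x) =
      -1 * ((1 + E ε a / E ε n) * (1 + x) * (ε ^ 2 * (a : ℝ) ^ 2 / E ε a)) := by
    have e : E ε a / E ε n - E ε n / E ε a =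
        - ((1 + E ε a / E ε n) * ((E ε n - E ε a) / E ε a)) := by
      field_simp; ring
    rw [e, hEE, hxa]
    field_simp
  calc x ^ (2 * J) * (Y ^ (-s / 2) * Y ^ s * (E ε a / E ε n) - Y ^ (-s / 2) * (E ε n / E ε a)) /
      (1 - x) = E ε a / E ε n * x ^ (2 * J) * Y ^ (-s / 2) * (Y ^ s - 1) / (1 - x) +
        Y ^ (-s / 2) * x ^ (2 * J - 2) *
          (x ^ 2 * (E ε a / E ε n - E ε n / E ε a) / (1 - x)) := by
        rw [hpow]; ring
    _ = _ := by rw [hsec]; ring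

/-- The full kernel. -/
theorem ug_kernel (s : ℝ) (hs : 7 / 2 < s) : ∃ η : ℝ → ℝ, (∀ x, η x + η (1 - x) = 1) ∧
    (∃ D, ∀ x ∈ Set.Icc (0 : ℝ) 1, |η x| ≤ D) ∧
    UG (fun ε n a => (V s ε n ^ 2 * n * η ((a : ℝ) / n) - V s ε a ^ 2 * a
      - 2 * V s ε a ^ 2 * (n - a)) / ((n - a) * (V s ε a * V s ε n))) := by
  obtain ⟨J, hJ⟩ := exists_nat_ge ((s + 1) / 2)
  have hJ1 : 1 ≤ J := by
    by_contra h
    have : J = 0 := by omega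
    subst this
    norm_num at hJ
    linarith
  obtain ⟨q, p, h1, h2⟩ := exists_poly (2 * J) (by omega)
  refine ⟨fun x => x ^ (2 * J) * q.eval x, h2, ?_, ?_⟩
  · have hc : Continuous fun x : ℝ => |x ^ (2 * J) * q.eval x| :=
      ((continuous_pow _).mul q.continuous).abs
    obtain ⟨D, hD⟩ := (isCompact_Icc (a := (0 : ℝ)) (b := 1)).bddAbove_image hc.continuousOn
    exact ⟨D, fun x hx => hD (Set.mem_image_of_mem _ hx)⟩
  have hq := ug_x.poly q
  have hp := ug_x.poly p
  have hρ := ug_ρ s hs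
  refine ((((hq.mul (ug_main s hs J hJ))).add (((ug_x.pow (2 * J)).mul hq).mul hρ)).add
    (((hρ.mul ug_x).mul hp).smul (-1)) |>.add (hρ.smul (-2))).congr fun ε hε n a ha hn => ?_
  have h1a : (0 : ℝ) < a := by exact_mod_cast ha
  have h2a : (a : ℝ) < n := by exact_mod_cast hn
  have h3a : (0 : ℝ) < n := by linarith
  have hva := V_pos s ε a
  have hvn := V_pos s ε n
  have h1x := h1 ((a : ℝ) / n)
  beta_reduce
  set x : ℝ := (a : ℝ) / n with hx
  have hxa : (a : ℝ) = x * n := by rw [hx]; field_simp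
  have hx1 : (1 : ℝ) - x ≠ 0 := by
    have : x < 1 := by rw [hx, div_lt_one h3a]; exact h2a
    linarith
  have hpe : p.eval x = (1 - x ^ (2 * J) * q.eval x) / (1 - x) := by
    field_simp; linarith
  rw [hpe, hxa]
  generalize x ^ (2 * J) = Z
  generalize q.eval x = Q
  generalize V s ε a = va at *
  generalize V s ε n = vn at *
  have : (n : ℝ) - x * n = n * (1 - x) := by ring
  rw [this]
  field_simp
  ring

end Sch

namespace Sch
open MeasureTheory

/-- The exponential `e^{ikx}`. -/
def ex (k : ℤ) (x : ℝ) : ℂ := Complex.exp (Complex.I * (k : ℂ) * (x : ℂ))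

theorem ex_cont (k : ℤ) : Continuous (ex k) := by unfold ex; fun_prop

theorem ex_norm (k : ℤ) (x : ℝ) : ‖ex k x‖ = 1 := by
  unfold ex
  rw [show Complex.I * (k : ℂ) * (x : ℂ) = ((k * x : ℝ) : ℂ) * Complex.I by push_cast; ring]
  exact Complex.norm_exp_ofReal_mul_I _

theorem ex_mul (j k : ℤ) (x : ℝ) : ex j x * ex k x = ex (j + k) x := by
  unfold ex
  rw [← Complex.exp_add]; congr 1; push_cast; ring

theorem ex_conj (k : ℤ) (x : ℝ) : (starRingEnd ℂ) (ex k x) = ex (-k) x := by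
  unfold ex
  rw [← Complex.exp_conj]; congr 1; simp

theorem ex_int (k : ℤ) : ∫ x in (0 : ℝ)..(2 * Real.pi), ex k x = if k = 0 then (2 * Real.pi : ℂ) else 0 := by
  split_ifs with h
  · subst h; simp [ex]
  · unfold ex
    have hk : Complex.I * (k : ℂ) ≠ 0 := by simp [h]
    rw [integral_exp_mul_complex hk]
    have : Complex.I * (k : ℂ) * ((2 * Real.pi : ℝ) : ℂ) = k * (2 * Real.pi * Complex.I) := by
      push_cast; ring
    rw [this, Complex.exp_int_mul_two_pi_mul_I]
    simp

theorem eval_int (γ : FC) (hγ : Summable fun k => ‖γ k‖) (m : ℤ) :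
    ∫ x in (0 : ℝ)..(2 * Real.pi), FC.eval γ x * ex (-m) x = 2 * Real.pi * γ m := by
  have h := intervalIntegral.hasSum_integral_of_dominated_convergence (a := 0) (b := 2 * Real.pi)
    (μ := volume)
    (F := fun (k : ℤ) (x : ℝ) => γ k * ex k x * ex (-m) x)
    (f := fun x => FC.eval γ x * ex (-m) x) (fun k _ => ‖γ k‖)
    (fun k => by
      have := ex_cont k
      have := ex_cont (-m)
      exact Continuous.aestronglyMeasurable (by fun_prop))
    (fun k => Filter.Eventually.of_forall fun x _ => by
      rw [norm_mul, norm_mul, ex_norm, ex_norm, mul_one, mul_one])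
    (Filter.Eventually.of_forall fun x _ => hγ)
    (by simp)
    (Filter.Eventually.of_forall fun x _ => by
      have : Summable fun k => γ k * ex k x := by
        refine Summable.of_norm ?_
        simpa [ex_norm] using hγ
      exact this.hasSum.mul_right _)
  have h2 : ∀ k : ℤ, ∫ x in (0 : ℝ)..(2 * Real.pi), γ k * ex k x * ex (-m) x
      = if k = m then 2 * Real.pi * γ m else 0 := by
    intro k
    simp only [mul_assoc, ex_mul]
    rw [intervalIntegral.integral_const_mul, ex_int]
    by_cases hk : k = m
    · subst hk; simp; ring
    · rw [if_neg (by omega), if_neg hk, mul_zero]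
  simp only [h2] at h
  exact h.unique (hasSum_ite_eq m _)

theorem eval_cont (γ : FC) (hγ : Summable fun k => ‖γ k‖) : Continuous (FC.eval γ) := by
  refine continuous_tsum (u := fun k => ‖γ k‖) (fun k => ?_) hγ (fun k x => ?_)
  · have := ex_cont k
    exact continuous_const.mul this
  · have := ex_norm k x
    unfold ex at this
    rw [norm_mul, this, mul_one]

theorem parseval (S : Finset ℤ) (f : ℤ → ℂ) (σ : ℤ → ℤ) (hσ : Function.Injective σ) :
    ∫ x in (0 : ℝ)..(2 * Real.pi), ‖∑ a ∈ S, f a * ex (σ a) x‖ ^ 2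
      = 2 * Real.pi * ∑ a ∈ S, ‖f a‖ ^ 2 := by
  have e1 : ∀ x : ℝ, ((‖∑ a ∈ S, f a * ex (σ a) x‖ ^ 2 : ℝ) : ℂ) =
      ∑ a ∈ S, ∑ b ∈ S, (f a * (starRingEnd ℂ) (f b)) * ex (σ a - σ b) x := by
    intro x
    rw [Complex.ofReal_pow, ← Complex.mul_conj', map_sum, Finset.sum_mul_sum]
    refine Finset.sum_congr rfl fun a _ => Finset.sum_congr rfl fun b _ => ?_
    rw [map_mul, ex_conj, sub_eq_add_neg, ← ex_mul]; ring
  have hc : ∀ (z : ℂ) k, IntervalIntegrable (fun x => z * ex k x) volume 0 (2 * Real.pi) :=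
    fun z k => (continuous_const.mul (ex_cont k)).intervalIntegrable _ _
  have hc2 : ∀ a, IntervalIntegrable (fun x => ∑ b ∈ S, (f a * (starRingEnd ℂ) (f b)) *
      ex (σ a - σ b) x) volume 0 (2 * Real.pi) := fun a =>
    (continuous_finsetSum _ fun b _ => continuous_const.mul (ex_cont _)).intervalIntegrable _ _
  apply Complex.ofReal_injective
  rw [← intervalIntegral.integral_ofReal]
  simp only [e1]
  rw [intervalIntegral.integral_finsetSum fun a _ => hc2 a]
  push_cast
  rw [Finset.mul_sum]
  refine Finset.sum_congr rfl fun a ha => ?_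
  rw [intervalIntegral.integral_finsetSum fun b _ => hc _ _]
  have : ∀ b ∈ S, ∫ x in (0 : ℝ)..(2 * Real.pi), (f a * (starRingEnd ℂ) (f b)) * ex (σ a - σ b) x
      = if b = a then 2 * Real.pi * (f a * (starRingEnd ℂ) (f a)) else 0 := by
    intro b _
    rw [intervalIntegral.integral_const_mul, ex_int]
    by_cases hb : b = a
    · subst hb; simp; ring
    · rw [if_neg (fun h => hb (hσ (by omega))), if_neg hb, mul_zero]
  rw [Finset.sum_congr rfl this, Finset.sum_ite_eq' S a, if_pos ha, Complex.mul_conj']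

theorem toeplitz (γ : FC) (hγ : Summable fun k => ‖γ k‖) (G : ℝ)
    (hG : ∀ x, ‖FC.eval γ x‖ ≤ G) : Bd (fun n a => γ (n - a)) G := by
  intro S f h
  have hG0 : 0 ≤ G := (norm_nonneg _).trans (hG 0)
  set P : ℝ → ℂ := fun x => ∑ a ∈ S, f a * ex a x with hP
  set Q : ℝ → ℂ := fun x => ∑ n ∈ S, h n * ex (-n) x with hQ
  have hPc : Continuous P := continuous_finsetSum _ fun b _ => continuous_const.mul (ex_cont _)
  have hQc : Continuous Q := continuous_finsetSum _ fun b _ => continuous_const.mul (ex_cont _)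
  have hgc := eval_cont γ hγ
  have e1 : ∫ x in (0 : ℝ)..(2 * Real.pi), FC.eval γ x * (P x * Q x)
      = 2 * Real.pi * ∑ n ∈ S, ∑ a ∈ S, γ (n - a) * f a * h n := by
    have e2 : ∀ x, FC.eval γ x * (P x * Q x) =
        ∑ n ∈ S, ∑ a ∈ S, (f a * h n) * (FC.eval γ x * ex (-(n - a)) x) := by
      intro x
      simp only [hP, hQ]
      rw [Finset.sum_mul_sum, Finset.sum_comm, Finset.mul_sum]
      refine Finset.sum_congr rfl fun n _ => ?_
      rw [Finset.mul_sum]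
      refine Finset.sum_congr rfl fun a _ => ?_
      rw [show -(n - a) = a + -n by ring, ← ex_mul]; ring
    have hcc : ∀ n a, Continuous fun x => (f a * h n) * (FC.eval γ x * ex (-(n - a)) x) :=
      fun n a => continuous_const.mul (hgc.mul (ex_cont _))
    simp only [e2]
    rw [intervalIntegral.integral_finsetSum fun n _ =>
      (continuous_finsetSum _ fun a _ => hcc n a).intervalIntegrable _ _, Finset.mul_sum]
    refine Finset.sum_congr rfl fun n _ => ?_
    rw [intervalIntegral.integral_finsetSum fun a _ => (hcc n a).intervalIntegrable _ _,
      Finset.mul_sum]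
    refine Finset.sum_congr rfl fun a _ => ?_
    rw [intervalIntegral.integral_const_mul, eval_int γ hγ]
    ring
  have e3 : ‖∫ x in (0 : ℝ)..(2 * Real.pi), FC.eval γ x * (P x * Q x)‖ ≤
      ∫ x in (0 : ℝ)..(2 * Real.pi), G * (‖P x‖ ^ 2 + ‖Q x‖ ^ 2) := by
    refine intervalIntegral.norm_integral_le_of_norm_le (by positivity)
      (Filter.Eventually.of_forall fun x _ => ?_)
      (Continuous.intervalIntegrable (by fun_prop) _ _)
    rw [norm_mul, norm_mul]
    refine mul_le_mul (hG x) ?_ (by positivity) hG0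
    nlinarith [sq_nonneg (‖P x‖ - ‖Q x‖), sq_nonneg ‖P x‖, sq_nonneg ‖Q x‖]
  rw [e1, intervalIntegral.integral_const_mul, intervalIntegral.integral_add
    (Continuous.intervalIntegrable (by fun_prop) _ _)
    (Continuous.intervalIntegrable (by fun_prop) _ _)] at e3
  have p1 := parseval S f (fun a => a) (fun _ _ h => h)
  have p2 := parseval S h (fun a => -a) (fun _ _ h => neg_injective h)
  simp only [hP, hQ] at e3
  rw [p1, p2, norm_mul] at e3
  have hpi : ‖(2 * Real.pi : ℂ)‖ = 2 * Real.pi := by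
    rw [show (2 * Real.pi : ℂ) = ((2 * Real.pi : ℝ) : ℂ) by push_cast; rfl, Complex.norm_real,
      Real.norm_of_nonneg (by positivity)]
  rw [hpi] at e3
  rw [Finset.sum_add_distrib]
  have h2 : 0 < 2 * Real.pi := by positivity
  refine le_of_mul_le_mul_left (e3.trans (le_of_eq (by ring))) h2

/-- Positive-frequency part of `-i ∂ₓ θ`. -/
def gam (c : FC) : FC := fun k => if 0 < k then (k : ℂ) * c k else 0

theorem gam_bound (c : FC) (hc : Summable fun k : ℤ => |(k : ℝ)| * ‖c k‖) (x : ℝ) :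
    ‖FC.eval (gam c) x‖ ≤ FC.linfty (FC.D1 c) + FC.linfty (FC.hilbert (FC.D1 c)) := by
  have n1 : ∀ k, ‖FC.D1 c k‖ = |(k : ℝ)| * ‖c k‖ := by
    intro k; simp [FC.D1]
  have n2 : ∀ k, ‖FC.hilbert (FC.D1 c) k‖ ≤ |(k : ℝ)| * ‖c k‖ := by
    intro k
    rw [FC.hilbert, norm_mul, n1]
    have : ‖-Complex.I * (Int.sign k : ℂ)‖ ≤ 1 := by
      rcases lt_trichotomy k 0 with h | h | h
      · simp [Int.sign_eq_neg_one_of_neg h]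
      · simp [h]
      · simp [Int.sign_eq_one_of_pos h]
    nlinarith [mul_nonneg (abs_nonneg (k : ℝ)) (norm_nonneg (c k))]
  have s1 : Summable fun k => ‖FC.D1 c k‖ := by simpa only [n1] using hc
  have s2 : Summable fun k => ‖FC.hilbert (FC.D1 c) k‖ :=
    Summable.of_nonneg_of_le (fun _ => norm_nonneg _) n2 hc
  have bound : ∀ γ : FC, (Summable fun k => ‖γ k‖) → ∀ x, ‖FC.eval γ x‖ ≤ FC.linfty γ := by
    intro γ hγ x
    refine le_ciSup (f := fun x => ‖FC.eval γ x‖) ⟨∑' k, ‖γ k‖, ?_⟩ x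
    rintro _ ⟨y, rfl⟩
    have e : ∀ k, ‖γ k * Complex.exp (Complex.I * (k : ℂ) * (y : ℂ))‖ = ‖γ k‖ := by
      intro k
      have := ex_norm k y
      unfold ex at this
      rw [norm_mul, this, mul_one]
    have := norm_tsum_le_tsum_norm (f := fun k : ℤ =>
      γ k * Complex.exp (Complex.I * (k : ℂ) * (y : ℂ))) (by simpa only [e] using hγ)
    simp only [e] at this
    exact this
  have sm : ∀ γ : FC, (Summable fun k => ‖γ k‖) → Summable fun k : ℤ =>
      γ k * Complex.exp (Complex.I * (k : ℂ) * (x : ℂ)) := by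
    intro γ hγ
    refine Summable.of_norm ?_
    have e : ∀ k, ‖γ k * Complex.exp (Complex.I * (k : ℂ) * (x : ℂ))‖ = ‖γ k‖ := by
      intro k
      have := ex_norm k x
      unfold ex at this
      rw [norm_mul, this, mul_one]
    simpa only [e] using hγ
  have e : FC.eval (gam c) x = (1 / 2 : ℂ) * FC.eval (FC.hilbert (FC.D1 c)) x
      - (Complex.I / 2) * FC.eval (FC.D1 c) x := by
    unfold FC.eval
    rw [← tsum_mul_left, ← tsum_mul_left, ← ((sm _ s2).mul_left _).tsum_sub ((sm _ s1).mul_left _)]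
    refine tsum_congr fun k => ?_
    have I2 := Complex.I_mul_I
    rcases lt_trichotomy k 0 with h | h | h
    · simp only [gam, FC.hilbert, FC.D1, Int.sign_eq_neg_one_of_neg h, if_neg (not_lt.2 h.le)]
      push_cast
      ring
    · simp [gam, FC.hilbert, FC.D1, h]
    · simp only [gam, FC.hilbert, FC.D1, Int.sign_eq_one_of_pos h, if_pos h]
      push_cast
      linear_combination ((k : ℂ) * c k * Complex.exp (Complex.I * (k : ℂ) * (x : ℂ))) * I2
  rw [e]
  refine (norm_sub_le _ _).trans ?_
  rw [norm_mul, norm_mul]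
  have b1 := bound _ s1 x
  have b2 := bound _ s2 x
  have : ‖(1 / 2 : ℂ)‖ = 1 / 2 := by norm_num
  have : ‖(Complex.I / 2 : ℂ)‖ = 1 / 2 := by simp
  have := norm_nonneg (FC.eval (FC.D1 c) x)
  have := norm_nonneg (FC.eval (FC.hilbert (FC.D1 c)) x)
  simp only [*]
  linarith

end Sch

namespace Sch
open MeasureTheory

theorem gam_coeff (c : FC) (hc : Summable fun k : ℤ => |(k : ℝ)| * ‖c k‖) (hr : FC.isReal c)
    (k : ℤ) :
    |(k : ℝ)| * ‖c k‖ ≤ FC.linfty (FC.D1 c) + FC.linfty (FC.hilbert (FC.D1 c)) := by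
  have hγ : Summable fun k => ‖gam c k‖ := by
    refine Summable.of_nonneg_of_le (fun _ => norm_nonneg _) (fun k => ?_) hc
    unfold gam
    split_ifs
    · simp
    · simp; positivity
  have hG0 := (norm_nonneg _).trans (gam_bound c hc 0)
  have pos : ∀ m : ℤ, 0 < m → |(m : ℝ)| * ‖c m‖ ≤
      FC.linfty (FC.D1 c) + FC.linfty (FC.hilbert (FC.D1 c)) := by
    intro m hm
    have e := eval_int (gam c) hγ m
    have b : ‖∫ x in (0 : ℝ)..(2 * Real.pi), FC.eval (gam c) x * ex (-m) x‖ ≤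
        (FC.linfty (FC.D1 c) + FC.linfty (FC.hilbert (FC.D1 c))) * |2 * Real.pi - 0| := by
      refine intervalIntegral.norm_integral_le_of_norm_le_const fun x _ => ?_
      rw [norm_mul, ex_norm, mul_one]
      exact gam_bound c hc x
    rw [e, norm_mul] at b
    have hpi : ‖(2 * Real.pi : ℂ)‖ = 2 * Real.pi := by
      rw [show (2 * Real.pi : ℂ) = ((2 * Real.pi : ℝ) : ℂ) by push_cast; rfl, Complex.norm_real,
        Real.norm_of_nonneg (by positivity)]
    have h2 : 0 < 2 * Real.pi := by positivity
    rw [hpi, sub_zero, abs_of_pos h2, mul_comm] at b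
    have b := le_of_mul_le_mul_right b h2
    have : ‖gam c m‖ = |(m : ℝ)| * ‖c m‖ := by
      unfold gam; rw [if_pos hm]; simp
    rwa [this] at b
  rcases lt_trichotomy k 0 with h | h | h
  · have := pos (-k) (by omega)
    rw [hr k] at this
    simpa using this
  · simp [h]; exact hG0
  · exact pos k h

theorem bd_gam (c : FC) (hc : Summable fun k : ℤ => |(k : ℝ)| * ‖c k‖) :
    Bd (fun n a => if 0 < a ∧ a < n then gam c (n - a) else 0)
      (FC.linfty (FC.D1 c) + FC.linfty (FC.hilbert (FC.D1 c))) := by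
  have hγ : Summable fun k => ‖gam c k‖ := by
    refine Summable.of_nonneg_of_le (fun _ => norm_nonneg _) (fun k => ?_) hc
    unfold gam
    split_ifs
    · simp
    · simp; positivity
  have hG0 := (norm_nonneg _).trans (gam_bound c hc 0)
  intro S f h
  have := toeplitz (gam c) hγ _ (gam_bound c hc) S (fun a => if 0 < a then f a else 0) h
  have e : ∑ n ∈ S, ∑ a ∈ S, (if 0 < a ∧ a < n then gam c (n - a) else 0) * f a * h n
      = ∑ n ∈ S, ∑ a ∈ S, gam c (n - a) * (if 0 < a then f a else 0) * h n := by
    refine Finset.sum_congr rfl fun n _ => Finset.sum_congr rfl fun a _ => ?_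
    by_cases h1 : 0 < a <;> by_cases h2 : a < n
    · simp [h1, h2]
    · have : ¬ (0 < n - a) := by omega
      simp [h1, h2, gam]
    · simp [h1]
    · simp [h1]
  rw [e]
  refine this.trans (mul_le_mul_of_nonneg_left (Finset.sum_le_sum fun n _ => ?_) hG0)
  gcongr
  split_ifs
  · exact le_rfl
  · simp

theorem summable_N : Summable fun k : ℤ => (N k)⁻¹ := by
  have h1 : Summable fun k : ℤ => 1 / (k : ℝ) ^ 2 := Real.summable_one_div_int_pow.2 (by norm_num)
  have h2 : Summable fun k : ℤ => if k = 0 then (1 : ℝ) else 0 := (hasSum_ite_eq 0 1).summable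
  refine Summable.of_nonneg_of_le (fun k => (inv_pos.2 (N_pos k)).le) (fun k => ?_) (h1.add h2)
  by_cases hk : k = 0
  · simp [hk, N]
  · have : (0 : ℝ) < (k : ℝ) ^ 2 := by positivity
    rw [if_neg hk, add_zero, ← one_div]
    unfold N
    gcongr
    linarith

theorem one_le_N (k : ℤ) : 1 ≤ N k := by unfold N; nlinarith [sq_nonneg (k : ℝ)]

theorem abs_le_N (k : ℤ) : |(k : ℝ)| ≤ N k ^ (1 / 2 : ℝ) := by
  rw [← Real.sqrt_eq_rpow]
  refine Real.abs_le_sqrt ?_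
  unfold N; linarith

/-- `u_k = (1+k²)^{s/2} |c_k|`. -/
def u (s : ℝ) (c : FC) (k : ℤ) : ℝ := N k ^ (s / 2) * ‖c k‖

theorem u_nonneg (s : ℝ) (c : FC) (k : ℤ) : 0 ≤ u s c k :=
  mul_nonneg (Real.rpow_nonneg (N_pos k).le _) (norm_nonneg _)

theorem u_sq (s : ℝ) (c : FC) (k : ℤ) : u s c k ^ 2 = FC.wt s k * ‖c k‖ ^ 2 := by
  unfold u FC.wt
  rw [mul_pow, ← Real.rpow_natCast, ← Real.rpow_mul (N_pos k).le]
  unfold N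
  congr 2; push_cast; ring

theorem l1_a (s : ℝ) (hs : 7 / 2 < s) (c : FC) (k : ℤ) :
    |(k : ℝ)| * ‖c k‖ ≤ u s c k ^ 2 + (N k)⁻¹ := by
  have h1 : |(k : ℝ)| * ‖c k‖ ≤ u s c k * N k ^ (-(1 / 2) : ℝ) := by
    unfold u
    have : |(k : ℝ)| ≤ N k ^ (s / 2) * N k ^ (-(1 / 2) : ℝ) := by
      rw [← Real.rpow_add (N_pos k)]
      refine (abs_le_N k).trans (Real.rpow_le_rpow_of_exponent_le (one_le_N k) (by linarith))
    nlinarith [norm_nonneg (c k)]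
  have h2 : (N k ^ (-(1 / 2) : ℝ)) ^ 2 = (N k)⁻¹ := by
    rw [← Real.rpow_natCast, ← Real.rpow_mul (N_pos k).le, ← Real.rpow_neg_one]
    congr 1; norm_num
  rw [← h2]
  nlinarith [sq_nonneg (u s c k - N k ^ (-(1 / 2) : ℝ)), sq_nonneg (u s c k),
    sq_nonneg (N k ^ (-(1 / 2) : ℝ))]

theorem l1_b (s : ℝ) (hs : 7 / 2 < s) (c : FC) (k : ℤ) :
    ‖c k‖ ≤ u s c k * N k ^ (-(1 / 2) : ℝ) := by
  unfold u
  have : 1 ≤ N k ^ (s / 2) * N k ^ (-(1 / 2) : ℝ) := by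
    rw [← Real.rpow_add (N_pos k)]
    exact Real.one_le_rpow (one_le_N k) (by linarith)
  nlinarith [norm_nonneg (c k)]

theorem l1_c (s : ℝ) (hs : 7 / 2 < s) (c : FC) (k : ℤ) :
    ‖c k‖ ≤ u s c k ^ 2 + (N k)⁻¹ := by
  have h1 := l1_b s hs c k
  have h2 : (N k ^ (-(1 / 2) : ℝ)) ^ 2 = (N k)⁻¹ := by
    rw [← Real.rpow_natCast, ← Real.rpow_mul (N_pos k).le, ← Real.rpow_neg_one]
    congr 1; norm_num
  rw [← h2]
  nlinarith [sq_nonneg (u s c k - N k ^ (-(1 / 2) : ℝ)), sq_nonneg (u s c k),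
    sq_nonneg (N k ^ (-(1 / 2) : ℝ))]

/-- `(j,l) ↦ (j+l,l)` -/
def eqv0 : ℤ × ℤ ≃ ℤ × ℤ where
  toFun p := (p.1 + p.2, p.2)
  invFun p := (p.1 - p.2, p.2)
  left_inv p := by ext <;> simp
  right_inv p := by ext <;> simp

theorem summ_tri (β A Γ : ℤ → ℝ) (hβ : ∀ k, 0 ≤ β k) (hA0 : ∀ k, 0 ≤ A k) (hG0 : ∀ k, 0 ≤ Γ k)
    (h1 : Summable β) (hA : Summable fun k => A k ^ 2)
    (hG : Summable fun k => Γ k ^ 2) :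
    Summable fun p : ℤ × ℤ => A p.1 * β p.2 * Γ (p.1 + p.2) := by
  have s1 : Summable fun p : ℤ × ℤ => A p.1 ^ 2 * β p.2 :=
    hA.mul_of_nonneg h1 (fun _ => sq_nonneg _) hβ
  have s2 : Summable fun p : ℤ × ℤ => Γ p.1 ^ 2 * β p.2 :=
    hG.mul_of_nonneg h1 (fun _ => sq_nonneg _) hβ
  have s3 : Summable fun p : ℤ × ℤ => Γ (p.1 + p.2) ^ 2 * β p.2 :=
    (eqv0.summable_iff (f := fun p : ℤ × ℤ => Γ p.1 ^ 2 * β p.2)).2 s2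
  refine Summable.of_nonneg_of_le (fun p => ?_) (fun p => ?_) (s1.add s3)
  · exact mul_nonneg (mul_nonneg (hA0 _) (hβ _)) (hG0 _)
  · have := hβ p.2
    have h2 : A p.1 * Γ (p.1 + p.2) ≤ A p.1 ^ 2 + Γ (p.1 + p.2) ^ 2 := by
      nlinarith [sq_nonneg (A p.1 - Γ (p.1 + p.2)), sq_nonneg (A p.1), sq_nonneg (Γ (p.1 + p.2))]
    nlinarith

/-- The complex trilinear term. -/
def tt (s ε : ℝ) (c : FC) (p : ℤ × ℤ) : ℂ :=
  ((V s ε (p.1 + p.2) ^ 2 * (Int.sign p.1 : ℝ) * (p.2 : ℝ) : ℝ) : ℂ) *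
    (c p.1 * c p.2 * (starRingEnd ℂ) (c (p.1 + p.2)))

theorem summable_tt (s ε : ℝ) (hs : 7 / 2 < s) (hε : ε ∈ Set.Ioo (0 : ℝ) 1) (c : FC)
    (hc : FC.memHs s c) : Summable fun p => ‖tt s ε c p‖ := by
  have hu : Summable fun k => u s c k ^ 2 := by
    simp only [u_sq]; exact hc
  have s1 : Summable fun k : ℤ => |(k : ℝ)| * ‖c k‖ :=
    Summable.of_nonneg_of_le (fun _ => by positivity) (l1_a s hs c) (hu.add summable_N)
  have s2 : Summable fun k : ℤ => ‖c k‖ :=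
    Summable.of_nonneg_of_le (fun _ => by positivity) (l1_c s hs c) (hu.add summable_N)
  have t1 := summ_tri _ (u s c) (u s c) (fun k => by positivity) (u_nonneg s c) (u_nonneg s c)
    s1 hu hu
  have t2 := summ_tri _ (u s c) (u s c) (fun k => norm_nonneg (c k)) (u_nonneg s c) (u_nonneg s c)
    s2 hu hu
  have t3 : Summable fun p : ℤ × ℤ => u s c p.2 * ‖c p.1‖ * u s c (p.2 + p.1) :=
    ((Equiv.prodComm ℤ ℤ).summable_iff
      (f := fun p : ℤ × ℤ => u s c p.1 * ‖c p.2‖ * u s c (p.1 + p.2))).2 t2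
  have hε0 := hε.1
  refine Summable.of_nonneg_of_le (fun p => norm_nonneg _) (fun p => ?_)
    ((t1.add t3).mul_left ((ε⁻¹) ^ 4 * 4 ^ ((s - 1) / 2)))
  obtain ⟨j, l⟩ := p
  simp only [tt]
  have hp : 0 ≤ (s - 1) / 2 := by linarith
  have hNk := N_pos (j + l)
  have hV : V s ε (j + l) ^ 2 ≤ ε⁻¹ ^ 4 * (N (j + l) ^ ((s - 1) / 2) * N (j + l) ^ (s / 2)) := by
    have hE : ε ^ 2 * N (j + l) ≤ E ε (j + l) := by
      unfold N E; nlinarith [hε.2]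
    have hE2 : (ε ^ 2 * N (j + l)) ^ 2 ≤ E ε (j + l) ^ 2 := by gcongr
    unfold V
    rw [div_pow]
    have e1 : (N (j + l) ^ (s / 2)) ^ 2 / (ε ^ 2 * N (j + l)) ^ 2 =
        ε⁻¹ ^ 4 * (N (j + l) ^ (s / 2 - 2) * N (j + l) ^ (s / 2)) := by
      rw [Real.rpow_sub hNk]
      have : N (j + l) ^ (2 : ℝ) = N (j + l) ^ 2 := by
        rw [← Real.rpow_natCast]; norm_num
      rw [this]
      field_simp
    calc (N (j + l) ^ (s / 2)) ^ 2 / E ε (j + l) ^ 2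
        ≤ (N (j + l) ^ (s / 2)) ^ 2 / (ε ^ 2 * N (j + l)) ^ 2 := by gcongr
      _ = _ := e1
      _ ≤ _ := by
        gcongr 2
        exact Real.rpow_le_rpow_of_exponent_le (one_le_N _) (by linarith)
  have hN : N (j + l) ^ ((s - 1) / 2) ≤ 4 ^ ((s - 1) / 2) *
      (N j ^ ((s - 1) / 2) + N l ^ ((s - 1) / 2)) := by
    have h4 : N (j + l) ≤ 4 * max (N j) (N l) := by
      have := le_max_left (N j) (N l)
      have := le_max_right (N j) (N l)
      unfold N at *
      push_cast
      nlinarith [sq_nonneg ((j : ℝ) - l)]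
    have h5 : N (j + l) ^ ((s - 1) / 2) ≤ (4 * max (N j) (N l)) ^ ((s - 1) / 2) :=
      Real.rpow_le_rpow hNk.le h4 hp
    rw [Real.mul_rpow (by norm_num) ((N_pos j).le.trans (le_max_left _ _))] at h5
    refine h5.trans (mul_le_mul_of_nonneg_left ?_ (by positivity))
    have := Real.rpow_nonneg (N_pos j).le ((s - 1) / 2)
    have := Real.rpow_nonneg (N_pos l).le ((s - 1) / 2)
    rcases max_cases (N j) (N l) with h | h <;> rw [h.1] <;> linarith
  have hj : N j ^ ((s - 1) / 2) * ‖c j‖ ≤ u s c j := by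
    unfold u
    gcongr
    · exact one_le_N _
    · linarith
  have hl : N l ^ ((s - 1) / 2) * (|(l : ℝ)| * ‖c l‖) ≤ u s c l := by
    unfold u
    rw [← mul_assoc]
    gcongr
    calc N l ^ ((s - 1) / 2) * |(l : ℝ)| ≤ N l ^ ((s - 1) / 2) * N l ^ (1 / 2 : ℝ) :=
          mul_le_mul_of_nonneg_left (abs_le_N l) (Real.rpow_nonneg (N_pos l).le _)
      _ = _ := by rw [← Real.rpow_add (N_pos l)]; congr 1; ring
  have hsg : |(Int.sign j : ℝ)| ≤ 1 := by
    rcases lt_trichotomy j 0 with h | h | h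
    · simp [Int.sign_eq_neg_one_of_neg h]
    · simp [h]
    · simp [Int.sign_eq_one_of_pos h]
  have hjp := Real.rpow_nonneg (N_pos j).le ((s - 1) / 2)
  have hlp := Real.rpow_nonneg (N_pos l).le ((s - 1) / 2)
  have huk := u_nonneg s c (j + l)
  calc ‖((V s ε (j + l) ^ 2 * (Int.sign j : ℝ) * (l : ℝ) : ℝ) : ℂ) *
        (c j * c l * (starRingEnd ℂ) (c (j + l)))‖
      = V s ε (j + l) ^ 2 * |(Int.sign j : ℝ)| * |(l : ℝ)| * (‖c j‖ * ‖c l‖ * ‖c (j + l)‖) := by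
        rw [norm_mul, norm_mul, norm_mul, Complex.norm_conj, Complex.norm_real, Real.norm_eq_abs,
          abs_mul, abs_mul, abs_of_nonneg (sq_nonneg (V s ε (j + l)))]
    _ ≤ (ε⁻¹ ^ 4 * (4 ^ ((s - 1) / 2) * (N j ^ ((s - 1) / 2) + N l ^ ((s - 1) / 2)) *
          N (j + l) ^ (s / 2))) * 1 * |(l : ℝ)| * (‖c j‖ * ‖c l‖ * ‖c (j + l)‖) := by
        gcongr
        refine hV.trans ?_
        gcongr
    _ = ε⁻¹ ^ 4 * 4 ^ ((s - 1) / 2) * ((N j ^ ((s - 1) / 2) * ‖c j‖) * (|(l : ℝ)| * ‖c l‖) *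
          u s c (j + l) + (N l ^ ((s - 1) / 2) * (|(l : ℝ)| * ‖c l‖)) * ‖c j‖ * u s c (j + l)) := by
        unfold u; ring
    _ ≤ _ := by
        rw [add_comm l j]
        gcongr

/-- `(k,j) ↦ (j,k-j)` -/
def eqvk : ℤ × ℤ ≃ ℤ × ℤ where
  toFun p := (p.2, p.1 - p.2)
  invFun p := (p.1 + p.2, p.1)
  left_inv p := by ext <;> simp
  right_inv p := by ext <;> simp

theorem hsInner_eq (s ε : ℝ) (hs : 7 / 2 < s) (hε : ε ∈ Set.Ioo (0 : ℝ) 1) (c : FC)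
    (hc : FC.memHs s c) :
    FC.hsInner s (FC.T ε (FC.mul (FC.hilbert c) (FC.D1 c))) (FC.T ε c)
      = ∑' p, (tt s ε c p).re := by
  have hsum := (summable_tt s ε hs hε c hc).of_norm
  have h2 : Summable fun p => tt s ε c (eqvk p) := (eqvk.summable_iff (f := tt s ε c)).2 hsum
  rw [← Complex.re_tsum hsum, ← eqvk.tsum_eq, h2.tsum_prod]
  unfold FC.hsInner
  congr 1
  refine tsum_congr fun k => ?_
  simp only [FC.T, FC.mult, FC.mul]
  rw [← tsum_mul_left, ← tsum_mul_right, ← tsum_mul_left]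
  refine tsum_congr fun j => ?_
  simp only [eqvk, Equiv.coe_fn_mk, tt, FC.hilbert, FC.D1, map_mul, Complex.conj_ofReal]
  rw [show j + (k - j) = k by ring]
  have hw : FC.wt s k * ((1 + ε ^ 2 * (k : ℝ) ^ 2)⁻¹ * (1 + ε ^ 2 * (k : ℝ) ^ 2)⁻¹)
      = V s ε k ^ 2 := by
    have : FC.wt s k = (N k ^ (s / 2)) ^ 2 := by
      rw [← Real.rpow_natCast, ← Real.rpow_mul (N_pos k).le]
      unfold FC.wt N
      congr 1; push_cast; ring
    unfold V E
    rw [this, div_pow]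
    field_simp
  rw [← hw]
  have I2 := Complex.I_mul_I
  push_cast
  linear_combination (-(FC.wt s k : ℂ) * (1 + (ε : ℂ) ^ 2 * (k : ℂ) ^ 2)⁻¹ *
    (1 + (ε : ℂ) ^ 2 * (k : ℂ) ^ 2)⁻¹ * (Int.sign j : ℂ) * ((k : ℂ) - j) * c j * c (k - j) *
      (starRingEnd ℂ) (c k)) * I2

end Sch

namespace Sch

theorem V_neg (s ε : ℝ) (k : ℤ) : V s ε (-k) = V s ε k := by
  simp [V, N, E]

/-- The symmetric trilinear quantity, restricted to `0 < a < n`. -/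
def Q (c : FC) (x : ℤ × ℤ) : ℝ :=
  if 0 < x.2 ∧ x.2 < x.1 then (c x.2 * c (x.1 - x.2) * (starRingEnd ℂ) (c x.1)).re else 0

def e1 : ℤ × ℤ ≃ ℤ × ℤ where
  toFun p := (p.1 - p.2, p.2)
  invFun p := (p.1 + p.2, p.2)
  left_inv p := by ext <;> simp
  right_inv p := by ext <;> simp

def e2 : ℤ × ℤ ≃ ℤ × ℤ where
  toFun p := (p.2 - p.1, -p.2)
  invFun p := (-(p.1 + p.2), -p.2)
  left_inv p := by ext <;> simp
  right_inv p := by ext <;> simp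

def e3 : ℤ × ℤ ≃ ℤ × ℤ where
  toFun p := (p.1, p.2 - p.1)
  invFun p := (p.1, p.1 + p.2)
  left_inv p := by ext <;> simp
  right_inv p := by ext <;> simp

def e4 : ℤ × ℤ ≃ ℤ × ℤ where
  toFun p := (-p.1, p.1 - p.2)
  invFun p := (-p.1, -p.1 - p.2)
  left_inv p := by ext <;> simp
  right_inv p := by ext <;> simp

def e5 : ℤ × ℤ ≃ ℤ × ℤ where
  toFun p := (p.1 - p.2, -p.1)
  invFun p := (-p.2, -p.2 - p.1)
  left_inv p := by ext <;> simp
  right_inv p := by ext <;> simp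

def e6 : ℤ × ℤ ≃ ℤ × ℤ where
  toFun p := (p.2 - p.1, p.1)
  invFun p := (p.2, p.1 + p.2)
  left_inv p := by ext <;> simp
  right_inv p := by ext <;> simp

def e7 : ℤ × ℤ ≃ ℤ × ℤ where
  toFun p := (p.1, p.1 - p.2)
  invFun p := (p.1, p.1 - p.2)
  left_inv p := by ext <;> simp
  right_inv p := by ext <;> simp

theorem piece (f : ℤ × ℤ → ℝ) (hf : Summable f) (R : Set (ℤ × ℤ)) (e : ℤ × ℤ ≃ ℤ × ℤ)
    (g : ℤ × ℤ → ℝ) (hg : ∀ x, R.indicator f (e x) = g x) :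
    HasSum (R.indicator f) (∑' x, g x) ∧ Summable g := by
  have h1 : Summable (R.indicator f) := hf.indicator R
  have h2 : R.indicator f ∘ e = g := funext hg
  refine ⟨?_, ?_⟩
  · have : ∑' x, g x = ∑' x, R.indicator f x := by
      rw [← e.tsum_eq (R.indicator f)]; exact tsum_congr fun x => (hg x).symm
    rw [this]; exact h1.hasSum
  · rw [← h2]; exact (e.summable_iff).2 h1

theorem re_swap (z1 z2 z3 : ℂ) :
    (z1 * z2 * (starRingEnd ℂ) z3).re =
      ((starRingEnd ℂ) z1 * (starRingEnd ℂ) z2 * z3).re := by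
  simp [Complex.mul_re, Complex.mul_im]; ring

theorem decomp (s ε : ℝ) (hs : 7 / 2 < s) (hε : ε ∈ Set.Ioo (0 : ℝ) 1) (c : FC)
    (hc : FC.memHs s c) (hr : FC.isReal c) :
    (Summable fun x : ℤ × ℤ => V s ε x.1 ^ 2 * x.2 * Q c x) ∧
    (Summable fun x : ℤ × ℤ => -(V s ε x.2 ^ 2 * (x.1 - x.2) * Q c x)) ∧
    (Summable fun x : ℤ × ℤ => -(V s ε x.2 ^ 2 * x.1 * Q c x)) ∧
    ∑' p, (tt s ε c p).re = 2 * (∑' x : ℤ × ℤ, V s ε x.1 ^ 2 * x.2 * Q c x)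
      + 2 * (∑' x : ℤ × ℤ, -(V s ε x.2 ^ 2 * (x.1 - x.2) * Q c x))
      + 2 * (∑' x : ℤ × ℤ, -(V s ε x.2 ^ 2 * x.1 * Q c x))
      + ∑' j : ℤ, (tt s ε c (j, -j)).re := by
  set f : ℤ × ℤ → ℝ := fun p => (tt s ε c p).re with hfdef
  have hf : Summable f := Complex.reCLM.summable ((summable_tt s ε hs hε c hc).of_norm)
  have hff : ∀ j l, f (j, l) = V s ε (j + l) ^ 2 * (Int.sign j : ℝ) * l *
      (c j * c l * (starRingEnd ℂ) (c (j + l))).re := by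
    intro j l
    simp only [hfdef, tt]
    rw [Complex.re_ofReal_mul]
  have sgp : ∀ j : ℤ, 0 < j → ((Int.sign j : ℤ) : ℝ) = 1 := fun j h => by
    rw [Int.sign_eq_one_of_pos h]; norm_num
  have sgn : ∀ j : ℤ, j < 0 → ((Int.sign j : ℤ) : ℝ) = -1 := fun j h => by
    rw [Int.sign_eq_neg_one_of_neg h]; norm_num
  have crev : ∀ n a : ℤ, c (a - n) = (starRingEnd ℂ) (c (n - a)) := fun n a => by
    rw [← hr]; congr 1; ring
  obtain ⟨p1, q1⟩ := piece f hf {p | 0 < p.1 ∧ 0 < p.2} e1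
    (fun x : ℤ × ℤ => V s ε x.1 ^ 2 * x.2 * Q c x) (by
      rintro ⟨n, a⟩
      simp only [Set.indicator, Set.mem_setOf_eq, e1, Equiv.coe_fn_mk, Q]
      by_cases h : 0 < a ∧ a < n
      · rw [if_pos (by omega), if_pos h, hff, sgp _ (by omega), show n - a + a = n by ring,
          mul_comm (c (n - a))]
        ring
      · rw [if_neg (by omega), if_neg h, mul_zero])
  obtain ⟨p2, -⟩ := piece f hf {p | p.1 < 0 ∧ p.2 < 0} e2
    (fun x : ℤ × ℤ => V s ε x.1 ^ 2 * x.2 * Q c x) (by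
      rintro ⟨n, a⟩
      simp only [Set.indicator, Set.mem_setOf_eq, e2, Equiv.coe_fn_mk, Q]
      by_cases h : 0 < a ∧ a < n
      · rw [if_pos (by omega), if_pos h, hff, sgn _ (by omega), show a - n + -a = -n by ring,
          V_neg, hr, hr, crev, Complex.conj_conj, re_swap (c a)]
        push_cast
        rw [mul_comm ((starRingEnd ℂ) (c (n - a)))]
        ring
      · rw [if_neg (by omega), if_neg h, mul_zero])
  obtain ⟨p3, q3⟩ := piece f hf {p | 0 < p.1 ∧ p.2 < 0 ∧ 0 < p.1 + p.2} e3
    (fun x : ℤ × ℤ => -(V s ε x.2 ^ 2 * (x.1 - x.2) * Q c x)) (by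
      rintro ⟨n, a⟩
      simp only [Set.indicator, Set.mem_setOf_eq, e3, Equiv.coe_fn_mk, Q]
      by_cases h : 0 < a ∧ a < n
      · rw [if_pos (by omega), if_pos h, hff, sgp _ (by omega), show n + (a - n) = a by ring,
          crev, re_swap (c a)]
        push_cast
        rw [show c n * (starRingEnd ℂ) (c (n - a)) * (starRingEnd ℂ) (c a) =
          (starRingEnd ℂ) (c a) * (starRingEnd ℂ) (c (n - a)) * c n by ring]
        ring
      · rw [if_neg (by omega), if_neg h, mul_zero, neg_zero])
  obtain ⟨p4, -⟩ := piece f hf {p | p.1 < 0 ∧ 0 < p.2 ∧ p.1 + p.2 < 0} e4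
    (fun x : ℤ × ℤ => -(V s ε x.2 ^ 2 * (x.1 - x.2) * Q c x)) (by
      rintro ⟨n, a⟩
      simp only [Set.indicator, Set.mem_setOf_eq, e4, Equiv.coe_fn_mk, Q]
      by_cases h : 0 < a ∧ a < n
      · rw [if_pos (by omega), if_pos h, hff, sgn _ (by omega), show -n + (n - a) = -a by ring,
          V_neg, hr, hr, Complex.conj_conj]
        push_cast
        rw [show (starRingEnd ℂ) (c n) * c (n - a) * c a =
          c a * c (n - a) * (starRingEnd ℂ) (c n) by ring]
        ring
      · rw [if_neg (by omega), if_neg h, mul_zero, neg_zero])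
  obtain ⟨p5, q5⟩ := piece f hf {p | 0 < p.1 ∧ p.2 < 0 ∧ p.1 + p.2 < 0} e5
    (fun x : ℤ × ℤ => -(V s ε x.2 ^ 2 * x.1 * Q c x)) (by
      rintro ⟨n, a⟩
      simp only [Set.indicator, Set.mem_setOf_eq, e5, Equiv.coe_fn_mk, Q]
      by_cases h : 0 < a ∧ a < n
      · rw [if_pos (by omega), if_pos h, hff, sgp _ (by omega), show n - a + -n = -a by ring,
          V_neg, hr, hr, Complex.conj_conj]
        push_cast
        rw [show c (n - a) * (starRingEnd ℂ) (c n) * c a =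
          c a * c (n - a) * (starRingEnd ℂ) (c n) by ring]
        ring
      · rw [if_neg (by omega), if_neg h, mul_zero, neg_zero])
  obtain ⟨p6, -⟩ := piece f hf {p | p.1 < 0 ∧ 0 < p.2 ∧ 0 < p.1 + p.2} e6
    (fun x : ℤ × ℤ => -(V s ε x.2 ^ 2 * x.1 * Q c x)) (by
      rintro ⟨n, a⟩
      simp only [Set.indicator, Set.mem_setOf_eq, e6, Equiv.coe_fn_mk, Q]
      by_cases h : 0 < a ∧ a < n
      · rw [if_pos (by omega), if_pos h, hff, sgn _ (by omega), show a - n + n = a by ring,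
          crev, re_swap (c a)]
        rw [show (starRingEnd ℂ) (c (n - a)) * c n * (starRingEnd ℂ) (c a) =
          (starRingEnd ℂ) (c a) * (starRingEnd ℂ) (c (n - a)) * c n by ring]
        ring
      · rw [if_neg (by omega), if_neg h, mul_zero, neg_zero])
  have p7 : HasSum (Set.indicator {p : ℤ × ℤ | p.1 + p.2 = 0} f) (∑' j : ℤ, f (j, -j)) := by
    have h1 := (hf.indicator {p : ℤ × ℤ | p.1 + p.2 = 0}).hasSum
    have inj : Function.Injective (fun j : ℤ => (j, -j)) := fun a b h => (Prod.mk.inj h).1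
    have h2 := inj.tsum_eq (f := Set.indicator {p : ℤ × ℤ | p.1 + p.2 = 0} f) (by
      rintro ⟨j, l⟩ hx
      have : (j, l) ∈ {p : ℤ × ℤ | p.1 + p.2 = 0} := by
        by_contra h
        exact hx (Set.indicator_of_notMem h f)
      simp only [Set.mem_setOf_eq] at this
      exact ⟨j, by ext <;> simp; omega⟩)
    rw [← h2] at h1
    have h3 : ∑' j : ℤ, f (j, -j) =
        ∑' j : ℤ, Set.indicator {p : ℤ × ℤ | p.1 + p.2 = 0} f (j, -j) := by
      refine tsum_congr fun j => ?_
      rw [Set.indicator_of_mem]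
      simp
    rw [h3]
    exact h1
  refine ⟨q1, q3, q5, ?_⟩
  have key := (((((p1.add p2).add p3).add p4).add p5).add p6).add p7
  have hfe : f = fun p => ((((((Set.indicator {p : ℤ × ℤ | 0 < p.1 ∧ 0 < p.2} f p
      + Set.indicator {p : ℤ × ℤ | p.1 < 0 ∧ p.2 < 0} f p)
      + Set.indicator {p : ℤ × ℤ | 0 < p.1 ∧ p.2 < 0 ∧ 0 < p.1 + p.2} f p)
      + Set.indicator {p : ℤ × ℤ | p.1 < 0 ∧ 0 < p.2 ∧ p.1 + p.2 < 0} f p)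
      + Set.indicator {p : ℤ × ℤ | 0 < p.1 ∧ p.2 < 0 ∧ p.1 + p.2 < 0} f p)
      + Set.indicator {p : ℤ × ℤ | p.1 < 0 ∧ 0 < p.2 ∧ 0 < p.1 + p.2} f p)
      + Set.indicator {p : ℤ × ℤ | p.1 + p.2 = 0} f p) := by
    funext p
    obtain ⟨j, l⟩ := p
    have z : (j = 0 ∨ l = 0) → f (j, l) = 0 := by
      rintro (h | h) <;> rw [hff] <;> simp [h]
    simp only [Set.indicator, Set.mem_setOf_eq]
    split_ifs <;> first | omega | ring1 | (rw [z (by omega)]; norm_num)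
  rw [← hfe] at key
  rw [key.tsum_eq]
  ring

end Sch

namespace Sch

theorem Q_swap (c : FC) (x : ℤ × ℤ) : Q c (e7 x) = Q c x := by
  obtain ⟨n, a⟩ := x
  rw [show e7 (n, a) = (n, n - a) from rfl]
  simp only [Q]
  by_cases h : 0 < a ∧ a < n
  · rw [if_pos h, if_pos (by omega), sub_sub_cancel, mul_comm (c a)]
  · rw [if_neg h, if_neg (by omega)]

theorem swap_eta (s ε : ℝ) (c : FC) (η : ℝ → ℝ) (hη : ∀ x, η x + η (1 - x) = 1) (D : ℝ)
    (hD : ∀ x ∈ Set.Icc (0 : ℝ) 1, |η x| ≤ D)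
    (h : Summable fun x : ℤ × ℤ => V s ε x.1 ^ 2 * x.2 * Q c x) :
    (Summable fun x : ℤ × ℤ => V s ε x.1 ^ 2 * x.1 * η ((x.2 : ℝ) / x.1) * Q c x) ∧
    ∑' x : ℤ × ℤ, V s ε x.1 ^ 2 * x.2 * Q c x =
      ∑' x : ℤ × ℤ, V s ε x.1 ^ 2 * x.1 * η ((x.2 : ℝ) / x.1) * Q c x := by
  have h2 : Summable fun x : ℤ × ℤ => V s ε x.1 ^ 2 * (x.1 - x.2) * Q c x := by
    refine ((e7.summable_iff (f := fun x : ℤ × ℤ => V s ε x.1 ^ 2 * x.2 * Q c x)).2 h).congr ?_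
    intro x
    simp only [Function.comp, Q_swap]
    simp [e7]
  have h3 : Summable fun x : ℤ × ℤ => V s ε x.1 ^ 2 * x.1 * Q c x :=
    (h.add h2).congr fun x => by ring
  have h4 : Summable fun x : ℤ × ℤ => V s ε x.1 ^ 2 * x.1 * η ((x.2 : ℝ) / x.1) * Q c x := by
    refine Summable.of_norm_bounded (h3.norm.mul_left D) fun x => ?_
    by_cases hx : 0 < x.2 ∧ x.2 < x.1
    · have a0 : (0 : ℝ) < x.2 := by exact_mod_cast hx.1
      have a1 : (x.2 : ℝ) < x.1 := by exact_mod_cast hx.2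
      have := hD ((x.2 : ℝ) / x.1) ⟨div_nonneg a0.le (a0.trans a1).le, by rw [div_le_one (by linarith)]; exact a1.le⟩
      rw [show V s ε x.1 ^ 2 * x.1 * η ((x.2 : ℝ) / x.1) * Q c x =
        η ((x.2 : ℝ) / x.1) * (V s ε x.1 ^ 2 * x.1 * Q c x) by ring, norm_mul]
      exact mul_le_mul_of_nonneg_right this (norm_nonneg _)
    · simp [Q, hx]
  refine ⟨h4, ?_⟩
  have h5 := h.sub h4
  set d : ℤ × ℤ → ℝ := fun x => V s ε x.1 ^ 2 * x.2 * Q c x -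
    V s ε x.1 ^ 2 * x.1 * η ((x.2 : ℝ) / x.1) * Q c x with hd
  have h6 : ∀ x, d (e7 x) = - d x := by
    intro x
    simp only [hd, Q_swap]
    by_cases hx : 0 < x.2 ∧ x.2 < x.1
    · have a1 : (0 : ℝ) < x.1 := by exact_mod_cast hx.1.trans hx.2
      have := hη ((x.2 : ℝ) / x.1)
      have e : 1 - (x.2 : ℝ) / x.1 = ((x.1 - x.2 : ℤ) : ℝ) / x.1 := by
        push_cast; field_simp
      rw [e] at this
      simp only [e7, Equiv.coe_fn_mk]
      rw [eq_sub_of_add_eq' this]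
      push_cast
      ring
    · simp [Q, hx]
  have h7 : ∑' x, d x = 0 := by
    have := e7.tsum_eq d
    simp only [h6, tsum_neg] at this
    linarith
  rw [hd, h.tsum_sub h4] at h7
  linarith

theorem V_sq_le (s ε : ℝ) (k : ℤ) : V s ε k ^ 2 ≤ FC.wt s k := by
  have : FC.wt s k = (N k ^ (s / 2)) ^ 2 := by
    rw [← Real.rpow_natCast, ← Real.rpow_mul (N_pos k).le]
    unfold FC.wt N
    congr 1; push_cast; ring
  rw [this]
  have h1 : 1 ≤ E ε k := by unfold E; nlinarith [sq_nonneg (ε * k)]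
  have h0 := Real.rpow_nonneg (N_pos k).le (s / 2)
  have h2 := (V_pos s ε k).le
  have : V s ε k ≤ N k ^ (s / 2) := by
    unfold V; exact div_le_self h0 h1
  gcongr

theorem main_bound (s ε : ℝ) (c : FC) (hc : FC.memHs s c) (η : ℝ → ℝ) (C0 G : ℝ) (hC0 : 0 ≤ C0)
    (hG : 0 ≤ G)
    (hgood : Good (fun n a => (V s ε n ^ 2 * n * η ((a : ℝ) / n) - V s ε a ^ 2 * a
      - 2 * V s ε a ^ 2 * (n - a)) / ((n - a) * (V s ε a * V s ε n))) C0)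
    (hbd : Bd (fun n a => if 0 < a ∧ a < n then gam c (n - a) else 0) G)
    (F : ℤ × ℤ → ℝ)
    (hF : ∀ x, F x = (V s ε x.1 ^ 2 * x.1 * η ((x.2 : ℝ) / x.1) - V s ε x.2 ^ 2 * x.2
      - 2 * V s ε x.2 ^ 2 * (x.1 - x.2)) * Q c x)
    (A : ℝ) (hA : HasSum F A) :
    |A| ≤ 2 * C0 * G * ∑' k, FC.wt s k * ‖c k‖ ^ 2 := by
  have hb := hgood _ G hG (fun n a h => if_neg h) hbd
  have hfin : ∀ S : Finset ℤ, |∑ x ∈ S ×ˢ S, F x| ≤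
      2 * C0 * G * ∑' k, FC.wt s k * ‖c k‖ ^ 2 := by
    intro S
    have h1 := hb S (fun a => (V s ε a : ℂ) * c a) (fun n => (V s ε n : ℂ) * (starRingEnd ℂ) (c n))
    have h2 : ∑ x ∈ S ×ˢ S, F x = (∑ n ∈ S, ∑ a ∈ S,
        (((V s ε n ^ 2 * n * η ((a : ℝ) / n) - V s ε a ^ 2 * a
      - 2 * V s ε a ^ 2 * (n - a)) / ((n - a) * (V s ε a * V s ε n)) : ℝ) : ℂ) *
        (if 0 < a ∧ a < n then gam c (n - a) else 0) * ((V s ε a : ℂ) * c a) *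
        ((V s ε n : ℂ) * (starRingEnd ℂ) (c n))).re := by
      rw [Finset.sum_product, Complex.re_sum]
      refine Finset.sum_congr rfl fun n _ => ?_
      rw [Complex.re_sum]
      refine Finset.sum_congr rfl fun a _ => ?_
      rw [hF]
      simp only [Q]
      by_cases h : 0 < a ∧ a < n
      · rw [if_pos h, if_pos h]
        unfold gam
        rw [if_pos (by omega), ← Complex.re_ofReal_mul]
        congr 1
        have a1 : (a : ℝ) < n := by exact_mod_cast h.2
        have x1 : ((n : ℝ) - a) ≠ 0 := by linarith
        have x2 := (V_pos s ε a).ne'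
        have x3 := (V_pos s ε n).ne'
        generalize hW : V s ε n ^ 2 * n * η ((a : ℝ) / n) - V s ε a ^ 2 * a
          - 2 * V s ε a ^ 2 * (n - a) = W
        have e : W = W / ((n - a) * (V s ε a * V s ε n)) * ((n - a) * (V s ε a * V s ε n)) := by
          field_simp
        nth_rewrite 1 [e]
        push_cast
        ring
      · rw [if_neg h, if_neg h]
        simp
    rw [h2]
    refine (Complex.abs_re_le_norm _).trans (h1.trans ?_)
    have h3 : ∑ n ∈ S, (‖(V s ε n : ℂ) * c n‖ ^ 2 + ‖(V s ε n : ℂ) * (starRingEnd ℂ) (c n)‖ ^ 2)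
        ≤ 2 * ∑' k, FC.wt s k * ‖c k‖ ^ 2 := by
      have h4 : ∑ n ∈ S, FC.wt s n * ‖c n‖ ^ 2 ≤ ∑' k, FC.wt s k * ‖c k‖ ^ 2 :=
        hc.sum_le_tsum S fun k _ => mul_nonneg ((sq_nonneg _).trans (V_sq_le s 0 k)) (sq_nonneg _)
      refine le_trans ?_ (mul_le_mul_of_nonneg_left h4 (by norm_num))
      rw [Finset.mul_sum]
      refine Finset.sum_le_sum fun n _ => ?_
      rw [norm_mul, norm_mul, Complex.norm_conj, Complex.norm_real, mul_pow, Real.norm_eq_abs,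
        sq_abs]
      nlinarith [mul_le_mul_of_nonneg_right (V_sq_le s ε n) (sq_nonneg ‖c n‖)]
    calc _ ≤ C0 * G * (2 * ∑' k, FC.wt s k * ‖c k‖ ^ 2) :=
          mul_le_mul_of_nonneg_left h3 (mul_nonneg hC0 hG)
      _ = _ := by ring
  have ht : Filter.Tendsto (fun S : Finset ℤ => S ×ˢ S) Filter.atTop Filter.atTop := by
    refine Filter.tendsto_atTop_finset_of_monotone (fun S T h => Finset.product_subset_product h h)
      fun x => ⟨{x.1, x.2}, by simp⟩
  have h8 := (Filter.Tendsto.comp hA ht).abs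
  exact le_of_tendsto h8 (Filter.Eventually.of_forall hfin)

theorem diag_bound (s ε : ℝ) (hs : 7 / 2 < s) (c : FC) (hc : FC.memHs s c) (G : ℝ)
    (hG : ∀ k : ℤ, |(k : ℝ)| * ‖c k‖ ≤ G) :
    |∑' j : ℤ, (tt s ε c (j, -j)).re| ≤
      G * (1 + ∑' k, (N k)⁻¹) * ∑' k, FC.wt s k * ‖c k‖ ^ 2 := by
  set H := ∑' k, FC.wt s k * ‖c k‖ ^ 2 with hH
  have hw0 : ∀ k, 0 ≤ FC.wt s k * ‖c k‖ ^ 2 := fun k =>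
    mul_nonneg ((sq_nonneg _).trans (V_sq_le s 0 k)) (sq_nonneg _)
  have hG0 : 0 ≤ G := le_trans (by positivity) (hG 0)
  have c0 : ‖c 0‖ ^ 2 ≤ H := by
    have := hc.le_tsum 0 (fun k _ => hw0 k)
    refine le_trans (le_of_eq ?_) this
    simp [FC.wt]
  have hsum : HasSum (fun k => G * (FC.wt s k * ‖c k‖ ^ 2 + H * (N k)⁻¹))
      (G * (H + H * ∑' k, (N k)⁻¹)) :=
    ((HasSum.add (Summable.hasSum hc) (summable_N.hasSum.mul_left H))).mul_left G
  have := tsum_of_norm_bounded hsum (f := fun j : ℤ => (tt s ε c (j, -j)).re) (fun j => ?_)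
  · rw [Real.norm_eq_abs] at this
    refine this.trans (le_of_eq (by ring))
  · refine (Complex.abs_re_le_norm _).trans ?_
    simp only [tt]
    have hsg : |(Int.sign j : ℝ)| ≤ 1 := by
      rcases lt_trichotomy j 0 with h | h | h
      · simp [Int.sign_eq_neg_one_of_neg h]
      · simp [h]
      · simp [Int.sign_eq_one_of_pos h]
    have hV : V s ε (j + -j) = 1 := by simp [V, N, E]
    rw [norm_mul, norm_mul, norm_mul, Complex.norm_conj, Complex.norm_real, Real.norm_eq_abs,
      abs_mul, abs_mul, hV, add_neg_cancel]
    have hj : |((-j : ℤ) : ℝ)| * ‖c (-j)‖ ≤ G := hG (-j)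
    have h2 : (N j ^ (-(1 / 2) : ℝ)) ^ 2 = (N j)⁻¹ := by
      rw [← Real.rpow_natCast, ← Real.rpow_mul (N_pos j).le, ← Real.rpow_neg_one]
      congr 1; norm_num
    have h3 : ‖c j‖ * ‖c 0‖ ≤ u s c j ^ 2 + H * (N j)⁻¹ := by
      have a1 := l1_b s hs c j
      have a2 : ‖c j‖ * ‖c 0‖ ≤ u s c j * (N j ^ (-(1 / 2) : ℝ) * ‖c 0‖) := by
        rw [← mul_assoc]; exact mul_le_mul_of_nonneg_right a1 (norm_nonneg _)
      have a3 : (N j ^ (-(1 / 2) : ℝ) * ‖c 0‖) ^ 2 ≤ H * (N j)⁻¹ := by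
        rw [mul_pow, h2, mul_comm]
        exact mul_le_mul_of_nonneg_right c0 (inv_pos.2 (N_pos j)).le
      nlinarith [sq_nonneg (u s c j - N j ^ (-(1 / 2) : ℝ) * ‖c 0‖), sq_nonneg (u s c j),
        sq_nonneg (N j ^ (-(1 / 2) : ℝ) * ‖c 0‖)]
    rw [← u_sq]
    calc |(1 : ℝ) ^ 2| * |(Int.sign j : ℝ)| * |((-j : ℤ) : ℝ)| * (‖c j‖ * ‖c (-j)‖ * ‖c 0‖)
        = |(Int.sign j : ℝ)| * ((|((-j : ℤ) : ℝ)| * ‖c (-j)‖) * (‖c j‖ * ‖c 0‖)) := by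
          rw [one_pow, abs_one]; ring
      _ ≤ 1 * (G * (u s c j ^ 2 + H * (N j)⁻¹)) := by gcongr
      _ = _ := one_mul _

end Sch

/-- Let `s > 7/2`.  There is `C = C(s) > 0` such that for all `ε ∈ (0,1)`
and `θ ∈ H^s(𝕋)`:
`|(T̃_ε((𝓗θ) ∂ₓθ), T̃_ε θ)_{H^s}| ≤ C (‖∂ₓθ‖_{L^∞} + ‖𝓗∂ₓθ‖_{L^∞}) ‖θ‖²_{H^s}`. -/
theorem statement15 (s : ℝ) (hs : 7 / 2 < s) :
    ∃ C > (0 : ℝ), ∀ ε : ℝ, ε ∈ Set.Ioo (0 : ℝ) 1 → ∀ θ : FC,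
      FC.memHs s θ → FC.isReal θ →
      |FC.hsInner s (FC.T ε (FC.mul (FC.hilbert θ) (FC.D1 θ))) (FC.T ε θ)|
        ≤ C * (FC.linfty (FC.D1 θ) + FC.linfty (FC.hilbert (FC.D1 θ)))
            * FC.hsNorm s θ ^ 2 := by
  obtain ⟨η, hη, ⟨D, hD⟩, C0, hC0, hK⟩ := Sch.ug_kernel s hs
  have hκ : 0 ≤ ∑' k, (Sch.N k)⁻¹ := tsum_nonneg fun k => (inv_pos.2 (Sch.N_pos k)).le
  refine ⟨4 * C0 + 1 + ∑' k, (Sch.N k)⁻¹, by linarith, ?_⟩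
  intro ε hε c hc hr
  set G := FC.linfty (FC.D1 c) + FC.linfty (FC.hilbert (FC.D1 c)) with hGdef
  have hu : Summable fun k => Sch.u s c k ^ 2 := by
    simp only [Sch.u_sq]; exact hc
  have s1 : Summable fun k : ℤ => |(k : ℝ)| * ‖c k‖ :=
    Summable.of_nonneg_of_le (fun _ => by positivity) (Sch.l1_a s hs c) (hu.add Sch.summable_N)
  have hGk := Sch.gam_coeff c s1 hr
  have hG0 : 0 ≤ G := le_trans (by positivity) (hGk 0)
  have hw0 : ∀ k, 0 ≤ FC.wt s k * ‖c k‖ ^ 2 := fun k =>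
    mul_nonneg ((sq_nonneg _).trans (Sch.V_sq_le s 0 k)) (sq_nonneg _)
  have hH : FC.hsNorm s c ^ 2 = ∑' k, FC.wt s k * ‖c k‖ ^ 2 :=
    Real.sq_sqrt (tsum_nonneg hw0)
  obtain ⟨q1, q3, q5, hdec⟩ := Sch.decomp s ε hs hε c hc hr
  obtain ⟨q1', hsw⟩ := Sch.swap_eta s ε c η hη D hD q1
  have hA := (q1'.hasSum.add q3.hasSum).add q5.hasSum
  have hm := Sch.main_bound s ε c hc η C0 G hC0 hG0 (hK ε hε) (Sch.bd_gam c s1) _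
    (fun x => by ring) _ hA
  have hd := Sch.diag_bound s ε hs c hc G hGk
  rw [Sch.hsInner_eq s ε hs hε c hc, hdec, hsw, hH]
  generalize (∑' k, FC.wt s k * ‖c k‖ ^ 2) = H at *
  generalize (∑' k, (Sch.N k)⁻¹) = κ at *
  generalize (∑' j : ℤ, (Sch.tt s ε c (j, -j)).re) = Dg at *
  rw [← mul_add, ← mul_add]
  refine (abs_add_le _ _).trans ?_
  rw [abs_mul, abs_two]
  nlinarith [hm, hd]
end
end
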